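/- Let n ≥ 2 and s ∈ (0,1). Let 𝕋ⁿ := 𝕊¹ × ⋯ × 𝕊¹ (n factors) ⊂ ℝ^{2n} be the flat n-torus, equipped with the n-dimensional Hausdorff measure ν on 𝕋ⁿ and the Euclidean distance of ℝ^{2n}, and let 𝕊¹ ⊂ ℝ² be the unit circle. Then for every continuous map u₀ : 𝕋ⁿ → 𝕊¹ there exists a continuous map u : 𝕋ⁿ → 𝕊¹ homotopic to u₀ with E_{s,n/s}(u) := ∫_{𝕋ⁿ}∫_{𝕋ⁿ} |u(x)−u(y)|^{n/s}/|x−y|^{2n} dν(x) dν(y) < ∞ and such that E_{s,n/s}(u) ≤ E_{s,n/s}(v) for every continuous map v : 𝕋ⁿ → 𝕊¹ homotopic to u₀. (This is the instance 𝒩 = 𝕊¹, Σ = 𝕋ⁿ of the existence theorem for minimizers in every homotopy class when πₙ(𝒩) = 0.) -/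

import Mathlib

open MeasureTheory
open scoped ENNReal

noncomputable section

/-- The unit circle `𝕊¹ ⊆ ℝ²`. -/
abbrev Circ : Type _ := ↥(Metric.sphere (0 : EuclideanSpace ℝ (Fin 2)) 1)

/-- The flat `n`-torus `𝕋ⁿ = 𝕊¹ × ⋯ × 𝕊¹ ⊆ ℝ^{2n}`, as a subset of the Euclidean space
`ℝ^{Fin n × Fin 2} ≅ ℝ^{2n}`: the `i`-th pair of coordinates lies on the unit circle. -/
def TorusSet (n : ℕ) : Set (EuclideanSpace ℝ (Fin n × Fin 2)) :=
  {x | ∀ i : Fin n, (x (i, 0)) ^ 2 + (x (i, 1)) ^ 2 = 1}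

/-- The flat `n`-torus as a metric space (with the Euclidean distance of `ℝ^{2n}`). -/
abbrev Torus (n : ℕ) : Type _ := ↥(TorusSet n)

/-- `f` and `g` are homotopic maps. -/
def Homotopic {X Y : Type*} [TopologicalSpace X] [TopologicalSpace Y] (f g : X → Y) : Prop :=
  ∃ H : unitInterval × X → Y, Continuous H ∧ (∀ x, H (0, x) = f x) ∧ (∀ x, H (1, x) = g x)

/-- The energy `E_{s,n/s}(u) = ∫∫ |u(x)-u(y)|^{n/s}/|x-y|^{2n} dν dν` of a map `𝕋ⁿ → 𝕊¹`,
with `ν` the `n`-dimensional Hausdorff measure on `𝕋ⁿ`. -/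
def torusEnergy (n : ℕ) (s : ℝ) (u : Torus n → Circ) : ℝ≥0∞ :=
  ∫⁻ x, ∫⁻ y,
    ENNReal.ofReal
      (‖(u x : EuclideanSpace ℝ (Fin 2)) - (u y : EuclideanSpace ℝ (Fin 2))‖ ^ ((n : ℝ) / s)
        / dist x y ^ (2 * (n : ℝ)))
    ∂(μH[(n : ℝ)] : Measure (Torus n)) ∂(μH[(n : ℝ)] : Measure (Torus n))

/-!
Write `p = n / s > n`. The energy is scale invariant, so the energy of a minimizing sequence in a
homotopy class could concentrate at points; the point of the proof is to rule this out.

If an almost minimal map `u` has little energy in an annulus, then averaging `u` over that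
annulus, at a scale comparable to the distance from its outer boundary, gives a map that stays
close to the circle and can be normalized. The result differs from `u` only in a ball, where its
energy is controlled by that of `u` in the annulus. Since `n ≥ 2`, changes in small balls do not
affect the homotopy class, so it is a competitor, and filling the hole gives geometric decay of
the energy of `u` on small balls, down to a scale that shrinks as `u` approaches minimality.

By this decay the mollifications of the minimizing sequence at these scales are close to the
circle and equicontinuous. A uniform limit of them lies in the homotopy class, and since the
mollifications also approximate the sequence almost everywhere, the limit is minimal by Fatou's
lemma.
-/

namespace FractionalEnergy

/-! ### The fractional energy -/

theorem lintegral_mul_rpow_le {X : Type*} [MeasurableSpace X] (μ : Measure X) {p : ℝ} (hp : 1 < p)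
    {b g : X → ℝ≥0∞} (hb : Measurable b) (hg : Measurable g) :
    (∫⁻ x, b x * g x ∂μ) ^ p ≤ (∫⁻ x, b x ∂μ) ^ (p - 1) * ∫⁻ x, b x * g x ^ p ∂μ := by
  have hp0 : 0 < p := zero_lt_one.trans hp
  have holder := ENNReal.lintegral_mul_le_Lp_mul_Lq (μ.withDensity b)
    (Real.HolderConjugate.conjExponent hp) (f := g) (g := fun _ ↦ 1)
    hg.aemeasurable aemeasurable_const
  simp only [lintegral_withDensity_eq_lintegral_mul _ hb (hg.pow_const p),
    lintegral_withDensity_eq_lintegral_mul _ hb (measurable_const (a := (1 : ℝ≥0∞))),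
    lintegral_withDensity_eq_lintegral_mul _ hb hg,
    Pi.mul_apply, mul_one, ENNReal.one_rpow] at holder
  calc (∫⁻ x, b x * g x ∂μ) ^ p
      ≤ ((∫⁻ x, b x * g x ^ p ∂μ) ^ (1 / p) * (∫⁻ x, b x ∂μ) ^ (1 / p.conjExponent)) ^ p := by
        gcongr
    _ = (∫⁻ x, b x ∂μ) ^ (p - 1) * ∫⁻ x, b x * g x ^ p ∂μ := by
        have hexp : 1 / p.conjExponent * p = p - 1 := by rw [Real.conjExponent]; field_simp
        rw [ENNReal.mul_rpow_of_nonneg _ _ hp0.le, ← ENNReal.rpow_mul, ← ENNReal.rpow_mul, mul_comm,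
          one_div_mul_cancel hp0.ne', hexp, ENNReal.rpow_one]

theorem inv_ofReal_pow_mul_ofReal_mul_pow {a b : ℝ} (ha : 0 < a) (hb : 0 ≤ b) (n : ℕ) :
    (ENNReal.ofReal a)⁻¹ ^ n * ENNReal.ofReal (b * a) ^ n = ENNReal.ofReal b ^ n := by
  rw [← mul_pow, ENNReal.ofReal_mul hb, mul_left_comm,
    ENNReal.inv_mul_cancel (by simpa using ha) ENNReal.ofReal_ne_top, mul_one]

theorem le_add_dist_of_lipschitzWith_one {X : Type*} [PseudoMetricSpace X] {δ : X → ℝ}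
    (hδ : LipschitzWith 1 δ) (x y : X) : δ x ≤ δ y + dist x y := by
  simpa using hδ.le_add_mul x y

theorem pos_of_two_mul_dist_lt {X : Type*} [PseudoMetricSpace X] {δ : X → ℝ}
    (hδ : LipschitzWith 1 δ) {x y : X} (hxy : 2 * dist x y < δ x) : 0 < δ y := by
  linarith [le_add_dist_of_lipschitzWith_one hδ x y, dist_nonneg (x := x) (y := y)]

section Energy

variable {X : Type*} [MetricSpace X]

/-- The singular kernel `|x - y|^{-2n}`, with value `⊤` on the diagonal when `n ≠ 0`. -/
def rieszKernel (n : ℕ) (x y : X) : ℝ≥0∞ := (edist x y)⁻¹ ^ (2 * n)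

theorem rieszKernel_comm (n : ℕ) (x y : X) : rieszKernel n x y = rieszKernel n y x := by
  rw [rieszKernel, rieszKernel, edist_comm]

theorem inv_pow_le_rieszKernel (n : ℕ) {z w : X} {a : ℝ≥0∞} {C : ℝ} (hC : 0 < C)
    (h : edist z w ≤ ENNReal.ofReal C * a) :
    a⁻¹ ^ (2 * n) ≤ ENNReal.ofReal C ^ (2 * n) * rieszKernel n z w := by
  rw [rieszKernel, ← mul_pow]
  gcongr
  have hC0 : ENNReal.ofReal C ≠ 0 := by simpa using hC
  calc a⁻¹ = ENNReal.ofReal C * (ENNReal.ofReal C * a)⁻¹ := by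
        rw [ENNReal.mul_inv (Or.inl hC0) (Or.inl ENNReal.ofReal_ne_top), ← mul_assoc,
          ENNReal.mul_inv_cancel hC0 ENNReal.ofReal_ne_top, one_mul]
    _ ≤ ENNReal.ofReal C * (edist z w)⁻¹ := by gcongr

theorem inv_ofReal_pow_le_rieszKernel (n : ℕ) {z w : X} {d C : ℝ} (hC : 0 < C)
    (h : dist z w ≤ C * d) :
    (ENNReal.ofReal d)⁻¹ ^ (2 * n) ≤ ENNReal.ofReal C ^ (2 * n) * rieszKernel n z w := by
  refine inv_pow_le_rieszKernel n hC ?_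
  rw [edist_dist, ← ENNReal.ofReal_mul hC.le]
  exact ENNReal.ofReal_le_ofReal h

theorem rieszKernel_le (n : ℕ) {x y z w : X} {C : ℝ} (hC : 0 < C) (h : dist z w ≤ C * dist x y) :
    rieszKernel n x y ≤ ENNReal.ofReal C ^ (2 * n) * rieszKernel n z w := by
  simpa only [rieszKernel, edist_dist x y] using inv_ofReal_pow_le_rieszKernel n hC h

/-- Ahlfors `n`-regularity of `μ` with constants `c` and `C`; the lower bound is only required at
scales at most `1`, so that `μ` may be finite. -/
structure IsAhlforsRegular [MeasurableSpace X] (μ : Measure X) (n : ℕ) (c C : ℝ≥0∞) : Prop where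
  lower_ne_zero : c ≠ 0
  lower_ne_top : c ≠ ⊤
  upper_ne_top : C ≠ ⊤
  measure_ball_le : ∀ x r, 0 < r → μ (Metric.ball x r) ≤ C * ENNReal.ofReal r ^ n
  le_measure_ball : ∀ x r, 0 < r → r ≤ 1 → c * ENNReal.ofReal r ^ n ≤ μ (Metric.ball x r)

variable {V : Type*} [NormedAddCommGroup V]

/-- The integrand `|u(x) - u(y)|^p / |x - y|^{2n}` of the fractional energy. -/
def energyDensity (n : ℕ) (p : ℝ) (u : X → V) (x y : X) : ℝ≥0∞ :=
  ‖u x - u y‖ₑ ^ p * rieszKernel n x y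

theorem energyDensity_comm (n : ℕ) (p : ℝ) (u : X → V) (x y : X) :
    energyDensity n p u x y = energyDensity n p u y x := by
  rw [energyDensity, energyDensity, rieszKernel_comm, enorm_sub_rev]

/-- The energy density at the point `x`: the inner integral of the fractional energy. -/
def pointEnergy [MeasurableSpace X] (n : ℕ) (p : ℝ) (μ : Measure X) (u : X → V) (x : X) : ℝ≥0∞ :=
  ∫⁻ y, energyDensity n p u x y ∂μ

/-- The part of the fractional energy of `u` coming from the pairs whose first point lies in `Ω`. -/
def localEnergy [MeasurableSpace X] (n : ℕ) (p : ℝ) (μ : Measure X) (u : X → V) (Ω : Set X) :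
    ℝ≥0∞ :=
  ∫⁻ x in Ω, pointEnergy n p μ u x ∂μ

theorem localEnergy_mono [MeasurableSpace X] {n : ℕ} {p : ℝ} {μ : Measure X} (u : X → V)
    {S T : Set X} (h : S ⊆ T) : localEnergy n p μ u S ≤ localEnergy n p μ u T :=
  lintegral_mono_set h

section Measurability

variable [MeasurableSpace X] [BorelSpace X] [SecondCountableTopology X]

theorem measurable_rieszKernel (n : ℕ) :
    Measurable (Function.uncurry (rieszKernel n : X → X → ℝ≥0∞)) := by
  unfold rieszKernel Function.uncurry
  fun_prop

theorem measurable_enorm_sub_rpow (p : ℝ) {u : X → V} (hu : Continuous u) :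
    Measurable (Function.uncurry fun x y ↦ ‖u x - u y‖ₑ ^ p) := by
  have hcont : Continuous fun a : X × X ↦ ‖u a.1 - u a.2‖ₑ := by fun_prop
  exact hcont.measurable.pow_const p

theorem measurable_energyDensity (n : ℕ) (p : ℝ) {u : X → V} (hu : Continuous u) :
    Measurable (Function.uncurry (energyDensity n p u)) :=
  (measurable_enorm_sub_rpow p hu).mul (measurable_rieszKernel n)

theorem measurable_pointEnergy (n : ℕ) (p : ℝ) (μ : Measure X) [SFinite μ] {u : X → V}
    (hu : Continuous u) : Measurable (pointEnergy n p μ u) :=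
  (measurable_energyDensity n p hu).lintegral_prod_right'

end Measurability

end Energy

section Annuli

variable {X : Type*} [MetricSpace X]

/-- The dyadic annulus around `x` with outer radius `ρ` and inner radius `ρ / 2`. -/
def dyadicAnnulus (x : X) (ρ : ℝ) : Set X := {y | ρ / 2 < dist x y ∧ dist x y ≤ ρ}

theorem ball_subset_iUnion_dyadicAnnulus (x : X) {r : ℝ} (hr : 0 < r) :
    Metric.ball x r ⊆ {x} ∪ ⋃ i : ℕ, dyadicAnnulus x (r * (1 / 2) ^ i) := by
  intro y hy
  rw [Metric.mem_ball, dist_comm] at hy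
  obtain rfl | hxy := eq_or_ne x y
  · exact Or.inl rfl
  obtain ⟨i, hlow, hup⟩ := exists_nat_pow_near_of_lt_one (div_pos (dist_pos.2 hxy) hr)
    ((div_le_one hr).2 hy.le) (by norm_num : (0 : ℝ) < 1 / 2) (by norm_num)
  rw [lt_div_iff₀' hr, pow_succ] at hlow
  rw [div_le_iff₀' hr] at hup
  exact Or.inr (Set.mem_iUnion.2 ⟨i, by linarith, hup⟩)

variable [MeasurableSpace X] [OpensMeasurableSpace X] {μ : Measure X} {n : ℕ} {c C : ℝ≥0∞}

theorem IsAhlforsRegular.lintegral_le_of_support_subset_ball (hμ : IsAhlforsRegular μ n c C)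
    {f : X → ℝ≥0∞} {K : ℝ≥0∞} {x : X} {b d : ℝ} (hb : 0 < b) (hd : 0 < d)
    (hf : ∀ y, f y ≠ 0 → y ∈ Metric.ball x (b * d) ∧ f y ≤ K * (ENNReal.ofReal d)⁻¹ ^ n) :
    ∫⁻ y, f y ∂μ ≤ K * C * ENNReal.ofReal b ^ n := by
  set k := K * (ENNReal.ofReal d)⁻¹ ^ n
  calc ∫⁻ y, f y ∂μ ≤ ∫⁻ y, (Metric.ball x (b * d)).indicator (fun _ ↦ k) y ∂μ := by
        refine lintegral_mono fun y ↦ ?_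
        by_cases hy : f y = 0
        · exact hy.trans_le zero_le
        · obtain ⟨hmem, hle⟩ := hf y hy
          rwa [Set.indicator_of_mem hmem]
    _ = k * μ (Metric.ball x (b * d)) :=
        lintegral_indicator_const Metric.isOpen_ball.measurableSet k
    _ ≤ k * (C * ENNReal.ofReal (b * d) ^ n) := by
        gcongr
        exact hμ.measure_ball_le x _ (mul_pos hb hd)
    _ = K * C * ENNReal.ofReal b ^ n := by
        rw [← inv_ofReal_pow_mul_ofReal_mul_pow hd hb.le n]
        ring

theorem IsAhlforsRegular.setLIntegral_dyadicAnnulus_le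
    (hμ : IsAhlforsRegular μ n c C) {p : ℝ} (hp : 0 ≤ p)
    (x : X) {ρ : ℝ} (hρ : 0 < ρ) :
    ∫⁻ y in dyadicAnnulus x ρ, edist x y ^ p * rieszKernel n x y ∂μ
      ≤ C * 8 ^ n * ENNReal.ofReal (ρ ^ (p - n)) := by
  have hdist : Measurable (dist x) := (continuous_const.dist continuous_id).measurable
  have hmeas : MeasurableSet (dyadicAnnulus x ρ) :=
    (measurableSet_lt measurable_const hdist).inter (measurableSet_le hdist measurable_const)
  calc ∫⁻ y in dyadicAnnulus x ρ, edist x y ^ p * rieszKernel n x y ∂μ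
      = ∫⁻ y, (dyadicAnnulus x ρ).indicator (fun y ↦ edist x y ^ p * rieszKernel n x y) y ∂μ :=
        (lintegral_indicator hmeas _).symm
    _ ≤ ENNReal.ofReal ρ ^ p * (ENNReal.ofReal (ρ / 2))⁻¹ ^ n * C * ENNReal.ofReal 4 ^ n := by
        refine hμ.lintegral_le_of_support_subset_ball (x := x) (by norm_num) (half_pos hρ)
          fun y hy ↦ ?_
        have hmem : y ∈ dyadicAnnulus x ρ := Set.mem_of_indicator_ne_zero hy
        have ⟨hlow, hup⟩ := hmem
        constructor
        · rw [Metric.mem_ball, dist_comm]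
          linarith
        · rw [Set.indicator_of_mem hmem, mul_assoc, ← pow_add, ← two_mul, rieszKernel,
            edist_dist]
          gcongr
    _ = C * (ENNReal.ofReal ρ ^ p * (ENNReal.ofReal (ρ / 2))⁻¹ ^ n * ENNReal.ofReal 4 ^ n) := by
        ring
    _ = C * 8 ^ n * ENNReal.ofReal (ρ ^ (p - n)) := by
        rw [← ENNReal.ofReal_inv_of_pos (half_pos hρ), ENNReal.ofReal_rpow_of_pos hρ,
          ← ENNReal.ofReal_pow (by positivity), ← ENNReal.ofReal_pow (by norm_num),
          ← ENNReal.ofReal_mul (by positivity), ← ENNReal.ofReal_mul (by positivity), mul_assoc C,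
          show (8 : ℝ≥0∞) = ENNReal.ofReal 8 by simp, ← ENNReal.ofReal_pow (by norm_num),
          ← ENNReal.ofReal_mul (by positivity), Real.rpow_sub_natCast hρ.ne', inv_div, div_pow,
          show (8 : ℝ) = 2 * 4 by norm_num, mul_pow]
        congr 2
        ring

theorem IsAhlforsRegular.exists_setLIntegral_ball_le
    (hμ : IsAhlforsRegular μ n c C) {p : ℝ} (hp : (n : ℝ) < p) :
    ∃ C₁ : ℝ≥0∞, C₁ ≠ ⊤ ∧ ∀ (x : X) (r : ℝ), 0 < r →
      ∫⁻ y in Metric.ball x r, edist x y ^ p * rieszKernel n x y ∂μ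
        ≤ C₁ * ENNReal.ofReal r ^ (p - n) := by
  have hp0 : 0 < p := (Nat.cast_nonneg n).trans_lt hp
  set θ : ℝ := (1 / 2) ^ (p - n)
  have hθ0 : 0 ≤ θ := by positivity
  have hθ1 : θ < 1 := Real.rpow_lt_one (by norm_num) (by norm_num) (sub_pos.2 hp)
  refine ⟨C * 8 ^ n * (1 - ENNReal.ofReal θ)⁻¹, ?_, fun x r hr ↦ ?_⟩
  · have hgap : (1 - ENNReal.ofReal θ)⁻¹ ≠ ⊤ := by simpa [tsub_eq_zero_iff_le] using hθ1
    have := hμ.upper_ne_top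
    finiteness
  have hcenter : ∫⁻ y in {x}, edist x y ^ p * rieszKernel n x y ∂μ = 0 := by
    simp [hp0]
  have hannulus (i : ℕ) :
      ∫⁻ y in dyadicAnnulus x (r * (1 / 2) ^ i), edist x y ^ p * rieszKernel n x y ∂μ
        ≤ C * 8 ^ n * ENNReal.ofReal r ^ (p - n) * ENNReal.ofReal θ ^ i := by
    refine (hμ.setLIntegral_dyadicAnnulus_le hp0.le x (by positivity)).trans_eq ?_
    rw [Real.mul_rpow hr.le (by positivity), ENNReal.ofReal_mul (by positivity),
      ← Real.rpow_pow_comm (by norm_num), ENNReal.ofReal_pow hθ0,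
      ENNReal.ofReal_rpow_of_pos hr, mul_assoc, mul_assoc, mul_assoc]
  calc ∫⁻ y in Metric.ball x r, edist x y ^ p * rieszKernel n x y ∂μ
      ≤ ∫⁻ y in {x} ∪ ⋃ i : ℕ, dyadicAnnulus x (r * (1 / 2) ^ i),
          edist x y ^ p * rieszKernel n x y ∂μ :=
        lintegral_mono_set (ball_subset_iUnion_dyadicAnnulus x hr)
    _ ≤ 0 + ∑' i : ℕ, ∫⁻ y in dyadicAnnulus x (r * (1 / 2) ^ i),
          edist x y ^ p * rieszKernel n x y ∂μ :=
        (lintegral_union_le _ _ _).trans (add_le_add hcenter.le (lintegral_iUnion_le _ _))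
    _ ≤ ∑' i, C * 8 ^ n * ENNReal.ofReal r ^ (p - n) * ENNReal.ofReal θ ^ i := by
        rw [zero_add]
        exact ENNReal.tsum_le_tsum hannulus
    _ = C * 8 ^ n * (1 - ENNReal.ofReal θ)⁻¹ * ENNReal.ofReal r ^ (p - n) := by
        rw [ENNReal.tsum_mul_left, ENNReal.tsum_geometric]
        ring

end Annuli

/-! ### Averaging kernels and local averages -/

section AveragingKernel

variable {X : Type*} [MetricSpace X]

/-- The pairs `(x, z)` such that the value at `z` may enter an average of values of a map on `A`
around `x` at the scale `δ x`, with the aperture `c₀`. -/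
structure IsAdmissible (A : Set X) (δ : X → ℝ) (c₀ : ℝ) (x z : X) : Prop where
  scale_pos : 0 < δ x
  mem : z ∈ A
  dist_le : dist x z ≤ c₀ * δ x
  scale_le : δ x ≤ c₀ * δ z

open Classical in
/-- The kernel `c₀ δ(x)^{-n}` on the admissible pairs, which dominates the weights of all averages
at the scale `δ`. -/
def averagingKernel (n : ℕ) (A : Set X) (δ : X → ℝ) (c₀ : ℝ) (x z : X) : ℝ≥0∞ :=
  if IsAdmissible A δ c₀ x z then ENNReal.ofReal c₀ * (ENNReal.ofReal (δ x))⁻¹ ^ n else 0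

variable {n : ℕ} {A : Set X} {δ : X → ℝ} {c₀ : ℝ} {x z z' : X}

theorem IsAdmissible.averagingKernel_eq (h : IsAdmissible A δ c₀ x z) :
    averagingKernel n A δ c₀ x z = ENNReal.ofReal c₀ * (ENNReal.ofReal (δ x))⁻¹ ^ n :=
  if_pos h

theorem averagingKernel_eq_zero (h : ¬IsAdmissible A δ c₀ x z) :
    averagingKernel n A δ c₀ x z = 0 :=
  if_neg h

theorem isAdmissible_of_averagingKernel_ne_zero (h : averagingKernel n A δ c₀ x z ≠ 0) :
    IsAdmissible A δ c₀ x z :=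
  not_imp_comm.1 averagingKernel_eq_zero h

theorem averagingKernel_mul_le {a b : ℝ≥0∞} (h : IsAdmissible A δ c₀ x z → a ≤ b) :
    averagingKernel n A δ c₀ x z * a ≤ averagingKernel n A δ c₀ x z * b := by
  by_cases hz : IsAdmissible A δ c₀ x z
  · gcongr
    exact h hz
  · simp [averagingKernel_eq_zero hz]

theorem IsAdmissible.dist_le_two_mul (hz : IsAdmissible A δ c₀ x z)
    (hz' : IsAdmissible A δ c₀ x z') : dist z z' ≤ 2 * c₀ * δ x := by
  linarith [dist_triangle_left z z' x, hz.dist_le, hz'.dist_le]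

theorem IsAdmissible.mono {c₁ : ℝ} (h : IsAdmissible A δ c₀ x z) (hc : c₀ ≤ c₁) :
    IsAdmissible A δ c₁ x z where
  scale_pos := h.scale_pos
  mem := h.mem
  dist_le := h.dist_le.trans (mul_le_mul_of_nonneg_right hc h.scale_pos.le)
  scale_le := by
    have hc₀ : 0 ≤ c₀ := nonneg_of_mul_nonneg_left (dist_nonneg.trans h.dist_le) h.scale_pos
    have hz : 0 ≤ δ z := (pos_of_mul_pos_right (h.scale_pos.trans_le h.scale_le) hc₀).le
    exact h.scale_le.trans (mul_le_mul_of_nonneg_right hc hz)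

theorem IsAdmissible.ofReal_mul_inv_pow_le (h : IsAdmissible A δ c₀ x z) {a : ℝ} (ha : a ≤ c₀) :
    ENNReal.ofReal (a * (δ x)⁻¹ ^ n) ≤ averagingKernel n A δ c₀ x z := by
  have hx := h.scale_pos
  rw [h.averagingKernel_eq, ENNReal.ofReal_mul' (by positivity), ENNReal.ofReal_pow (by positivity),
    ENNReal.ofReal_inv_of_pos hx]
  gcongr

variable [MeasurableSpace X] [BorelSpace X]

theorem measurable_averagingKernel [SecondCountableTopology X] (n : ℕ) (c₀ : ℝ)
    (hA : MeasurableSet A) (hδ : Continuous δ) :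
    Measurable (Function.uncurry (averagingKernel n A δ c₀)) := by
  have hδm := hδ.measurable
  refine Measurable.ite ?_ (by fun_prop) measurable_const
  have hpos : MeasurableSet {q : X × X | 0 < δ q.1} := measurableSet_lt (by fun_prop) (by fun_prop)
  have hmem : MeasurableSet {q : X × X | q.2 ∈ A} := measurable_snd hA
  have hdist : MeasurableSet {q : X × X | dist q.1 q.2 ≤ c₀ * δ q.1} :=
    measurableSet_le (by fun_prop) (by fun_prop)
  have hscale : MeasurableSet {q : X × X | δ q.1 ≤ c₀ * δ q.2} :=
    measurableSet_le (by fun_prop) (by fun_prop)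
  convert hpos.inter (hmem.inter (hdist.inter hscale)) using 1
  ext q
  exact ⟨fun h ↦ ⟨h.scale_pos, h.mem, h.dist_le, h.scale_le⟩,
    fun ⟨h₁, h₂, h₃, h₄⟩ ↦ ⟨h₁, h₂, h₃, h₄⟩⟩

variable {μ : Measure X} {c C : ℝ≥0∞}

theorem IsAhlforsRegular.lintegral_averagingKernel_right_le (hμ : IsAhlforsRegular μ n c C)
    (hc₀ : 1 ≤ c₀) (x : X) :
    ∫⁻ z, averagingKernel n A δ c₀ x z ∂μ
      ≤ ENNReal.ofReal c₀ * C * ENNReal.ofReal (2 * c₀) ^ n := by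
  by_cases hx : 0 < δ x
  swap
  · simp [averagingKernel_eq_zero fun h : IsAdmissible A δ c₀ x _ ↦ hx h.scale_pos]
  have hc₀_pos : 0 < c₀ := by linarith
  refine hμ.lintegral_le_of_support_subset_ball (x := x) (by positivity) hx fun z hz ↦ ?_
  have hz := isAdmissible_of_averagingKernel_ne_zero hz
  refine ⟨?_, hz.averagingKernel_eq.le⟩
  rw [Metric.mem_ball, dist_comm]
  linarith [hz.dist_le, mul_pos hc₀_pos hx]

theorem IsAhlforsRegular.lintegral_averagingKernel_left_le (hμ : IsAhlforsRegular μ n c C)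
    (hc₀ : 1 ≤ c₀) (hδ : LipschitzWith 1 δ) (z : X) :
    ∫⁻ x, averagingKernel n A δ c₀ x z ∂μ
      ≤ ENNReal.ofReal c₀ * C * ENNReal.ofReal (2 * c₀ ^ 2 * (1 + c₀)) ^ n := by
  have hc₀_pos : 0 < c₀ := by linarith
  by_cases hz : 0 < δ z
  swap
  · have hzero (x : X) : ¬IsAdmissible A δ c₀ x z := fun h ↦
      hz (pos_of_mul_pos_right (h.scale_pos.trans_le h.scale_le) hc₀_pos.le)
    simp [averagingKernel_eq_zero (hzero _)]
  refine hμ.lintegral_le_of_support_subset_ball (x := z) (d := δ z / (1 + c₀)) (by positivity)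
    (by positivity) fun x hx ↦ ?_
  have hx := isAdmissible_of_averagingKernel_ne_zero hx
  have hdist := hx.dist_le
  constructor
  · rw [Metric.mem_ball, mul_assoc, mul_div_cancel₀ _ (by positivity)]
    have : c₀ * δ x ≤ c₀ * (c₀ * δ z) := by
      gcongr
      exact hx.scale_le
    linarith [mul_pos (pow_pos hc₀_pos 2) hz]
  · rw [hx.averagingKernel_eq]
    gcongr
    rw [div_le_iff₀ (by positivity)]
    have := le_add_dist_of_lipschitzWith_one hδ z x
    rw [dist_comm] at this
    linarith

theorem lintegral_lintegral_averagingKernel_mul_le [SFinite μ] [SecondCountableTopology X]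
    (hA : MeasurableSet A) (hδ : Continuous δ) {B : ℝ≥0∞}
    (hB : ∀ z, ∫⁻ x, averagingKernel n A δ c₀ x z ∂μ ≤ B) {G : X → ℝ≥0∞} (hG : Measurable G) :
    ∫⁻ x, ∫⁻ z, averagingKernel n A δ c₀ x z * G z ∂μ ∂μ ≤ B * ∫⁻ z in A, G z ∂μ := by
  have hb := measurable_averagingKernel n c₀ hA hδ
  calc ∫⁻ x, ∫⁻ z, averagingKernel n A δ c₀ x z * G z ∂μ ∂μ
      = ∫⁻ z, (∫⁻ x, averagingKernel n A δ c₀ x z ∂μ) * G z ∂μ := by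
        rw [lintegral_lintegral_swap (hb.mul (hG.comp measurable_snd)).aemeasurable]
        exact lintegral_congr fun z ↦ lintegral_mul_const _ hb.of_uncurry_right
    _ ≤ ∫⁻ z, A.indicator (fun z ↦ B * G z) z ∂μ := by
        refine lintegral_mono fun z ↦ ?_
        by_cases hz : z ∈ A
        · rw [Set.indicator_of_mem hz]
          gcongr
          exact hB z
        · simp [averagingKernel_eq_zero fun h : IsAdmissible A δ c₀ _ z ↦ hz h.mem]
    _ = B * ∫⁻ z in A, G z ∂μ := by
        rw [lintegral_indicator hA, lintegral_const_mul _ hG]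

end AveragingKernel

section LocalOscillation

variable {X : Type*} [MetricSpace X] [MeasurableSpace X] {V : Type*} [NormedAddCommGroup V]

/-- The mean oscillation of `u` around `x` at the scale `δ x`, taken with respect to the averaging
kernel in both variables. -/
def localOscillation (n : ℕ) (p : ℝ) (μ : Measure X) (A : Set X) (δ : X → ℝ) (c₀ : ℝ) (u : X → V)
    (x : X) : ℝ≥0∞ :=
  ∫⁻ z, averagingKernel n A δ c₀ x z *
    ∫⁻ z', averagingKernel n A δ c₀ x z' * ‖u z' - u z‖ₑ ^ p ∂μ ∂μ

variable {μ : Measure X} {n : ℕ} {p : ℝ} {A : Set X} {δ : X → ℝ} {c₀ : ℝ} {u : X → V} {x z : X}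

theorem IsAdmissible.inv_pow_mul_lintegral_le (hc₀ : 0 < c₀) (hz : IsAdmissible A δ c₀ x z) :
    (ENNReal.ofReal (δ x))⁻¹ ^ n *
        ∫⁻ z', averagingKernel n A δ c₀ x z' * ‖u z' - u z‖ₑ ^ p ∂μ
      ≤ ENNReal.ofReal c₀ * ENNReal.ofReal (2 * c₀) ^ (2 * n) * pointEnergy n p μ u z := by
  have hδ := hz.scale_pos
  rw [pointEnergy, ← lintegral_const_mul' _ _ (by simp [hδ]),
    ← lintegral_const_mul' _ _ (by finiteness)]
  refine lintegral_mono fun z' ↦ ?_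
  by_cases hz' : IsAdmissible A δ c₀ x z'
  swap
  · simp [averagingKernel_eq_zero hz']
  calc (ENNReal.ofReal (δ x))⁻¹ ^ n * (averagingKernel n A δ c₀ x z' * ‖u z' - u z‖ₑ ^ p)
      = ENNReal.ofReal c₀ * ‖u z - u z'‖ₑ ^ p * (ENNReal.ofReal (δ x))⁻¹ ^ (2 * n) := by
        rw [hz'.averagingKernel_eq, enorm_sub_rev, two_mul, pow_add]
        ring
    _ ≤ ENNReal.ofReal c₀ * ‖u z - u z'‖ₑ ^ p *
          (ENNReal.ofReal (2 * c₀) ^ (2 * n) * rieszKernel n z z') := by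
        gcongr
        exact inv_ofReal_pow_le_rieszKernel n (by positivity) (hz.dist_le_two_mul hz')
    _ = ENNReal.ofReal c₀ * ENNReal.ofReal (2 * c₀) ^ (2 * n) * energyDensity n p u z z' := by
        rw [energyDensity]
        ring

theorem inv_pow_mul_localOscillation_le (hc₀ : 0 < c₀) (hx : 0 < δ x) :
    (ENNReal.ofReal (δ x))⁻¹ ^ n * localOscillation n p μ A δ c₀ u x
      ≤ ENNReal.ofReal c₀ * ENNReal.ofReal (2 * c₀) ^ (2 * n) *
          ∫⁻ z, averagingKernel n A δ c₀ x z * pointEnergy n p μ u z ∂μ := by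
  rw [localOscillation, ← lintegral_const_mul' _ _ (by simp [hx]),
    ← lintegral_const_mul' _ _ (by finiteness)]
  refine lintegral_mono fun z ↦ ?_
  rw [mul_left_comm, mul_left_comm (_ * _) (averagingKernel n A δ c₀ x z)]
  exact averagingKernel_mul_le fun hz ↦ hz.inv_pow_mul_lintegral_le hc₀

theorem localOscillation_le_localEnergy (hc₀ : 0 < c₀) {S : Set X} (hS : MeasurableSet S)
    (hxS : ∀ z, IsAdmissible A δ c₀ x z → z ∈ S) :
    localOscillation n p μ A δ c₀ u x
      ≤ ENNReal.ofReal c₀ ^ 2 * ENNReal.ofReal (2 * c₀) ^ (2 * n) * localEnergy n p μ u S := by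
  rw [localEnergy, ← lintegral_const_mul' _ _ (by finiteness), ← lintegral_indicator hS]
  refine lintegral_mono fun z ↦ ?_
  by_cases hz : IsAdmissible A δ c₀ x z
  swap
  · simp [averagingKernel_eq_zero hz]
  rw [Set.indicator_of_mem (hxS z hz), hz.averagingKernel_eq, sq]
  simp only [mul_assoc (ENNReal.ofReal c₀)]
  gcongr ENNReal.ofReal c₀ * ?_
  simpa only [mul_assoc] using
    hz.inv_pow_mul_lintegral_le (μ := μ) (n := n) (p := p) (u := u) hc₀

end LocalOscillation

theorem inv_rpow_mul_rpow_sub {d : ℝ≥0∞} (hd : d ≠ 0) (hd_top : d ≠ ⊤) (p : ℝ) (n : ℕ) :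
    d⁻¹ ^ p * d ^ (p - n) = d⁻¹ ^ n := by
  rw [ENNReal.rpow_sub _ _ hd hd_top, ENNReal.inv_rpow, ENNReal.rpow_natCast, div_eq_mul_inv,
    ← mul_assoc, ENNReal.inv_mul_cancel (by simp [hd, hd_top]) (by finiteness), one_mul,
    ENNReal.inv_pow]

section LocalAverage

variable {X : Type*} [MetricSpace X] [MeasurableSpace X] {V : Type*} [NormedAddCommGroup V]

/-- `w` is obtained from `u` by averaging the values of `u` on `A` at the scale `δ x` around each
point `x` with `0 < δ x`, expressed through the estimates that control the energy of `w`. -/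
structure IsLocalAverage (n : ℕ) (p : ℝ) (μ : Measure X) (A : Set X) (δ : X → ℝ) (c₀ : ℝ)
    (C₃ : ℝ≥0∞) (u w : X → V) : Prop where
  eq_of_nonpos {x : X} : δ x ≤ 0 → w x = u x
  enorm_sub_rpow_le {x : X} (a : V) : 0 < δ x →
    ‖w x - a‖ₑ ^ p ≤ ∫⁻ z, averagingKernel n A δ c₀ x z * ‖u z - a‖ₑ ^ p ∂μ
  enorm_sub_rpow_le_of_near {x y : X} : 0 < δ x → 2 * dist x y < δ x →
    ‖w x - w y‖ₑ ^ p ≤ C₃ * (edist x y ^ p * (ENNReal.ofReal (δ x))⁻¹ ^ p) *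
      localOscillation n p μ A δ c₀ u x

variable {n : ℕ} {p : ℝ} {μ : Measure X} {A : Set X} {δ : X → ℝ} {c₀ : ℝ} {C₃ : ℝ≥0∞}
  {u w : X → V} {x y : X}

theorem IsLocalAverage.energyDensity_le_of_nonpos
    (hw : IsLocalAverage n p μ A δ c₀ C₃ u w) (hc₀ : 0 < c₀) (hδ : LipschitzWith 1 δ)
    (hx : 0 < δ x) (hy : δ y ≤ 0) :
    energyDensity n p w x y ≤ ENNReal.ofReal (c₀ + 1) ^ (2 * n) *
      ∫⁻ z, averagingKernel n A δ c₀ x z * energyDensity n p u z y ∂μ := by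
  have hscale : δ x ≤ dist x y := by linarith [le_add_dist_of_lipschitzWith_one hδ x y]
  calc energyDensity n p w x y
      ≤ (∫⁻ z, averagingKernel n A δ c₀ x z * ‖u z - u y‖ₑ ^ p ∂μ) * rieszKernel n x y := by
        rw [energyDensity, hw.eq_of_nonpos hy]
        gcongr
        exact hw.enorm_sub_rpow_le (u y) hx
    _ ≤ ∫⁻ z, averagingKernel n A δ c₀ x z * ‖u z - u y‖ₑ ^ p * rieszKernel n x y ∂μ :=
        lintegral_mul_const_le _ _
    _ ≤ ∫⁻ z, ENNReal.ofReal (c₀ + 1) ^ (2 * n) *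
          (averagingKernel n A δ c₀ x z * energyDensity n p u z y) ∂μ := by
        refine lintegral_mono fun z ↦ ?_
        rw [mul_left_comm, mul_assoc, energyDensity, mul_left_comm (_ ^ (2 * n))]
        refine averagingKernel_mul_le fun hz ↦ ?_
        gcongr
        refine rieszKernel_le n (by positivity) ?_
        have : c₀ * δ x ≤ c₀ * dist x y := by gcongr
        linarith [dist_triangle_left z y x, hz.dist_le]
    _ = ENNReal.ofReal (c₀ + 1) ^ (2 * n) *
          ∫⁻ z, averagingKernel n A δ c₀ x z * energyDensity n p u z y ∂μ :=
        lintegral_const_mul' _ _ (by finiteness)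

theorem IsLocalAverage.enorm_sub_rpow_le_lintegral_lintegral
    (hw : IsLocalAverage n p μ A δ c₀ C₃ u w) (hx : 0 < δ x) (hy : 0 < δ y) :
    ‖w x - w y‖ₑ ^ p ≤ ∫⁻ z, averagingKernel n A δ c₀ x z *
      ∫⁻ z', averagingKernel n A δ c₀ y z' * ‖u z - u z'‖ₑ ^ p ∂μ ∂μ := by
  refine (hw.enorm_sub_rpow_le (w y) hx).trans (lintegral_mono fun z ↦ ?_)
  dsimp only
  gcongr
  rw [enorm_sub_rev]
  simpa only [enorm_sub_rev (u z)] using hw.enorm_sub_rpow_le (u z) hy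

theorem IsLocalAverage.energyDensity_le_of_far
    (hw : IsLocalAverage n p μ A δ c₀ C₃ u w) (hc₀ : 0 < c₀) (hδ : LipschitzWith 1 δ)
    (hx : 0 < δ x) (hy : 0 < δ y) (hxy : δ x ≤ 2 * dist x y) :
    energyDensity n p w x y ≤ ENNReal.ofReal (5 * c₀ + 1) ^ (2 * n) *
      ∫⁻ z, averagingKernel n A δ c₀ x z *
        ∫⁻ z', averagingKernel n A δ c₀ y z' * energyDensity n p u z z' ∂μ ∂μ := by
  have hscale : δ y ≤ 3 * dist x y := by
    linarith [le_add_dist_of_lipschitzWith_one hδ y x, dist_comm x y]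
  set b := averagingKernel n A δ c₀
  set D := ENNReal.ofReal (5 * c₀ + 1) ^ (2 * n)
  have hD_ne_top : D ≠ ⊤ := by finiteness
  have hkernel (z z' : X) (hz : IsAdmissible A δ c₀ x z) (hz' : IsAdmissible A δ c₀ y z') :
      rieszKernel n x y ≤ D * rieszKernel n z z' := by
    refine rieszKernel_le n (by positivity) ?_
    have h₁ : c₀ * δ x ≤ c₀ * (2 * dist x y) := by gcongr
    have h₂ : c₀ * δ y ≤ c₀ * (3 * dist x y) := by gcongr
    linarith [dist_triangle z x z', dist_triangle x y z', dist_comm x z, hz.dist_le, hz'.dist_le]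
  calc energyDensity n p w x y
      ≤ (∫⁻ z, b x z * ∫⁻ z', b y z' * ‖u z - u z'‖ₑ ^ p ∂μ ∂μ) * rieszKernel n x y := by
        rw [energyDensity]
        gcongr
        exact hw.enorm_sub_rpow_le_lintegral_lintegral hx hy
    _ ≤ ∫⁻ z, b x z * (∫⁻ z', b y z' * ‖u z - u z'‖ₑ ^ p ∂μ) * rieszKernel n x y ∂μ :=
        lintegral_mul_const_le _ _
    _ ≤ ∫⁻ z, D * (b x z * ∫⁻ z', b y z' * energyDensity n p u z z' ∂μ) ∂μ := by
        refine lintegral_mono fun z ↦ ?_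
        rw [mul_left_comm, mul_assoc]
        refine averagingKernel_mul_le fun hz ↦ (lintegral_mul_const_le _ _).trans ?_
        rw [← lintegral_const_mul' _ _ hD_ne_top]
        refine lintegral_mono fun z' ↦ ?_
        rw [mul_left_comm, mul_assoc, energyDensity, mul_left_comm D]
        refine averagingKernel_mul_le fun hz' ↦ ?_
        gcongr
        exact hkernel z z' hz hz'
    _ = D * ∫⁻ z, b x z * ∫⁻ z', b y z' * energyDensity n p u z z' ∂μ ∂μ :=
        lintegral_const_mul' _ _ hD_ne_top

variable [BorelSpace X] {c C C₁ : ℝ≥0∞}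

theorem IsLocalAverage.setLIntegral_near_le
    (hw : IsLocalAverage n p μ A δ c₀ C₃ u w) (hc₀ : 0 < c₀)
    (hC₁ : ∀ (x : X) (r : ℝ), 0 < r → ∫⁻ y in Metric.ball x r, edist x y ^ p * rieszKernel n x y ∂μ
      ≤ C₁ * ENNReal.ofReal r ^ (p - n)) (hx : 0 < δ x) :
    ∫⁻ y in {y | 2 * dist x y < δ x}, energyDensity n p w x y ∂μ
      ≤ C₃ * C₁ * (ENNReal.ofReal c₀ * ENNReal.ofReal (2 * c₀) ^ (2 * n)) *
        ∫⁻ z, averagingKernel n A δ c₀ x z * pointEnergy n p μ u z ∂μ := by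
  set Q := localOscillation n p μ A δ c₀ u x
  set d := ENNReal.ofReal (δ x)
  have hsub : {y | 2 * dist x y < δ x} ⊆ Metric.ball x (δ x) := fun y hy ↦ by
    rw [Metric.mem_ball']
    linarith [hy.out, dist_nonneg (x := x) (y := y)]
  have hmeas : Measurable fun y ↦ edist x y ^ p * rieszKernel n x y := by
    unfold rieszKernel
    fun_prop
  calc ∫⁻ y in {y | 2 * dist x y < δ x}, energyDensity n p w x y ∂μ
      ≤ ∫⁻ y in {y | 2 * dist x y < δ x},
          C₃ * d⁻¹ ^ p * Q * (edist x y ^ p * rieszKernel n x y) ∂μ := by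
        refine setLIntegral_mono (hmeas.const_mul _) fun y hy ↦ ?_
        calc energyDensity n p w x y
            ≤ C₃ * (edist x y ^ p * d⁻¹ ^ p) * Q * rieszKernel n x y := by
              rw [energyDensity]
              gcongr
              exact hw.enorm_sub_rpow_le_of_near hx hy
          _ = C₃ * d⁻¹ ^ p * Q * (edist x y ^ p * rieszKernel n x y) := by ring
    _ ≤ C₃ * d⁻¹ ^ p * Q * (C₁ * d ^ (p - n)) := by
        rw [lintegral_const_mul _ hmeas]
        gcongr
        exact (lintegral_mono_set hsub).trans (hC₁ x (δ x) hx)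
    _ = C₃ * C₁ * (d⁻¹ ^ n * Q) := by
        rw [← inv_rpow_mul_rpow_sub (by simpa [d] using hx) ENNReal.ofReal_ne_top p n]
        ring
    _ ≤ C₃ * C₁ * (ENNReal.ofReal c₀ * ENNReal.ofReal (2 * c₀) ^ (2 * n) *
          ∫⁻ z, averagingKernel n A δ c₀ x z * pointEnergy n p μ u z ∂μ) := by
        gcongr C₃ * C₁ * ?_
        exact inv_pow_mul_localOscillation_le hc₀ hx
    _ = _ := (mul_assoc _ _ _).symm

variable [SecondCountableTopology X] [SFinite μ]

theorem lintegral_lintegral_averagingKernel_mul_swap (hA : MeasurableSet A) (hδ : Continuous δ)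
    {F : X → X → ℝ≥0∞} (hF : Measurable (Function.uncurry F)) (x : X) :
    ∫⁻ y, ∫⁻ z, averagingKernel n A δ c₀ x z * F z y ∂μ ∂μ
      = ∫⁻ z, averagingKernel n A δ c₀ x z * ∫⁻ y, F z y ∂μ ∂μ := by
  have hb := (measurable_averagingKernel n c₀ hA hδ).of_uncurry_left (x := x)
  rw [lintegral_lintegral_swap
    ((hb.comp measurable_snd).mul (hF.comp measurable_swap)).aemeasurable]
  exact lintegral_congr fun z ↦ lintegral_const_mul _ hF.of_uncurry_left

theorem IsLocalAverage.setLIntegral_nonpos_le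
    (hw : IsLocalAverage n p μ A δ c₀ C₃ u w) (hc₀ : 0 < c₀) (hδ : LipschitzWith 1 δ)
    (hA : MeasurableSet A) (hu : Continuous u) (hx : 0 < δ x) :
    ∫⁻ y in {y | δ y ≤ 0}, energyDensity n p w x y ∂μ
      ≤ ENNReal.ofReal (c₀ + 1) ^ (2 * n) *
        ∫⁻ z, averagingKernel n A δ c₀ x z * pointEnergy n p μ u z ∂μ := by
  have hδc := hδ.continuous
  unfold pointEnergy
  rw [← lintegral_lintegral_averagingKernel_mul_swap hA hδc (measurable_energyDensity n p hu),
    ← lintegral_const_mul' _ _ (by finiteness)]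
  exact (setLIntegral_mono' (isClosed_le hδc continuous_const).measurableSet
    fun y hy ↦ hw.energyDensity_le_of_nonpos hc₀ hδ hx hy).trans (setLIntegral_le_lintegral _ _)

theorem IsLocalAverage.setLIntegral_far_le
    (hw : IsLocalAverage n p μ A δ c₀ C₃ u w) (hc₀ : 0 < c₀) (hδ : LipschitzWith 1 δ)
    (hA : MeasurableSet A) (hu : Continuous u) {B : ℝ≥0∞} (hB_ne_top : B ≠ ⊤)
    (hB : ∀ z, ∫⁻ x, averagingKernel n A δ c₀ x z ∂μ ≤ B) (hx : 0 < δ x) :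
    ∫⁻ y in {y | 0 < δ y ∧ δ x ≤ 2 * dist x y}, energyDensity n p w x y ∂μ
      ≤ ENNReal.ofReal (5 * c₀ + 1) ^ (2 * n) * B *
        ∫⁻ z, averagingKernel n A δ c₀ x z * pointEnergy n p μ u z ∂μ := by
  have hδc := hδ.continuous
  have hf := measurable_energyDensity n p hu
  have hb := measurable_averagingKernel n c₀ hA hδc
  set b := averagingKernel n A δ c₀
  have hmeas : MeasurableSet {y | 0 < δ y ∧ δ x ≤ 2 * dist x y} :=
    (isOpen_lt continuous_const hδc).measurableSet.inter
      (isClosed_le continuous_const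
        (continuous_const.mul (continuous_const.dist continuous_id))).measurableSet
  have hF : Measurable (Function.uncurry fun z y ↦
      ∫⁻ z', b y z' * energyDensity n p u z z' ∂μ) := by
    refine Measurable.lintegral_prod_right'
      (f := fun r : (X × X) × X ↦ b r.1.2 r.2 * energyDensity n p u r.1.1 r.2) ?_
    exact (hb.comp (f := fun r : (X × X) × X ↦ (r.1.2, r.2)) (by fun_prop)).mul
      (hf.comp (f := fun r : (X × X) × X ↦ (r.1.1, r.2)) (by fun_prop))
  calc ∫⁻ y in {y | 0 < δ y ∧ δ x ≤ 2 * dist x y}, energyDensity n p w x y ∂μ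
      ≤ ∫⁻ y, ENNReal.ofReal (5 * c₀ + 1) ^ (2 * n) *
          ∫⁻ z, b x z * ∫⁻ z', b y z' * energyDensity n p u z z' ∂μ ∂μ ∂μ :=
        (setLIntegral_mono' hmeas fun y hy ↦ hw.energyDensity_le_of_far hc₀ hδ hx hy.1 hy.2).trans
          (setLIntegral_le_lintegral _ _)
    _ = ENNReal.ofReal (5 * c₀ + 1) ^ (2 * n) *
          ∫⁻ z, b x z * ∫⁻ y, ∫⁻ z', b y z' * energyDensity n p u z z' ∂μ ∂μ ∂μ := by
        rw [lintegral_const_mul' _ _ (by finiteness),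
          lintegral_lintegral_averagingKernel_mul_swap hA hδc hF]
    _ ≤ ENNReal.ofReal (5 * c₀ + 1) ^ (2 * n) * ∫⁻ z, B * (b x z * pointEnergy n p μ u z) ∂μ := by
        gcongr ENNReal.ofReal _ ^ _ * ?_
        refine lintegral_mono fun z ↦ ?_
        rw [mul_left_comm]
        gcongr b x z * ?_
        refine (lintegral_lintegral_averagingKernel_mul_le hA hδc hB hf.of_uncurry_left).trans ?_
        gcongr
        exact setLIntegral_le_lintegral _ _
    _ = _ := by rw [lintegral_const_mul' _ _ hB_ne_top, mul_assoc]

theorem IsLocalAverage.pointEnergy_le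
    (hw : IsLocalAverage n p μ A δ c₀ C₃ u w) (hc₀ : 0 < c₀) (hδ : LipschitzWith 1 δ)
    (hA : MeasurableSet A) (hu : Continuous u)
    (hC₁ : ∀ (x : X) (r : ℝ), 0 < r → ∫⁻ y in Metric.ball x r, edist x y ^ p * rieszKernel n x y ∂μ
      ≤ C₁ * ENNReal.ofReal r ^ (p - n)) {B : ℝ≥0∞} (hB_ne_top : B ≠ ⊤)
    (hB : ∀ z, ∫⁻ x, averagingKernel n A δ c₀ x z ∂μ ≤ B) (hx : 0 < δ x) :
    pointEnergy n p μ w x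
      ≤ (C₃ * C₁ * (ENNReal.ofReal c₀ * ENNReal.ofReal (2 * c₀) ^ (2 * n)) +
          ENNReal.ofReal (c₀ + 1) ^ (2 * n) + ENNReal.ofReal (5 * c₀ + 1) ^ (2 * n) * B) *
        ∫⁻ z, averagingKernel n A δ c₀ x z * pointEnergy n p μ u z ∂μ := by
  have hcover : Set.univ ⊆ {y | 2 * dist x y < δ x} ∪ {y | δ y ≤ 0} ∪
      {y | 0 < δ y ∧ δ x ≤ 2 * dist x y} := fun y _ ↦ by
    rcases lt_or_ge (2 * dist x y) (δ x) with h | h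
    · exact Or.inl (Or.inl h)
    · exact (le_or_gt (δ y) 0).imp Or.inr fun hy ↦ ⟨hy, h⟩
  rw [pointEnergy, ← setLIntegral_univ, add_mul, add_mul]
  refine (lintegral_mono_set hcover).trans ((lintegral_union_le _ _ _).trans (add_le_add
    ((lintegral_union_le _ _ _).trans (add_le_add ?_ ?_)) ?_))
  · exact hw.setLIntegral_near_le hc₀ hC₁ hx
  · exact hw.setLIntegral_nonpos_le hc₀ hδ hA hu hx
  · exact hw.setLIntegral_far_le hc₀ hδ hA hu hB_ne_top hB hx

theorem IsAhlforsRegular.exists_localEnergy_le (hμ : IsAhlforsRegular μ n c C) (hp : (n : ℝ) < p)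
    (hc₀ : 1 ≤ c₀) (hC₃ : C₃ ≠ ⊤) :
    ∃ C₂ : ℝ≥0∞, C₂ ≠ ⊤ ∧ ∀ {δ : X → ℝ} {A : Set X} {u w : X → V}, LipschitzWith 1 δ →
      MeasurableSet A → Continuous u → IsLocalAverage n p μ A δ c₀ C₃ u w →
        localEnergy n p μ w {x | 0 < δ x} ≤ C₂ * localEnergy n p μ u A := by
  obtain ⟨C₁, hC₁, hball⟩ := hμ.exists_setLIntegral_ball_le hp
  have hc₀_pos : 0 < c₀ := by linarith
  set B := ENNReal.ofReal c₀ * C * ENNReal.ofReal (2 * c₀ ^ 2 * (1 + c₀)) ^ n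
  have hB_ne_top : B ≠ ⊤ := by
    have := hμ.upper_ne_top
    finiteness
  set K := C₃ * C₁ * (ENNReal.ofReal c₀ * ENNReal.ofReal (2 * c₀) ^ (2 * n)) +
    ENNReal.ofReal (c₀ + 1) ^ (2 * n) + ENNReal.ofReal (5 * c₀ + 1) ^ (2 * n) * B
  have hK : K ≠ ⊤ := by finiteness
  refine ⟨K * B, by finiteness, fun {δ A u w} hδ hA hu hw ↦ ?_⟩
  have hB (z : X) : ∫⁻ x, averagingKernel n A δ c₀ x z ∂μ ≤ B :=
    hμ.lintegral_averagingKernel_left_le hc₀ hδ z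
  have hmeas : MeasurableSet {x | 0 < δ x} :=
    (isOpen_lt continuous_const hδ.continuous).measurableSet
  calc localEnergy n p μ w {x | 0 < δ x}
      ≤ ∫⁻ x, K * ∫⁻ z, averagingKernel n A δ c₀ x z * pointEnergy n p μ u z ∂μ ∂μ :=
        (setLIntegral_mono' hmeas fun x hx ↦
          hw.pointEnergy_le hc₀_pos hδ hA hu hball hB_ne_top hB hx).trans
          (setLIntegral_le_lintegral _ _)
    _ ≤ K * (B * localEnergy n p μ u A) := by
        rw [lintegral_const_mul' _ _ hK]
        gcongr
        exact lintegral_lintegral_averagingKernel_mul_le hA hδ.continuous hB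
          (measurable_pointEnergy n p μ hu)
    _ = K * B * localEnergy n p μ u A := (mul_assoc _ _ _).symm

end LocalAverage

/-! ### Weighted averages -/

section WeightedAverage

variable {X : Type*} [MeasurableSpace X] {V : Type*} [NormedAddCommGroup V] [NormedSpace ℝ V]

/-- `k` is the density of a probability measure with respect to `μ`. -/
structure IsProbabilityWeight (μ : Measure X) (k : X → ℝ) : Prop where
  measurable : Measurable k
  nonneg (z : X) : 0 ≤ k z
  integrable : Integrable k μ
  integral_eq_one : ∫ z, k z ∂μ = 1

/-- The average of `u` with the weight `k`. -/
def weightedAverage (μ : Measure X) (k : X → ℝ) (u : X → V) : V := ∫ z, k z • u z ∂μ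

variable {μ : Measure X} {k k' : X → ℝ} {u : X → V} {M p : ℝ} {b : X → ℝ≥0∞}

theorem IsProbabilityWeight.lintegral_ofReal (hk : IsProbabilityWeight μ k) :
    ∫⁻ z, ENNReal.ofReal (k z) ∂μ = 1 := by
  rw [← ofReal_integral_eq_lintegral_ofReal hk.integrable (.of_forall hk.nonneg),
    hk.integral_eq_one, ENNReal.ofReal_one]

theorem IsProbabilityWeight.integrable_smul (hk : IsProbabilityWeight μ k)
    (hu : StronglyMeasurable u) (hM : ∀ z, ‖u z‖ ≤ M) : Integrable (fun z ↦ k z • u z) μ :=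
  hk.integrable.smul_bdd M hu.aestronglyMeasurable (.of_forall hM)

variable [CompleteSpace V]

theorem IsProbabilityWeight.weightedAverage_sub (hk : IsProbabilityWeight μ k)
    (hu : StronglyMeasurable u) (hM : ∀ z, ‖u z‖ ≤ M) (a : V) :
    weightedAverage μ k u - a = ∫ z, k z • (u z - a) ∂μ := by
  simp only [smul_sub]
  rw [integral_sub (hk.integrable_smul hu hM) (hk.integrable.smul_const a), integral_smul_const,
    hk.integral_eq_one, one_smul, weightedAverage]

theorem IsProbabilityWeight.enorm_weightedAverage_sub_le (hk : IsProbabilityWeight μ k)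
    (hu : StronglyMeasurable u) (hM : ∀ z, ‖u z‖ ≤ M) (a : V) :
    ‖weightedAverage μ k u - a‖ₑ ≤ ∫⁻ z, ENNReal.ofReal (k z) * ‖u z - a‖ₑ ∂μ := by
  rw [hk.weightedAverage_sub hu hM a]
  refine (enorm_integral_le_lintegral_enorm _).trans_eq (lintegral_congr fun z ↦ ?_)
  rw [enorm_smul, Real.enorm_eq_ofReal (hk.nonneg z)]

theorem IsProbabilityWeight.norm_weightedAverage_sub_le (hk : IsProbabilityWeight μ k)
    (hu : StronglyMeasurable u) (hM : ∀ z, ‖u z‖ ≤ M) {a : V} {ε : ℝ} (hε : 0 ≤ ε)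
    (ha : ∀ z, k z ≠ 0 → ‖u z - a‖ ≤ ε) : ‖weightedAverage μ k u - a‖ ≤ ε := by
  rw [← ENNReal.ofReal_le_ofReal_iff hε, ofReal_norm]
  calc ‖weightedAverage μ k u - a‖ₑ
      ≤ ∫⁻ z, ENNReal.ofReal (k z) * ‖u z - a‖ₑ ∂μ := hk.enorm_weightedAverage_sub_le hu hM a
    _ ≤ ∫⁻ z, ENNReal.ofReal (k z) * ENNReal.ofReal ε ∂μ := by
        refine lintegral_mono fun z ↦ ?_
        by_cases hz : k z = 0
        · simp [hz]
        · rw [← ofReal_norm]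
          gcongr
          exact ha z hz
    _ = ENNReal.ofReal ε := by
        rw [lintegral_mul_const _ hk.measurable.ennreal_ofReal, hk.lintegral_ofReal, one_mul]

theorem IsProbabilityWeight.enorm_weightedAverage_sub_rpow_le (hk : IsProbabilityWeight μ k)
    (hu : StronglyMeasurable u) (hM : ∀ z, ‖u z‖ ≤ M) (hp : 1 < p) (a : V)
    (hkb : ∀ z, ENNReal.ofReal (k z) ≤ b z) :
    ‖weightedAverage μ k u - a‖ₑ ^ p ≤ ∫⁻ z, b z * ‖u z - a‖ₑ ^ p ∂μ := by
  have hua : Measurable fun z ↦ ‖u z - a‖ₑ := (hu.sub stronglyMeasurable_const).enorm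
  calc ‖weightedAverage μ k u - a‖ₑ ^ p
      ≤ (∫⁻ z, ENNReal.ofReal (k z) * ‖u z - a‖ₑ ∂μ) ^ p := by
        gcongr
        exact hk.enorm_weightedAverage_sub_le hu hM a
    _ ≤ (∫⁻ z, ENNReal.ofReal (k z) ∂μ) ^ (p - 1) *
          ∫⁻ z, ENNReal.ofReal (k z) * ‖u z - a‖ₑ ^ p ∂μ :=
        lintegral_mul_rpow_le μ hp hk.measurable.ennreal_ofReal hua
    _ ≤ ∫⁻ z, b z * ‖u z - a‖ₑ ^ p ∂μ := by
        rw [hk.lintegral_ofReal, ENNReal.one_rpow, one_mul]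
        gcongr with z
        exact hkb z

theorem IsProbabilityWeight.enorm_weightedAverage_sub_weightedAverage_le
    (hk : IsProbabilityWeight μ k) (hk' : IsProbabilityWeight μ k') (hu : StronglyMeasurable u)
    (hM : ∀ z, ‖u z‖ ≤ M) (a : V) :
    ‖weightedAverage μ k u - weightedAverage μ k' u‖ₑ
      ≤ ∫⁻ z, ‖k z - k' z‖ₑ * ‖u z - a‖ₑ ∂μ := by
  have hint {κ : X → ℝ} (hκ : IsProbabilityWeight μ κ) :
      Integrable (fun z ↦ κ z • (u z - a)) μ := by
    simp only [smul_sub]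
    exact (hκ.integrable_smul hu hM).sub (hκ.integrable.smul_const a)
  rw [← sub_sub_sub_cancel_right _ _ a, hk.weightedAverage_sub hu hM,
    hk'.weightedAverage_sub hu hM, ← integral_sub (hint hk) (hint hk')]
  refine (enorm_integral_le_lintegral_enorm _).trans_eq (lintegral_congr fun z ↦ ?_)
  rw [← sub_smul, enorm_smul]

theorem IsProbabilityWeight.enorm_weightedAverage_sub_weightedAverage_rpow_le
    (hk : IsProbabilityWeight μ k) (hk' : IsProbabilityWeight μ k') (hu : StronglyMeasurable u)
    (hM : ∀ z, ‖u z‖ ≤ M) (hp : 1 < p) {L : ℝ≥0∞} (hb : Measurable b)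
    (hkb : ∀ z, ‖k z - k' z‖ₑ ≤ L * b z) (a : V) :
    ‖weightedAverage μ k u - weightedAverage μ k' u‖ₑ ^ p
      ≤ L ^ p * ((∫⁻ z, b z ∂μ) ^ (p - 1) * ∫⁻ z, b z * ‖u z - a‖ₑ ^ p ∂μ) := by
  have hua : Measurable fun z ↦ ‖u z - a‖ₑ := (hu.sub stronglyMeasurable_const).enorm
  have hbu : Measurable fun z ↦ b z * ‖u z - a‖ₑ := hb.mul hua
  calc ‖weightedAverage μ k u - weightedAverage μ k' u‖ₑ ^ p
      ≤ (∫⁻ z, L * (b z * ‖u z - a‖ₑ) ∂μ) ^ p := by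
        gcongr
        refine (hk.enorm_weightedAverage_sub_weightedAverage_le hk' hu hM a).trans
          (lintegral_mono fun z ↦ ?_)
        rw [← mul_assoc]
        gcongr
        exact hkb z
    _ = L ^ p * (∫⁻ z, b z * ‖u z - a‖ₑ ∂μ) ^ p := by
        rw [lintegral_const_mul _ hbu, ENNReal.mul_rpow_of_nonneg _ _ (by linarith)]
    _ ≤ _ := by
        gcongr
        exact lintegral_mul_rpow_le μ hp hb hua

theorem IsProbabilityWeight.enorm_one_sub_norm_weightedAverage_rpow_le
    (hk : IsProbabilityWeight μ k) (hu : StronglyMeasurable u) (hu1 : ∀ z, ‖u z‖ = 1) (hp : 1 < p)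
    (hkb : ∀ z, ENNReal.ofReal (k z) ≤ b z) :
    ‖1 - ‖weightedAverage μ k u‖‖ₑ ^ p ≤ ∫⁻ z, b z * ∫⁻ z', b z' * ‖u z' - u z‖ₑ ^ p ∂μ ∂μ := by
  calc ‖1 - ‖weightedAverage μ k u‖‖ₑ ^ p
      = ∫⁻ z, ENNReal.ofReal (k z) * ‖1 - ‖weightedAverage μ k u‖‖ₑ ^ p ∂μ := by
        rw [lintegral_mul_const _ hk.measurable.ennreal_ofReal, hk.lintegral_ofReal, one_mul]
    _ ≤ ∫⁻ z, b z * ‖weightedAverage μ k u - u z‖ₑ ^ p ∂μ := by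
        gcongr with z
        · exact hkb z
        · rw [enorm_le_iff_norm_le, norm_sub_rev _ (u z), Real.norm_eq_abs, ← hu1 z]
          exact abs_norm_sub_norm_le _ _
    _ ≤ _ := by
        gcongr with z
        exact hk.enorm_weightedAverage_sub_rpow_le hu (fun z ↦ (hu1 z).le) hp (u z) hkb

end WeightedAverage

section AverageAtScale

variable {X : Type*} [MeasurableSpace X] {V : Type*} [NormedAddCommGroup V] [NormedSpace ℝ V]

/-- The map obtained from `u` by averaging with the weights `k x` around the points where `δ` is
positive. -/
def averageAtScale (μ : Measure X) (δ : X → ℝ) (k : X → X → ℝ) (u : X → V) (x : X) : V :=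
  if 0 < δ x then weightedAverage μ (k x) u else u x

variable {μ : Measure X} {δ : X → ℝ} {k : X → X → ℝ} {u : X → V} {x : X}

theorem averageAtScale_of_pos (hx : 0 < δ x) :
    averageAtScale μ δ k u x = weightedAverage μ (k x) u :=
  if_pos hx

theorem averageAtScale_of_nonpos (hx : δ x ≤ 0) : averageAtScale μ δ k u x = u x :=
  if_neg hx.not_gt

end AverageAtScale

section ScaleWeight

variable {X : Type*} [MetricSpace X] [MeasurableSpace X]

/-- The weights `k x` of an average at the scale `δ`: they are dominated by the averaging kernel and
depend in a Lipschitz way on the point `x`, relative to the scale `δ x`. -/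
structure IsScaleWeight (n : ℕ) (μ : Measure X) (A : Set X) (δ : X → ℝ) (c₀ : ℝ) (C₄ : ℝ≥0∞)
    (k : X → X → ℝ) : Prop where
  isProbabilityWeight {x : X} : 0 < δ x → IsProbabilityWeight μ (k x)
  ofReal_le {x : X} (z : X) : 0 < δ x → ENNReal.ofReal (k x z) ≤ averagingKernel n A δ c₀ x z
  enorm_sub_le {x y : X} (z : X) : 0 < δ x → 2 * dist x y < δ x →
    ‖k x z - k y z‖ₑ ≤ C₄ * (edist x y * (ENNReal.ofReal (δ x))⁻¹) * averagingKernel n A δ c₀ x z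

variable {V : Type*} [NormedAddCommGroup V] [NormedSpace ℝ V]
  {n : ℕ} {μ : Measure X} {A : Set X} {δ : X → ℝ} {c₀ : ℝ} {C₄ : ℝ≥0∞} {k : X → X → ℝ}
  {u : X → V} {M p : ℝ} {x y : X}

theorem IsScaleWeight.isAdmissible_of_ne_zero (hk : IsScaleWeight n μ A δ c₀ C₄ k)
    {z : X} (hx : 0 < δ x) (hz : k x z ≠ 0) : IsAdmissible A δ c₀ x z := by
  refine isAdmissible_of_averagingKernel_ne_zero (n := n) fun h ↦ hz ?_
  have hle := hk.ofReal_le z hx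
  rw [h, nonpos_iff_eq_zero, ENNReal.ofReal_eq_zero] at hle
  exact hle.antisymm ((hk.isProbabilityWeight hx).nonneg z)

variable [BorelSpace X] [SecondCountableTopology X] [CompleteSpace V]

theorem IsScaleWeight.isLocalAverage (hk : IsScaleWeight n μ A δ c₀ C₄ k) (hp : 1 < p)
    (hδ : LipschitzWith 1 δ) (hA : MeasurableSet A) {B : ℝ≥0∞}
    (hB : ∀ x, ∫⁻ z, averagingKernel n A δ c₀ x z ∂μ ≤ B) (hu : Continuous u)
    (hM : ∀ z, ‖u z‖ ≤ M) :
    IsLocalAverage n p μ A δ c₀ (C₄ ^ p * B ^ (p - 1)) u (averageAtScale μ δ k u) where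
  eq_of_nonpos := averageAtScale_of_nonpos
  enorm_sub_rpow_le a hx := by
    rw [averageAtScale_of_pos hx]
    exact (hk.isProbabilityWeight hx).enorm_weightedAverage_sub_rpow_le hu.stronglyMeasurable hM hp
      a fun z ↦ hk.ofReal_le z hx
  enorm_sub_rpow_le_of_near {x y} hx hxy := by
    have hy := pos_of_two_mul_dist_lt hδ hxy
    have hkx := hk.isProbabilityWeight hx
    have hp0 : 0 ≤ p := by linarith
    have : 0 ≤ p - 1 := by linarith
    set b := averagingKernel n A δ c₀ x
    rw [averageAtScale_of_pos hx, averageAtScale_of_pos hy]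
    calc ‖weightedAverage μ (k x) u - weightedAverage μ (k y) u‖ₑ ^ p
        ≤ (C₄ * (edist x y * (ENNReal.ofReal (δ x))⁻¹)) ^ p *
            ((∫⁻ z, b z ∂μ) ^ (p - 1) * ∫⁻ z, b z * ‖u z - weightedAverage μ (k x) u‖ₑ ^ p ∂μ) :=
          hkx.enorm_weightedAverage_sub_weightedAverage_rpow_le (hk.isProbabilityWeight hy)
            hu.stronglyMeasurable hM hp
            (measurable_averagingKernel n c₀ hA hδ.continuous).of_uncurry_left
            (fun z ↦ hk.enorm_sub_le z hx hxy) _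
      _ ≤ (C₄ * (edist x y * (ENNReal.ofReal (δ x))⁻¹)) ^ p *
            (B ^ (p - 1) * localOscillation n p μ A δ c₀ u x) := by
          rw [localOscillation]
          gcongr with z
          · exact hB x
          · rw [enorm_sub_rev]
            exact hkx.enorm_weightedAverage_sub_rpow_le hu.stronglyMeasurable hM hp (u z)
              fun z ↦ hk.ofReal_le z hx
      _ = _ := by
          rw [ENNReal.mul_rpow_of_nonneg _ _ hp0, ENNReal.mul_rpow_of_nonneg _ _ hp0]
          ring

theorem IsScaleWeight.edist_averageAtScale_le (hk : IsScaleWeight n μ A δ c₀ C₄ k)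
    (hδ : LipschitzWith 1 δ) (hA : MeasurableSet A) {B : ℝ≥0∞}
    (hB : ∀ x, ∫⁻ z, averagingKernel n A δ c₀ x z ∂μ ≤ B) (hu : Continuous u)
    (hM : ∀ z, ‖u z‖ ≤ M) (hx : 0 < δ x) (hxy : 2 * dist x y < δ x) :
    edist (averageAtScale μ δ k u x) (averageAtScale μ δ k u y)
      ≤ C₄ * (ENNReal.ofReal (δ x))⁻¹ * B * ENNReal.ofReal M * edist x y := by
  have hy := pos_of_two_mul_dist_lt hδ hxy
  set L := C₄ * (edist x y * (ENNReal.ofReal (δ x))⁻¹) with hL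
  rw [averageAtScale_of_pos hx, averageAtScale_of_pos hy, edist_eq_enorm_sub]
  calc ‖weightedAverage μ (k x) u - weightedAverage μ (k y) u‖ₑ
      ≤ ∫⁻ z, ‖k x z - k y z‖ₑ * ‖u z - 0‖ₑ ∂μ :=
        (hk.isProbabilityWeight hx).enorm_weightedAverage_sub_weightedAverage_le
          (hk.isProbabilityWeight hy) hu.stronglyMeasurable hM 0
    _ ≤ ∫⁻ z, L * averagingKernel n A δ c₀ x z * ENNReal.ofReal M ∂μ := by
        gcongr with z
        · exact hk.enorm_sub_le z hx hxy
        · rw [sub_zero, ← ofReal_norm]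
          exact ENNReal.ofReal_le_ofReal (hM z)
    _ ≤ L * B * ENNReal.ofReal M := by
        have hb := (measurable_averagingKernel n c₀ hA hδ.continuous).of_uncurry_left (x := x)
        rw [lintegral_mul_const _ (hb.const_mul L), lintegral_const_mul _ hb]
        gcongr
        exact hB x
    _ = C₄ * (ENNReal.ofReal (δ x))⁻¹ * B * ENNReal.ofReal M * edist x y := by
        rw [hL]
        ring

theorem IsScaleWeight.continuousAt_averageAtScale_of_pos (hk : IsScaleWeight n μ A δ c₀ C₄ k)
    (hC₄ : C₄ ≠ ⊤) (hδ : LipschitzWith 1 δ) (hA : MeasurableSet A) {B : ℝ≥0∞} (hB_ne_top : B ≠ ⊤)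
    (hB : ∀ x, ∫⁻ z, averagingKernel n A δ c₀ x z ∂μ ≤ B) (hu : Continuous u)
    (hM : ∀ z, ‖u z‖ ≤ M) (hx : 0 < δ x) : ContinuousAt (averageAtScale μ δ k u) x := by
  rw [ContinuousAt, tendsto_iff_edist_tendsto_0]
  set K := C₄ * (ENNReal.ofReal (δ x))⁻¹ * B * ENNReal.ofReal M
  have hK : K ≠ ⊤ := by
    have : (ENNReal.ofReal (δ x))⁻¹ ≠ ⊤ := by simpa using hx
    finiteness
  have hlim : Filter.Tendsto (fun y ↦ K * edist x y) (nhds x) (nhds 0) := by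
    have hdist : Filter.Tendsto (fun y ↦ edist x y) (nhds x) (nhds 0) := by
      have hcont : Continuous fun y ↦ edist x y := continuous_const.edist continuous_id
      simpa only [edist_self] using hcont.tendsto x
    simpa using ENNReal.Tendsto.const_mul hdist (Or.inr hK)
  refine tendsto_of_tendsto_of_tendsto_of_le_of_le' tendsto_const_nhds hlim
    (.of_forall fun _ ↦ zero_le) ?_
  filter_upwards [Metric.ball_mem_nhds x (half_pos hx)] with y hy
  rw [edist_comm]
  rw [Metric.mem_ball'] at hy
  exact hk.edist_averageAtScale_le hδ hA hB hu hM hx (by linarith)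

theorem IsScaleWeight.continuousAt_averageAtScale_of_nonpos
    (hk : IsScaleWeight n μ A δ c₀ C₄ k) (hc₀ : 0 ≤ c₀) (hδ : LipschitzWith 1 δ)
    (hu : Continuous u) (hM : ∀ z, ‖u z‖ ≤ M) (hx : δ x ≤ 0) :
    ContinuousAt (averageAtScale μ δ k u) x := by
  rw [Metric.continuousAt_iff]
  intro ε hε
  obtain ⟨η, hη, h⟩ := Metric.continuousAt_iff.1 (hu.continuousAt (x := x)) (ε / 2) (half_pos hε)
  have hnear (z : X) (hz : dist z x < η) : ‖u z - u x‖ ≤ ε / 2 := by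
    rw [← dist_eq_norm]
    exact (h hz).le
  refine ⟨η / (1 + c₀), by positivity, fun {y} hy ↦ ?_⟩
  rw [lt_div_iff₀ (by positivity), mul_add, mul_one] at hy
  suffices ‖averageAtScale μ δ k u y - u x‖ ≤ ε / 2 by
    rw [averageAtScale_of_nonpos hx, dist_eq_norm]
    linarith
  rcases le_or_gt (δ y) 0 with hy0 | hy0
  · rw [averageAtScale_of_nonpos hy0]
    exact hnear y (by linarith [mul_nonneg (dist_nonneg (x := y) (y := x)) hc₀])
  · rw [averageAtScale_of_pos hy0]
    refine (hk.isProbabilityWeight hy0).norm_weightedAverage_sub_le hu.stronglyMeasurable hM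
      (half_pos hε).le fun z hz ↦ hnear z ?_
    have hscale : c₀ * δ y ≤ c₀ * dist y x := by
      gcongr
      linarith [le_add_dist_of_lipschitzWith_one hδ y x]
    linarith [dist_triangle_left z x y, (hk.isAdmissible_of_ne_zero hy0 hz).dist_le]

variable {c C : ℝ≥0∞}

theorem IsScaleWeight.continuous_averageAtScale (hμ : IsAhlforsRegular μ n c C)
    (hk : IsScaleWeight n μ A δ c₀ C₄ k) (hC₄ : C₄ ≠ ⊤) (hc₀ : 1 ≤ c₀) (hδ : LipschitzWith 1 δ)
    (hA : MeasurableSet A) (hu : Continuous u) (hM : ∀ z, ‖u z‖ ≤ M) :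
    Continuous (averageAtScale μ δ k u) := by
  have := hμ.upper_ne_top
  refine continuous_iff_continuousAt.2 fun x ↦ ?_
  rcases le_or_gt (δ x) 0 with hx | hx
  · exact hk.continuousAt_averageAtScale_of_nonpos (by linarith) hδ hu hM hx
  · exact hk.continuousAt_averageAtScale_of_pos hC₄ hδ hA (by finiteness)
      (hμ.lintegral_averagingKernel_right_le hc₀) hu hM hx

theorem IsAhlforsRegular.exists_localEnergy_averageAtScale_le [SFinite μ]
    (hμ : IsAhlforsRegular μ n c C) (hp : (n : ℝ) < p) (hp1 : 1 < p) (hc₀ : 1 ≤ c₀)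
    (hC₄ : C₄ ≠ ⊤) :
    ∃ C₂ : ℝ≥0∞, C₂ ≠ ⊤ ∧ ∀ {δ : X → ℝ} {A : Set X} {k : X → X → ℝ} {u : X → V} {M : ℝ},
      LipschitzWith 1 δ → MeasurableSet A → IsScaleWeight n μ A δ c₀ C₄ k → Continuous u →
        (∀ z, ‖u z‖ ≤ M) →
        localEnergy n p μ (averageAtScale μ δ k u) {x | 0 < δ x} ≤ C₂ * localEnergy n p μ u A := by
  set B := ENNReal.ofReal c₀ * C * ENNReal.ofReal (2 * c₀) ^ n
  have hC₃ : C₄ ^ p * B ^ (p - 1) ≠ ⊤ := by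
    have := hμ.upper_ne_top
    exact ENNReal.mul_ne_top (ENNReal.rpow_ne_top_of_nonneg (by linarith) hC₄)
      (ENNReal.rpow_ne_top_of_nonneg (by linarith) (by finiteness))
  obtain ⟨C₂, hC₂, h⟩ := hμ.exists_localEnergy_le (V := V) hp hc₀ hC₃
  exact ⟨C₂, hC₂, fun hδ hA hk hu hM ↦ h hδ hA hu
    (hk.isLocalAverage hp1 hδ hA (hμ.lintegral_averagingKernel_right_le hc₀) hu hM)⟩

theorem IsScaleWeight.enorm_one_sub_norm_averageAtScale_rpow_le
    (hk : IsScaleWeight n μ A δ c₀ C₄ k) (hp : 1 < p) (hc₀ : 0 < c₀) {S : Set X}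
    (hS : MeasurableSet S) (hxS : ∀ z, IsAdmissible A δ c₀ x z → z ∈ S) (hu : Continuous u)
    (hu1 : ∀ z, ‖u z‖ = 1) (hx : 0 < δ x) :
    ‖1 - ‖averageAtScale μ δ k u x‖‖ₑ ^ p
      ≤ ENNReal.ofReal c₀ ^ 2 * ENNReal.ofReal (2 * c₀) ^ (2 * n) * localEnergy n p μ u S := by
  rw [averageAtScale_of_pos hx]
  exact ((hk.isProbabilityWeight hx).enorm_one_sub_norm_weightedAverage_rpow_le
    hu.stronglyMeasurable hu1 hp fun z ↦ hk.ofReal_le z hx).trans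
    (localOscillation_le_localEnergy hc₀ hS hxS)

end ScaleWeight

section Normalize

open NormedSpace

variable {V : Type*} [NormedAddCommGroup V] [NormedSpace ℝ V]

theorem norm_normalize_le_one (v : V) : ‖normalize v‖ ≤ 1 := by
  by_cases hv : v = 0
  · simp [hv]
  · exact (norm_normalize hv).le

theorem norm_mul_norm_normalize_sub_le (a b : V) :
    ‖a‖ * ‖normalize a - normalize b‖ ≤ 2 * ‖a - b‖ := by
  have hsplit : ‖a‖ • (normalize a - normalize b) = a - b + (‖b‖ - ‖a‖) • normalize b := by
    rw [smul_sub, sub_smul, norm_smul_normalize, norm_smul_normalize]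
    abel
  calc ‖a‖ * ‖normalize a - normalize b‖ = ‖a - b + (‖b‖ - ‖a‖) • normalize b‖ := by
        rw [← hsplit, norm_smul, norm_norm]
    _ ≤ ‖a - b‖ + |‖b‖ - ‖a‖| * ‖normalize b‖ := by
        rw [← Real.norm_eq_abs, ← norm_smul]
        exact norm_add_le _ _
    _ ≤ ‖a - b‖ + ‖a - b‖ * 1 := by
        gcongr
        · rw [norm_sub_rev a b]
          exact abs_norm_sub_norm_le b a
        · exact norm_normalize_le_one b
    _ = 2 * ‖a - b‖ := by ring

theorem norm_normalize_sub_le {a : V} (ha : 1 / 2 ≤ ‖a‖) (b : V) :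
    ‖normalize a - normalize b‖ ≤ 4 * ‖a - b‖ := by
  have := norm_mul_norm_normalize_sub_le a b
  have : 1 / 2 * ‖normalize a - normalize b‖ ≤ ‖a‖ * ‖normalize a - normalize b‖ := by gcongr
  linarith

theorem continuous_normalize_comp {Y : Type*} [TopologicalSpace Y] {w : Y → V} (hw : Continuous w)
    (h : ∀ y, w y ≠ 0) : Continuous fun y ↦ normalize (w y) :=
  (hw.norm.inv₀ fun y ↦ norm_ne_zero_iff.2 (h y)).smul hw

variable {X : Type*} [MetricSpace X]

theorem energyDensity_normalize_le {n : ℕ} {p : ℝ} (hp : 0 ≤ p) {w : X → V}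
    {x : X} (hx : 1 / 2 ≤ ‖w x‖) (y : X) :
    energyDensity n p (fun x ↦ normalize (w x)) x y ≤ 4 ^ p * energyDensity n p w x y := by
  rw [energyDensity, energyDensity, ← mul_assoc, ← ENNReal.mul_rpow_of_nonneg _ _ hp]
  gcongr
  rw [← ofReal_norm, ← ofReal_norm, ← ENNReal.ofReal_ofNat 4, ← ENNReal.ofReal_mul (by norm_num)]
  exact ENNReal.ofReal_le_ofReal (norm_normalize_sub_le hx _)

theorem localEnergy_normalize_le [MeasurableSpace X] {μ : Measure X} {n : ℕ} {p : ℝ} (hp : 0 ≤ p)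
    {w : X → V} (hw : ∀ x, 1 / 2 ≤ ‖w x‖) (S : Set X) :
    localEnergy n p μ (fun x ↦ normalize (w x)) S ≤ 4 ^ p * localEnergy n p μ w S := by
  have hfour : (4 : ℝ≥0∞) ^ p ≠ ⊤ := ENNReal.rpow_ne_top_of_nonneg hp (by simp)
  rw [localEnergy, localEnergy, ← lintegral_const_mul' _ _ hfour]
  refine lintegral_mono fun x ↦ ?_
  rw [pointEnergy, pointEnergy, ← lintegral_const_mul' _ _ hfour]
  exact lintegral_mono fun y ↦ energyDensity_normalize_le hp (hw x) y

end Normalize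

/-! ### Bump functions as averaging weights -/

section Bump

variable {X : Type*} [MetricSpace X] [MeasurableSpace X]

/-- The functions `q x` are bumps of height `δ x ^ s` around `x` at the scale `δ x`, before
normalization of their masses. -/
structure IsBump (n : ℕ) (μ : Measure X) (A : Set X) (δ : X → ℝ) (c₀ K m : ℝ) (s : ℕ)
    (q : X → X → ℝ) : Prop where
  measurable {x : X} : 0 < δ x → Measurable (q x)
  integrable {x : X} : 0 < δ x → Integrable (q x) μ
  nonneg (x z : X) : 0 ≤ q x z
  le_mul_pow {x : X} (z : X) : 0 < δ x → q x z ≤ K * δ x ^ s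
  abs_sub_le {x y : X} (z : X) : 0 < δ x → 2 * dist x y < δ x →
    |q x z - q y z| ≤ K * δ x ^ s * (dist x y / δ x)
  isAdmissible {x y z : X} : 0 < δ x → 2 * dist x y < δ x → q y z ≠ 0 → IsAdmissible A δ c₀ x z
  mul_pow_le_integral {x : X} : 0 < δ x → m * δ x ^ (n + s) ≤ ∫ z, q x z ∂μ

/-- The multiple of `q x` with integral one. -/
def normalizedWeight (μ : Measure X) (q : X → X → ℝ) (x z : X) : ℝ := q x z / ∫ z, q x z ∂μ

variable {n : ℕ} {μ : Measure X} {A : Set X} {δ : X → ℝ} {c₀ c₁ K m : ℝ} {s : ℕ} {q : X → X → ℝ}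
  {c C : ℝ≥0∞} {x y : X}

theorem IsBump.isAdmissible_self (hq : IsBump n μ A δ c₀ K m s q) {z : X} (hx : 0 < δ x)
    (hz : q x z ≠ 0) : IsAdmissible A δ c₀ x z :=
  hq.isAdmissible hx (by simpa using hx) hz

theorem IsBump.integral_pos (hq : IsBump n μ A δ c₀ K m s q) (hm : 0 < m) (hx : 0 < δ x) :
    0 < ∫ z, q x z ∂μ :=
  (by positivity : 0 < m * δ x ^ (n + s)).trans_le (hq.mul_pow_le_integral hx)

theorem IsBump.isProbabilityWeight (hq : IsBump n μ A δ c₀ K m s q) (hm : 0 < m) (hx : 0 < δ x) :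
    IsProbabilityWeight μ (normalizedWeight μ q x) where
  measurable := (hq.measurable hx).div_const _
  nonneg z := div_nonneg (hq.nonneg x z) (hq.integral_pos hm hx).le
  integrable := (hq.integrable hx).div_const _
  integral_eq_one := (integral_div _ _).trans (div_self (hq.integral_pos hm hx).ne')

theorem IsBump.normalizedWeight_le (hq : IsBump n μ A δ c₀ K m s q) (hm : 0 < m) (hx : 0 < δ x)
    (z : X) : normalizedWeight μ q x z ≤ K / m * (δ x)⁻¹ ^ n := by
  have hmass := hq.mul_pow_le_integral hx
  have hle := hq.le_mul_pow z hx
  have hK : 0 ≤ K * δ x ^ s := (hq.nonneg x z).trans hle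
  calc q x z / ∫ z, q x z ∂μ ≤ K * δ x ^ s / (m * δ x ^ (n + s)) := by gcongr
    _ = K / m * (δ x)⁻¹ ^ n := by rw [inv_pow, pow_add]; field_simp

theorem IsBump.normalizedWeight_le_of_near (hq : IsBump n μ A δ c₀ K m s q)
    (hδ : LipschitzWith 1 δ) (hm : 0 < m) (hx : 0 < δ x) (hxy : 2 * dist x y < δ x) (z : X) :
    normalizedWeight μ q y z ≤ 2 ^ n * (K / m) * (δ x)⁻¹ ^ n := by
  have hhalf : δ x / 2 ≤ δ y := by linarith [le_add_dist_of_lipschitzWith_one hδ x y]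
  have hK : 0 ≤ K :=
    nonneg_of_mul_nonneg_left ((hq.nonneg x z).trans (hq.le_mul_pow z hx)) (pow_pos hx s)
  have hy := pos_of_two_mul_dist_lt hδ hxy
  calc normalizedWeight μ q y z ≤ K / m * (δ y)⁻¹ ^ n := hq.normalizedWeight_le hm hy z
    _ ≤ K / m * (δ x / 2)⁻¹ ^ n := by gcongr
    _ = 2 ^ n * (K / m) * (δ x)⁻¹ ^ n := by
        rw [inv_div, div_eq_mul_inv 2, mul_pow]
        ring

theorem IsAhlforsRegular.measureReal_ball_le (hμ : IsAhlforsRegular μ n c C) (x : X) {r : ℝ}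
    (hr : 0 < r) : μ.real (Metric.ball x r) ≤ C.toReal * r ^ n := by
  have := hμ.upper_ne_top
  have h := ENNReal.toReal_mono (by finiteness) (hμ.measure_ball_le x r hr)
  rwa [ENNReal.toReal_mul, ENNReal.toReal_pow, ENNReal.toReal_ofReal hr.le] at h

theorem IsAhlforsRegular.le_measureReal_ball [IsFiniteMeasure μ] (hμ : IsAhlforsRegular μ n c C)
    (x : X) {r : ℝ} (hr : 0 < r) (hr1 : r ≤ 1) : c.toReal * r ^ n ≤ μ.real (Metric.ball x r) := by
  have h := ENNReal.toReal_mono (measure_ne_top μ _) (hμ.le_measure_ball x r hr hr1)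
  rwa [ENNReal.toReal_mul, ENNReal.toReal_pow, ENNReal.toReal_ofReal hr.le] at h

theorem IsBump.abs_integral_sub_le (hq : IsBump n μ A δ c₀ K m s q) (hμ : IsAhlforsRegular μ n c C)
    (hδ : LipschitzWith 1 δ) (hc₀ : 0 < c₀) (hx : 0 < δ x) (hxy : 2 * dist x y < δ x) :
    |∫ z, q x z ∂μ - ∫ z, q y z ∂μ|
      ≤ K * (C.toReal * (2 * c₀) ^ n) * δ x ^ (n + s) * (dist x y / δ x) := by
  set B := Metric.ball x (2 * c₀ * δ x)
  set D := K * δ x ^ s * (dist x y / δ x)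
  have hD : 0 ≤ D := (abs_nonneg _).trans (hq.abs_sub_le x hx hxy)
  have hBreal := hμ.measureReal_ball_le x (by positivity : 0 < 2 * c₀ * δ x)
  have hBfin : μ B ≠ ⊤ := by
    have := hμ.upper_ne_top
    exact ne_top_of_le_ne_top (by finiteness) (hμ.measure_ball_le x _ (by positivity))
  have hsupp (z : X) (hz : z ∉ B) : q x z - q y z = 0 := by
    have hnot : ¬IsAdmissible A δ c₀ x z := fun h ↦ hz <| by
      rw [Metric.mem_ball']
      linarith [h.dist_le, mul_pos hc₀ hx]
    rw [not_imp_comm.1 (hq.isAdmissible_self hx) hnot, not_imp_comm.1 (hq.isAdmissible hx hxy) hnot,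
      sub_zero]
  rw [← integral_sub (hq.integrable hx) (hq.integrable (pos_of_two_mul_dist_lt hδ hxy)),
    ← setIntegral_eq_integral_of_forall_compl_eq_zero hsupp, ← Real.norm_eq_abs]
  calc ‖∫ z in B, q x z - q y z ∂μ‖ ≤ D * μ.real B :=
        norm_setIntegral_le_of_norm_le_const hBfin.lt_top fun z _ ↦ hq.abs_sub_le z hx hxy
    _ ≤ D * (C.toReal * (2 * c₀ * δ x) ^ n) := by gcongr
    _ = _ := by
        simp only [D, mul_pow, pow_add]
        ring

theorem IsBump.abs_normalizedWeight_sub_le (hq : IsBump n μ A δ c₀ K m s q)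
    (hμ : IsAhlforsRegular μ n c C) (hδ : LipschitzWith 1 δ) (hc₀ : 0 < c₀) (hm : 0 < m)
    (hx : 0 < δ x) (hxy : 2 * dist x y < δ x) (z : X) :
    |normalizedWeight μ q x z - normalizedWeight μ q y z|
      ≤ K / m * (1 + 2 ^ n * (K / m) * (C.toReal * (2 * c₀) ^ n)) * (dist x y * (δ x)⁻¹) *
        (δ x)⁻¹ ^ n := by
  have hy := pos_of_two_mul_dist_lt hδ hxy
  have hmass := hq.mul_pow_le_integral hx
  have hdiff := hq.abs_sub_le z hx hxy
  have hdiff_mass := hq.abs_integral_sub_le hμ hδ hc₀ hx hxy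
  have hwy := hq.normalizedWeight_le_of_near hδ hm hx hxy z
  have hwy_nonneg : 0 ≤ normalizedWeight μ q y z := (hq.isProbabilityWeight hm hy).nonneg z
  set I := ∫ z, q x z ∂μ
  set J := ∫ z, q y z ∂μ
  have hI : 0 < I := hq.integral_pos hm hx
  have hJ : 0 < J := hq.integral_pos hm hy
  have hsplit : normalizedWeight μ q x z - normalizedWeight μ q y z =
      (q x z - q y z) / I - normalizedWeight μ q y z * ((I - J) / I) := by
    simp only [normalizedWeight, I, J] at hI hJ ⊢
    field_simp
    ring
  calc |normalizedWeight μ q x z - normalizedWeight μ q y z|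
      ≤ |q x z - q y z| / I + normalizedWeight μ q y z * (|I - J| / I) := by
        rw [hsplit]
        refine (abs_sub _ _).trans_eq ?_
        rw [abs_mul, abs_div, abs_div, abs_of_pos hI, abs_of_nonneg hwy_nonneg]
    _ ≤ K * δ x ^ s * (dist x y / δ x) / (m * δ x ^ (n + s)) +
          2 ^ n * (K / m) * (δ x)⁻¹ ^ n *
            (K * (C.toReal * (2 * c₀) ^ n) * δ x ^ (n + s) * (dist x y / δ x) /
              (m * δ x ^ (n + s))) := by
        have := hwy_nonneg.trans hwy
        have := (abs_nonneg _).trans hdiff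
        have := (abs_nonneg _).trans hdiff_mass
        gcongr
    _ = _ := by
        rw [inv_pow, pow_add]
        field_simp

theorem IsBump.isScaleWeight (hq : IsBump n μ A δ c₀ K m s q) (hμ : IsAhlforsRegular μ n c C)
    (hδ : LipschitzWith 1 δ) (hc₀ : 0 < c₀) (hm : 0 < m) (hc₁ : 1 ≤ c₁) (hc₀₁ : c₀ ≤ c₁)
    (hK : K / m ≤ c₁) :
    IsScaleWeight n μ A δ c₁
      (ENNReal.ofReal (K / m * (1 + 2 ^ n * (K / m) * (C.toReal * (2 * c₀) ^ n))))
      (normalizedWeight μ q) where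
  isProbabilityWeight hx := hq.isProbabilityWeight hm hx
  ofReal_le {x} z hx := by
    by_cases hz : q x z = 0
    · simp [normalizedWeight, hz]
    · exact (ENNReal.ofReal_le_ofReal (hq.normalizedWeight_le hm hx z)).trans
        (((hq.isAdmissible_self hx hz).mono hc₀₁).ofReal_mul_inv_pow_le hK)
  enorm_sub_le {x y} z hx hxy := by
    by_cases hz : IsAdmissible A δ c₀ x z
    · have hle := hq.abs_normalizedWeight_sub_le hμ hδ hc₀ hm hx hxy z
      set L := K / m * (1 + 2 ^ n * (K / m) * (C.toReal * (2 * c₀) ^ n))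
      rw [Real.enorm_eq_ofReal_abs, edist_dist, ← ENNReal.ofReal_inv_of_pos hx,
        ← ENNReal.ofReal_mul dist_nonneg, ← ENNReal.ofReal_mul' (by positivity)]
      calc ENNReal.ofReal |normalizedWeight μ q x z - normalizedWeight μ q y z|
          ≤ ENNReal.ofReal (L * (dist x y * (δ x)⁻¹) * (1 * (δ x)⁻¹ ^ n)) := by
            rw [one_mul]
            exact ENNReal.ofReal_le_ofReal hle
        _ = ENNReal.ofReal (L * (dist x y * (δ x)⁻¹)) * ENNReal.ofReal (1 * (δ x)⁻¹ ^ n) :=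
            ENNReal.ofReal_mul' (by positivity)
        _ ≤ _ := by
            gcongr
            exact (hz.mono hc₀₁).ofReal_mul_inv_pow_le hc₁
    · simp [normalizedWeight, not_imp_comm.1 (hq.isAdmissible_self hx) hz,
        not_imp_comm.1 (hq.isAdmissible hx hxy) hz]

theorem IsAhlforsRegular.exists_isScaleWeight (hμ : IsAhlforsRegular μ n c C) (hc₀ : 0 < c₀)
    (hm : 0 < m) (K : ℝ) (s : ℕ) :
    ∃ (c₁ : ℝ) (C₄ : ℝ≥0∞), 1 ≤ c₁ ∧ C₄ ≠ ⊤ ∧ ∀ {A : Set X} {δ : X → ℝ} {q : X → X → ℝ},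
      LipschitzWith 1 δ → IsBump n μ A δ c₀ K m s q →
        IsScaleWeight n μ A δ c₁ C₄ (normalizedWeight μ q) :=
  ⟨max 1 (max c₀ (K / m)), _, le_max_left _ _, ENNReal.ofReal_ne_top, fun hδ hq ↦
    hq.isScaleWeight hμ hδ hc₀ hm (le_max_left _ _) (le_max_of_le_right (le_max_left _ _))
      (le_max_of_le_right (le_max_right _ _))⟩

end Bump

section CutoffBump

variable {X : Type*} [MetricSpace X] {A : Set X} {δ : X → ℝ} {x y z : X}

/-- A bump around `x` at the scale `δ x` which is supported in `A`, away from the points of much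
smaller scale. -/
def cutoffBump (A : Set X) (δ : X → ℝ) (x : X) : X → ℝ :=
  A.indicator fun z ↦ max (8 * δ x - dist x z) 0 * max (δ z - δ x / 16) 0

theorem cutoffBump_nonneg (A : Set X) (δ : X → ℝ) (x z : X) : 0 ≤ cutoffBump A δ x z :=
  Set.indicator_nonneg (fun _ _ ↦ by positivity) z

theorem mem_of_cutoffBump_ne_zero (h : cutoffBump A δ x z ≠ 0) :
    z ∈ A ∧ dist x z < 8 * δ x ∧ δ x < 16 * δ z := by
  have hz : z ∈ A := Set.mem_of_indicator_ne_zero h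
  rw [cutoffBump, Set.indicator_of_mem hz] at h
  refine ⟨hz, not_le.1 fun hle ↦ h ?_, not_le.1 fun hle ↦ h ?_⟩
  · rw [max_eq_right (by linarith), zero_mul]
  · rw [max_eq_right (a := δ z - δ x / 16) (by linarith), mul_zero]

theorem mem_of_cutoffBump_ne_zero_of_near (hδ : LipschitzWith 1 δ) (hx : 0 < δ x)
    (hxy : 2 * dist x y < δ x) (h : cutoffBump A δ y z ≠ 0) :
    z ∈ A ∧ dist x z < 13 * δ x ∧ δ x < 32 * δ z := by
  obtain ⟨hz, hdist, hscale⟩ := mem_of_cutoffBump_ne_zero h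
  have hxy' := le_add_dist_of_lipschitzWith_one hδ x y
  have hyx := le_add_dist_of_lipschitzWith_one hδ y x
  rw [dist_comm] at hyx
  exact ⟨hz, by linarith [dist_triangle x y z], by linarith⟩

theorem cutoffBump_le (hδ : LipschitzWith 1 δ) (hx : 0 < δ x) (z : X) :
    cutoffBump A δ x z ≤ 72 * δ x ^ 2 := by
  by_cases h : cutoffBump A δ x z = 0
  · rw [h]
    positivity
  obtain ⟨hz, hdist, -⟩ := mem_of_cutoffBump_ne_zero h
  have hzx := le_add_dist_of_lipschitzWith_one hδ z x
  rw [dist_comm] at hzx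
  rw [cutoffBump, Set.indicator_of_mem hz]
  calc max (8 * δ x - dist x z) 0 * max (δ z - δ x / 16) 0 ≤ 8 * δ x * (9 * δ x) := by
        gcongr
        · exact max_le (by linarith [dist_nonneg (x := x) (y := z)]) (by positivity)
        · exact max_le (by linarith) (by positivity)
    _ = 72 * δ x ^ 2 := by ring

theorem abs_max_mul_max_sub_le (hδ : LipschitzWith 1 δ) (hx : 0 < δ x)
    (hxy : 2 * dist x y < δ x) (hz : dist x z < 13 * δ x) :
    |max (8 * δ x - dist x z) 0 * max (δ z - δ x / 16) 0 -
        max (8 * δ y - dist y z) 0 * max (δ z - δ y / 16) 0| ≤ 127 * δ x * dist x y := by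
  have hxy' := le_add_dist_of_lipschitzWith_one hδ x y
  have hyx := le_add_dist_of_lipschitzWith_one hδ y x
  have hzx := le_add_dist_of_lipschitzWith_one hδ z x
  have htri := dist_triangle y x z
  rw [dist_comm y x] at hyx htri
  rw [dist_comm z x] at hzx
  have hF : |max (8 * δ x - dist x z) 0 - max (8 * δ y - dist y z) 0| ≤ 9 * dist x y := by
    refine (abs_max_sub_max_le_abs _ _ _).trans ?_
    rw [abs_le]
    constructor <;> linarith [dist_triangle x y z]
  have hG : |max (δ z - δ x / 16) 0 - max (δ z - δ y / 16) 0| ≤ dist x y / 16 := by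
    refine (abs_max_sub_max_le_abs _ _ _).trans ?_
    rw [abs_le]
    constructor <;> linarith
  have hG_le : |max (δ z - δ x / 16) 0| ≤ 14 * δ x := by
    rw [abs_of_nonneg (le_max_right _ _)]
    exact max_le (by linarith) (by positivity)
  have hF_le : |max (8 * δ y - dist y z) 0| ≤ 12 * δ x := by
    rw [abs_of_nonneg (le_max_right _ _)]
    exact max_le (by linarith [dist_nonneg (x := y) (y := z)]) (by positivity)
  set F := max (8 * δ x - dist x z) 0
  set F' := max (8 * δ y - dist y z) 0
  set G := max (δ z - δ x / 16) 0
  set G' := max (δ z - δ y / 16) 0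
  calc |F * G - F' * G'| = |(F - F') * G + F' * (G - G')| := by ring_nf
    _ ≤ |F - F'| * |G| + |F'| * |G - G'| := by
        rw [← abs_mul, ← abs_mul]
        exact abs_add_le _ _
    _ ≤ 9 * dist x y * (14 * δ x) + 12 * δ x * (dist x y / 16) := by gcongr
    _ ≤ 127 * δ x * dist x y := by nlinarith [mul_nonneg hx.le (dist_nonneg (x := x) (y := y))]

theorem abs_cutoffBump_sub_le (hδ : LipschitzWith 1 δ) (hx : 0 < δ x)
    (hxy : 2 * dist x y < δ x) (z : X) :
    |cutoffBump A δ x z - cutoffBump A δ y z| ≤ 127 * δ x * dist x y := by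
  by_cases hz : z ∈ A ∧ dist x z < 13 * δ x
  · simp only [cutoffBump, Set.indicator_of_mem hz.1]
    exact abs_max_mul_max_sub_le hδ hx hxy hz.2
  · have hzero {w : X} (hw : 2 * dist x w < δ x) : cutoffBump A δ w z = 0 := by
      by_contra h
      obtain ⟨hmem, hdist, -⟩ := mem_of_cutoffBump_ne_zero_of_near hδ hx hw h
      exact hz ⟨hmem, hdist⟩
    rw [hzero hxy, hzero (by simpa using hx), sub_zero, abs_zero]
    positivity

variable [MeasurableSpace X] [OpensMeasurableSpace X] {μ : Measure X} [IsFiniteMeasure μ] {n : ℕ}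
  {c C : ℝ≥0∞} {m : ℝ}

theorem measurable_cutoffBump (hA : MeasurableSet A) (hδ : Continuous δ) (x : X) :
    Measurable (cutoffBump A δ x) := by
  have hcont : Continuous fun z ↦ max (8 * δ x - dist x z) 0 * max (δ z - δ x / 16) 0 := by fun_prop
  exact hcont.measurable.indicator hA

theorem integrable_cutoffBump (hA : MeasurableSet A) (hδ : LipschitzWith 1 δ) (hx : 0 < δ x) :
    Integrable (cutoffBump A δ x) μ :=
  .of_bound (measurable_cutoffBump hA hδ.continuous x).aestronglyMeasurable (72 * δ x ^ 2) <|
    .of_forall fun z ↦ by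
      rw [Real.norm_of_nonneg (cutoffBump_nonneg A δ x z)]
      exact cutoffBump_le hδ hx z

theorem isBump_cutoffBump (hA : MeasurableSet A) (hδ : LipschitzWith 1 δ)
    (hmass : ∀ x, 0 < δ x → m * δ x ^ (n + 2) ≤ ∫ z, cutoffBump A δ x z ∂μ) :
    IsBump n μ A δ 32 127 m 2 (cutoffBump A δ) where
  measurable _ := measurable_cutoffBump hA hδ.continuous _
  integrable := integrable_cutoffBump hA hδ
  nonneg := cutoffBump_nonneg A δ
  le_mul_pow {x} z hx := (cutoffBump_le hδ hx z).trans (by nlinarith [sq_nonneg (δ x)])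
  abs_sub_le {x y} z hx hxy := (abs_cutoffBump_sub_le hδ hx hxy z).trans_eq (by field_simp)
  isAdmissible {x y z} hx hxy h := by
    obtain ⟨hz, hdist, hscale⟩ := mem_of_cutoffBump_ne_zero_of_near hδ hx hxy h
    exact ⟨hx, hz, by linarith, hscale.le⟩
  mul_pow_le_integral := hmass _

theorem IsAhlforsRegular.mul_pow_le_integral_of_le_on_ball (hμ : IsAhlforsRegular μ n c C)
    {q : X → ℝ} (hq : Integrable q μ) (hq0 : ∀ z, 0 ≤ q z) (p : X) {r a : ℝ} (ha : 0 ≤ a)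
    (hr : 0 < r) (hr1 : r ≤ 1) (hle : ∀ z ∈ Metric.ball p r, a ≤ q z) :
    a * (c.toReal * r ^ n) ≤ ∫ z, q z ∂μ := by
  calc a * (c.toReal * r ^ n) ≤ a * μ.real (Metric.ball p r) := by
        gcongr
        exact hμ.le_measureReal_ball p hr hr1
    _ = ∫ _ in Metric.ball p r, a ∂μ := by simp [mul_comm]
    _ ≤ ∫ z in Metric.ball p r, q z ∂μ :=
        setIntegral_mono_on (by simp) hq.integrableOn Metric.isOpen_ball.measurableSet hle
    _ ≤ ∫ z, q z ∂μ := setIntegral_le_integral hq (.of_forall hq0)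

theorem IsAhlforsRegular.mul_pow_le_integral_cutoffBump (hμ : IsAhlforsRegular μ n c C)
    (hA : MeasurableSet A) (hδ : LipschitzWith 1 δ) (hx : 0 < δ x) (hx1 : δ x ≤ 1)
    (hp : ∃ p, ∀ z ∈ Metric.ball p (δ x / 16), z ∈ A ∧ dist x z ≤ 7 * δ x ∧ 3 * δ x ≤ 16 * δ z) :
    c.toReal / (8 * 16 ^ n) * δ x ^ (n + 2) ≤ ∫ z, cutoffBump A δ x z ∂μ := by
  obtain ⟨p, hp⟩ := hp
  have hle (z : X) (hz : z ∈ Metric.ball p (δ x / 16)) : δ x ^ 2 / 8 ≤ cutoffBump A δ x z := by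
    obtain ⟨hmem, hdist, hscale⟩ := hp z hz
    rw [cutoffBump, Set.indicator_of_mem hmem]
    calc δ x ^ 2 / 8 = δ x * (δ x / 8) := by ring
      _ ≤ _ := by
        gcongr
        · exact le_max_of_le_left (by linarith)
        · exact le_max_of_le_left (by linarith)
  calc c.toReal / (8 * 16 ^ n) * δ x ^ (n + 2) = δ x ^ 2 / 8 * (c.toReal * (δ x / 16) ^ n) := by
        rw [div_pow, pow_add]
        field_simp
    _ ≤ ∫ z, cutoffBump A δ x z ∂μ :=
        hμ.mul_pow_le_integral_of_le_on_ball (integrable_cutoffBump hA hδ hx)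
          (cutoffBump_nonneg A δ x) p (by positivity) (by positivity) (by linarith) hle

end CutoffBump

section Annulus

variable {X : Type*} [MetricSpace X]

/-- The depth of `x` in the ball of radius `2 * r` around `x₀`: the scale at which a map is averaged
over the annulus between the radii `r` and `2 * r` to define its extension to the ball. -/
def ballDepth (x₀ : X) (r : ℝ) (x : X) : ℝ := 2 * r - dist x x₀

/-- The annulus between the radii `r` and `2 * r` around `x₀`. -/
def annulus (x₀ : X) (r : ℝ) : Set X := Metric.ball x₀ (2 * r) \ Metric.ball x₀ r

variable {x₀ : X} {r : ℝ} {x z : X}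

theorem ballDepth_le (x₀ : X) (r : ℝ) (x : X) : ballDepth x₀ r x ≤ 2 * r :=
  sub_le_self _ dist_nonneg

theorem lipschitzWith_ballDepth (x₀ : X) (r : ℝ) : LipschitzWith 1 (ballDepth x₀ r) :=
  .of_dist_le_mul fun x y ↦ by
    rw [ballDepth, ballDepth, dist_sub_left, NNReal.coe_one, one_mul, Real.dist_eq]
    exact abs_dist_sub_le x y x₀

theorem setOf_ballDepth_pos (x₀ : X) (r : ℝ) :
    {x | 0 < ballDepth x₀ r x} = Metric.ball x₀ (2 * r) := by
  ext x
  simp [ballDepth]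

theorem mem_annulus : z ∈ annulus x₀ r ↔ dist z x₀ < 2 * r ∧ r ≤ dist z x₀ := by
  simp [annulus]

theorem exists_dist_eq [PreconnectedSpace X] {y : X} (hr : 0 ≤ r) (hy : r ≤ dist y x₀) :
    ∃ p, dist p x₀ = r :=
  mem_range_of_exists_le_of_exists_ge (f := fun z ↦ dist z x₀) (by fun_prop) ⟨x₀, by simpa using hr⟩
    ⟨y, hy⟩

theorem exists_ball_subset_annulus [PreconnectedSpace X] (hfar : ∃ y, 3 / 2 * r ≤ dist y x₀)
    (hx : 0 < ballDepth x₀ r x) :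
    ∃ p, ∀ z ∈ Metric.ball p (ballDepth x₀ r x / 16), z ∈ annulus x₀ r ∧
      dist x z ≤ 7 * ballDepth x₀ r x ∧ 3 * ballDepth x₀ r x ≤ 16 * ballDepth x₀ r z := by
  simp only [ballDepth, Metric.mem_ball, mem_annulus] at hx ⊢
  have hr : 0 < r := by linarith [dist_nonneg (x := x) (y := x₀)]
  by_cases hcase : 3 / 2 * r < dist x x₀
  · refine ⟨x, fun z hz ↦ ?_⟩
    have htri := dist_triangle_left x x₀ z
    have htri' := dist_triangle z x x₀
    rw [dist_comm x z]
    refine ⟨⟨?_, ?_⟩, ?_, ?_⟩ <;> linarith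
  · obtain ⟨y, hy⟩ := hfar
    obtain ⟨p, hp⟩ := exists_dist_eq (by positivity) hy
    refine ⟨p, fun z hz ↦ ?_⟩
    have htri := dist_triangle_left p x₀ z
    have htri' := dist_triangle z p x₀
    have hxz := dist_triangle_right x z x₀
    have := dist_nonneg (x := x) (y := x₀)
    refine ⟨⟨?_, ?_⟩, ?_, ?_⟩ <;> linarith

variable [MeasurableSpace X] [BorelSpace X]

theorem measurableSet_annulus (x₀ : X) (r : ℝ) : MeasurableSet (annulus x₀ r) :=
  Metric.isOpen_ball.measurableSet.diff Metric.isOpen_ball.measurableSet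

/-- The weights averaging a map over the annulus between the radii `r` and `2 * r` around `x₀`, at
the scale of the depth in the ball of radius `2 * r`. -/
def annulusWeight (μ : Measure X) (x₀ : X) (r : ℝ) : X → X → ℝ :=
  normalizedWeight μ (cutoffBump (annulus x₀ r) (ballDepth x₀ r))

theorem IsAhlforsRegular.exists_isScaleWeight_annulusWeight [PreconnectedSpace X] {μ : Measure X}
    [IsFiniteMeasure μ] {n : ℕ} {c C : ℝ≥0∞} (hμ : IsAhlforsRegular μ n c C) :
    ∃ (c₁ : ℝ) (C₄ : ℝ≥0∞), 1 ≤ c₁ ∧ C₄ ≠ ⊤ ∧ ∀ (x₀ : X) (r : ℝ), r ≤ 1 / 2 →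
      (∃ y, 3 / 2 * r ≤ dist y x₀) →
      IsScaleWeight n μ (annulus x₀ r) (ballDepth x₀ r) c₁ C₄ (annulusWeight μ x₀ r) := by
  have hc : 0 < c.toReal := ENNReal.toReal_pos hμ.lower_ne_zero hμ.lower_ne_top
  set m := c.toReal / (8 * 16 ^ n)
  obtain ⟨c₁, C₄, hc₁, hC₄, hweight⟩ :=
    hμ.exists_isScaleWeight (by norm_num : (0 : ℝ) < 32) (by positivity : 0 < m) 127 2
  refine ⟨c₁, C₄, hc₁, hC₄, fun x₀ r hr hfar ↦ ?_⟩
  have hδ := lipschitzWith_ballDepth x₀ r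
  have hA := measurableSet_annulus x₀ r
  have hmass (x : X) (hx : 0 < ballDepth x₀ r x) : m * ballDepth x₀ r x ^ (n + 2) ≤
      ∫ z, cutoffBump (annulus x₀ r) (ballDepth x₀ r) x z ∂μ :=
    hμ.mul_pow_le_integral_cutoffBump hA hδ hx
      ((ballDepth_le x₀ r x).trans (by linarith))
      (exists_ball_subset_annulus hfar hx)
  exact hweight hδ (isBump_cutoffBump hA hδ hmass)

end Annulus

/-! ### The hole-filling inequality and the decay of energy -/

section SphereMap

variable {X V : Type*} [TopologicalSpace X] [NormedAddCommGroup V]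

/-- Continuous maps into the unit sphere of `V`. -/
structure IsSphereMap (u : X → V) : Prop where
  continuous : Continuous u
  norm_eq_one (x : X) : ‖u x‖ = 1

theorem half_le_of_enorm_one_sub_rpow_le {p t : ℝ} (hp : 0 < p)
    (h : ‖1 - t‖ₑ ^ p ≤ ENNReal.ofReal (1 / 2) ^ p) : 1 / 2 ≤ t := by
  rw [ENNReal.rpow_le_rpow_iff hp, ← ofReal_norm, ENNReal.ofReal_le_ofReal_iff (by norm_num),
    Real.norm_eq_abs, abs_le] at h
  linarith

theorem isSphereMap_normalize [NormedSpace ℝ V] {w : X → V} (hw : Continuous w)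
    (h : ∀ x, w x ≠ 0) : IsSphereMap fun x ↦ NormedSpace.normalize (w x) :=
  ⟨continuous_normalize_comp hw h, fun x ↦ NormedSpace.norm_normalize (h x)⟩

theorem exists_mul_le_of_le {C a : ℝ≥0∞} (hC : C ≠ ⊤) (ha : a ≠ 0) (ha' : a ≠ ⊤) :
    ∃ ε : ℝ≥0∞, ε ≠ 0 ∧ ε ≠ ⊤ ∧ ∀ e ≤ ε, C * e ≤ a := by
  refine ⟨a / (C + 1), (ENNReal.div_pos ha (by finiteness)).ne',
    ENNReal.div_ne_top ha' (by simp), fun e he ↦ ?_⟩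
  calc C * e ≤ (C + 1) * (a / (C + 1)) := by
        gcongr
        exact le_self_add
    _ = a := ENNReal.mul_div_cancel (by simp) (by finiteness)

end SphereMap

section Competitor

variable {X : Type*} [MetricSpace X] [MeasurableSpace X] [BorelSpace X] [SecondCountableTopology X]
  {μ : Measure X} {n : ℕ} {c C : ℝ≥0∞} {p : ℝ}

theorem IsAhlforsRegular.exists_sphereMap_extension [IsFiniteMeasure μ] [PreconnectedSpace X]
    (V : Type*) [NormedAddCommGroup V] [NormedSpace ℝ V] [CompleteSpace V]
    (hμ : IsAhlforsRegular μ n c C) (hp : (n : ℝ) < p) (hp1 : 1 < p)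
    (hfar : ∀ x : X, ∃ y, 1 ≤ dist y x) :
    ∃ C₂ ε₀ : ℝ≥0∞, C₂ ≠ ⊤ ∧ ε₀ ≠ 0 ∧ ε₀ ≠ ⊤ ∧ ∀ (x₀ : X) (r : ℝ) (u : X → V), r ≤ 1 / 2 →
      IsSphereMap u → localEnergy n p μ u (annulus x₀ r) ≤ ε₀ →
      ∃ u', IsSphereMap u' ∧ Set.EqOn u' u (Metric.ball x₀ (2 * r))ᶜ ∧
        localEnergy n p μ u' (Metric.ball x₀ (2 * r))
          ≤ C₂ * localEnergy n p μ u (annulus x₀ r) := by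
  have hp0 : 0 < p := by linarith
  obtain ⟨c₁, C₄, hc₁, hC₄, hweight⟩ := hμ.exists_isScaleWeight_annulusWeight
  obtain ⟨C₂, hC₂, henergy⟩ :=
    hμ.exists_localEnergy_averageAtScale_le (V := V) hp hp1 hc₁ hC₄
  obtain ⟨ε₀, hε₀, hε₀_top, hsmall⟩ := exists_mul_le_of_le
    (C := ENNReal.ofReal c₁ ^ 2 * ENNReal.ofReal (2 * c₁) ^ (2 * n))
    (a := ENNReal.ofReal (1 / 2) ^ p) (by finiteness)
    (by simp [ENNReal.rpow_eq_zero_iff, hp0.not_gt]) (by finiteness)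
  refine ⟨4 ^ p * C₂, ε₀, by finiteness, hε₀, hε₀_top, fun x₀ r u hr hu hle ↦ ?_⟩
  have hfar' : ∃ y, 3 / 2 * r ≤ dist y x₀ := (hfar x₀).imp fun y hy ↦ by linarith
  have hk := hweight x₀ r hr hfar'
  have hδ := lipschitzWith_ballDepth x₀ r
  have hA := measurableSet_annulus x₀ r
  have hu1 (z : X) : ‖u z‖ ≤ 1 := (hu.norm_eq_one z).le
  set w := averageAtScale μ (ballDepth x₀ r) (annulusWeight μ x₀ r) u
  have hw_eq {x : X} (hx : ballDepth x₀ r x ≤ 0) : w x = u x := averageAtScale_of_nonpos hx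
  have hhalf (x : X) : 1 / 2 ≤ ‖w x‖ := by
    rcases le_or_gt (ballDepth x₀ r x) 0 with hx | hx
    · rw [hw_eq hx, hu.norm_eq_one]
      norm_num
    · exact half_le_of_enorm_one_sub_rpow_le hp0 <|
        (hk.enorm_one_sub_norm_averageAtScale_rpow_le hp1 (by linarith) hA (fun z hz ↦ hz.mem)
          hu.continuous hu.norm_eq_one hx).trans (hsmall _ hle)
  have hw : Continuous w := hk.continuous_averageAtScale hμ hC₄ hc₁ hδ hA hu.continuous hu1
  refine ⟨fun x ↦ NormedSpace.normalize (w x), isSphereMap_normalize hw fun x ↦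
    norm_pos_iff.1 (one_half_pos.trans_le (hhalf x)), fun x hx ↦ ?_, ?_⟩
  · rw [← setOf_ballDepth_pos, Set.mem_compl_iff, Set.mem_ofPred_eq, not_lt] at hx
    simp only [hw_eq hx, NormedSpace.normalize_eq_self_of_norm_eq_one (hu.norm_eq_one x)]
  · rw [mul_assoc, ← setOf_ballDepth_pos]
    exact (localEnergy_normalize_le hp0.le hhalf _).trans
      (by gcongr; exact henergy hδ hA hk hu.continuous hu1)

end Competitor

section HoleFilling

variable {X : Type*} [MetricSpace X] [MeasurableSpace X] [BorelSpace X] [SecondCountableTopology X]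
  {V : Type*} [NormedAddCommGroup V] {μ : Measure X} {n : ℕ} {p : ℝ} {u u' : X → V} {Ω : Set X}

theorem localEnergy_univ_eq [SFinite μ] (hu : Continuous u) (hΩ : MeasurableSet Ω) :
    localEnergy n p μ u Set.univ = localEnergy n p μ u Ω +
      ((∫⁻ x in Ωᶜ, ∫⁻ y in Ω, energyDensity n p u x y ∂μ ∂μ) +
        ∫⁻ x in Ωᶜ, ∫⁻ y in Ωᶜ, energyDensity n p u x y ∂μ ∂μ) := by
  have hmeas : Measurable fun x ↦ ∫⁻ y in Ω, energyDensity n p u x y ∂μ :=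
    (measurable_energyDensity n p hu).lintegral_prod_right'
  rw [← lintegral_add_left hmeas, localEnergy, Measure.restrict_univ, ← lintegral_add_compl _ hΩ]
  simp only [localEnergy, pointEnergy, lintegral_add_compl _ hΩ]

theorem setLIntegral_compl_energyDensity_le [SFinite μ] (hu : Continuous u) :
    ∫⁻ x in Ωᶜ, ∫⁻ y in Ω, energyDensity n p u x y ∂μ ∂μ ≤ localEnergy n p μ u Ω := by
  rw [lintegral_lintegral_swap (measurable_energyDensity n p hu).aemeasurable]
  refine lintegral_mono fun y ↦ (setLIntegral_le_lintegral Ωᶜ _).trans_eq ?_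
  exact lintegral_congr fun x ↦ energyDensity_comm n p u x y

/-- The pairs with exactly one point in `Ω` are counted once in the energy of `u'` on `Ω` and once
more in the rest of its energy. -/
theorem localEnergy_le_two_mul_add [SFinite μ] (hu : Continuous u) (hu' : Continuous u')
    (hΩ : MeasurableSet Ω) (heq : Set.EqOn u' u Ωᶜ) {η : ℝ≥0∞}
    (hfin : localEnergy n p μ u Set.univ ≠ ⊤)
    (hle : localEnergy n p μ u Set.univ ≤ localEnergy n p μ u' Set.univ + η) :
    localEnergy n p μ u Ω ≤ 2 * localEnergy n p μ u' Ω + η := by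
  have hcompl : ∫⁻ x in Ωᶜ, ∫⁻ y in Ωᶜ, energyDensity n p u' x y ∂μ ∂μ =
      ∫⁻ x in Ωᶜ, ∫⁻ y in Ωᶜ, energyDensity n p u x y ∂μ ∂μ :=
    setLIntegral_congr_fun hΩ.compl fun x hx ↦ setLIntegral_congr_fun hΩ.compl fun y hy ↦ by
      simp only [energyDensity, heq hx, heq hy]
  have hsplit := localEnergy_univ_eq (n := n) (p := p) (μ := μ) hu hΩ
  have hsplit' := localEnergy_univ_eq (n := n) (p := p) (μ := μ) hu' hΩ
  rw [hcompl] at hsplit'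
  set L := ∫⁻ x in Ωᶜ, ∫⁻ y in Ωᶜ, energyDensity n p u x y ∂μ ∂μ
  have hL : L ≠ ⊤ := ne_top_of_le_ne_top hfin <| by
    rw [hsplit, ← add_assoc]
    exact le_add_self
  refine (ENNReal.add_le_add_iff_right hL).1 ?_
  calc localEnergy n p μ u Ω + L ≤ localEnergy n p μ u Set.univ := by
        rw [hsplit]
        gcongr
        exact le_add_self
    _ ≤ localEnergy n p μ u' Set.univ + η := hle
    _ ≤ localEnergy n p μ u' Ω + (localEnergy n p μ u' Ω + L) + η := by
        rw [hsplit']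
        gcongr
        exact setLIntegral_compl_energyDensity_le hu'
    _ = 2 * localEnergy n p μ u' Ω + η + L := by ring

end HoleFilling

section Decay

theorem le_pow_mul_add_of_le_mul_add {a : ℕ → ℝ} {θ η M : ℝ} (hθ : 0 ≤ θ) (hθ1 : θ < 1)
    (hη : 0 ≤ η) (h0 : a 0 ≤ M) (hstep : ∀ j, a (j + 1) ≤ θ * a j + η) (j : ℕ) :
    a j ≤ θ ^ j * M + η / (1 - θ) := by
  have hθ' : 0 < 1 - θ := sub_pos.2 hθ1
  induction j with
  | zero =>
    rw [pow_zero, one_mul]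
    exact h0.trans (le_add_of_nonneg_right (by positivity))
  | succ j ih =>
    calc a (j + 1) ≤ θ * (θ ^ j * M + η / (1 - θ)) + η := (hstep j).trans (by gcongr)
      _ = θ ^ (j + 1) * M + η / (1 - θ) := by
        field_simp
        ring

theorem le_div_mul_add_of_le_mul_sub {a b K η : ℝ} (hK : 0 ≤ K) (hη : 0 ≤ η) (hab : a ≤ b)
    (h : b ≤ K * (b - a) + η) : a ≤ K / (K + 1) * b + η := by
  calc a ≤ (K * b + η) / (K + 1) := by
        rw [le_div_iff₀ (by positivity)]
        linarith
    _ = K / (K + 1) * b + η / (K + 1) := by ring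
    _ ≤ K / (K + 1) * b + η := by
        gcongr
        exact div_le_self hη (by linarith)

theorem sub_le_one_sub_div_mul {b e M : ℝ} (he : 0 ≤ e) (hM : 0 < M) (hb : b ≤ M) :
    b - e ≤ (1 - e / M) * b := by
  have : e / M * b ≤ e := by
    rw [div_mul_comm]
    exact mul_le_of_le_one_left he ((div_le_one hM).2 hb)
  linarith

theorem le_max_mul_add_of_le_mul_sub {a b K e M η : ℝ} (hK : 0 ≤ K) (he : 0 ≤ e) (hM : 0 < M)
    (hη : 0 ≤ η) (ha : 0 ≤ a) (hab : a ≤ b) (hb : b ≤ M)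
    (h : b - a ≤ e → b ≤ K * (b - a) + η) :
    a ≤ max (K / (K + 1)) (1 - e / M) * b + η := by
  have hb0 : 0 ≤ b := ha.trans hab
  rcases le_total (b - a) e with hsmall | hlarge
  · exact (le_div_mul_add_of_le_mul_sub hK hη hab (h hsmall)).trans
      (by gcongr; exact le_max_left _ _)
  · calc a ≤ b - e := by linarith
      _ ≤ (1 - e / M) * b := sub_le_one_sub_div_mul he hM hb
      _ ≤ max (K / (K + 1)) (1 - e / M) * b := by gcongr; exact le_max_right _ _
      _ ≤ _ := le_add_of_nonneg_right hη

variable {X : Type*} [MetricSpace X] [MeasurableSpace X]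

/-- The map `u` into the sphere minimizes the energy up to `η` among the maps into the sphere which
differ from it only in a ball of radius `R`. -/
def IsAlmostMinimizing {V : Type*} [NormedAddCommGroup V] (n : ℕ) (p : ℝ) (μ : Measure X) (R η : ℝ)
    (u : X → V) : Prop :=
  ∀ (u' : X → V) (x₀ : X), IsSphereMap u' → Set.EqOn u' u (Metric.ball x₀ R)ᶜ →
    localEnergy n p μ u Set.univ ≤ localEnergy n p μ u' Set.univ + ENNReal.ofReal η

variable [BorelSpace X] {μ : Measure X} {n : ℕ} {c C : ℝ≥0∞} {p M R : ℝ}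

theorem localEnergy_ball_add_annulus {V : Type*} [NormedAddCommGroup V] (u : X → V) (x₀ : X)
    {r : ℝ} (hr : 0 ≤ r) :
    localEnergy n p μ u (Metric.ball x₀ r) + localEnergy n p μ u (annulus x₀ r) =
      localEnergy n p μ u (Metric.ball x₀ (2 * r)) := by
  have h := lintegral_inter_add_sdiff (μ := μ) (pointEnergy n p μ u) (Metric.ball x₀ (2 * r))
    (Metric.isOpen_ball (x := x₀) (ε := r)).measurableSet
  rwa [Set.inter_eq_right.2 (Metric.ball_subset_ball (by linarith))] at h

variable [SecondCountableTopology X] [IsFiniteMeasure μ] [PreconnectedSpace X]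
  (V : Type*) [NormedAddCommGroup V] [NormedSpace ℝ V] [CompleteSpace V]

theorem IsAhlforsRegular.exists_localEnergy_ball_le_mul_annulus (hμ : IsAhlforsRegular μ n c C)
    (hp : (n : ℝ) < p) (hp1 : 1 < p) (hfar : ∀ x : X, ∃ y, 1 ≤ dist y x) :
    ∃ C₂ ε₀ : ℝ≥0∞, C₂ ≠ ⊤ ∧ ε₀ ≠ 0 ∧ ε₀ ≠ ⊤ ∧ ∀ (u : X → V) (R η : ℝ), R ≤ 1 →
      IsSphereMap u → localEnergy n p μ u Set.univ ≠ ⊤ → IsAlmostMinimizing n p μ R η u →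
      ∀ (x₀ : X) (r : ℝ), 2 * r ≤ R → localEnergy n p μ u (annulus x₀ r) ≤ ε₀ →
        localEnergy n p μ u (Metric.ball x₀ (2 * r))
          ≤ C₂ * localEnergy n p μ u (annulus x₀ r) + ENNReal.ofReal η := by
  obtain ⟨C₂, ε₀, hC₂, hε₀, hε₀_top, hextend⟩ := hμ.exists_sphereMap_extension V hp hp1 hfar
  refine ⟨2 * C₂, ε₀, by finiteness, hε₀, hε₀_top,
    fun u R η hR1 hu hfin hmin x₀ r hrR hsmall ↦ ?_⟩
  obtain ⟨u', hu', heq, henergy⟩ := hextend x₀ r u (by linarith) hu hsmall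
  have hmin' := hmin u' x₀ hu'
    (heq.mono (Set.compl_subset_compl.2 (Metric.ball_subset_ball hrR)))
  rw [mul_assoc]
  exact (localEnergy_le_two_mul_add hu.continuous hu'.continuous Metric.isOpen_ball.measurableSet
    heq hfin hmin').trans (by gcongr)

theorem IsAhlforsRegular.exists_localEnergy_ball_le_mul_add (hμ : IsAhlforsRegular μ n c C)
    (hp : (n : ℝ) < p) (hp1 : 1 < p) (hfar : ∀ x : X, ∃ y, 1 ≤ dist y x) (hM : 0 < M)
    (hR1 : R ≤ 1) :
    ∃ θ : ℝ, 0 < θ ∧ θ < 1 ∧ ∀ (u : X → V) (η : ℝ), 0 ≤ η → IsSphereMap u →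
      localEnergy n p μ u Set.univ ≤ ENNReal.ofReal M → IsAlmostMinimizing n p μ R η u →
      ∀ (x₀ : X) (r : ℝ), 0 ≤ r → 2 * r ≤ R →
        (localEnergy n p μ u (Metric.ball x₀ r)).toReal
          ≤ θ * (localEnergy n p μ u (Metric.ball x₀ (2 * r))).toReal + η := by
  obtain ⟨C₂, ε₀, hC₂, hε₀, hε₀_top, hhole⟩ :=
    hμ.exists_localEnergy_ball_le_mul_annulus V hp hp1 hfar
  set K := C₂.toReal + 1
  set e := ε₀.toReal
  have he : 0 < e := ENNReal.toReal_pos hε₀ hε₀_top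
  have hK : 0 < K := add_pos_of_nonneg_of_pos ENNReal.toReal_nonneg one_pos
  refine ⟨max (K / (K + 1)) (1 - e / M), lt_max_of_lt_left (by positivity),
    max_lt ((div_lt_one (by positivity)).2 (by linarith)) (sub_lt_self _ (by positivity)), ?_⟩
  intro u η hη hu hbound hmin x₀ r hr hrR
  have hle (S : Set X) : localEnergy n p μ u S ≤ ENNReal.ofReal M :=
    (localEnergy_mono u (Set.subset_univ S)).trans hbound
  have hfin (S : Set X) : localEnergy n p μ u S ≠ ⊤ :=
    ne_top_of_le_ne_top ENNReal.ofReal_ne_top (hle S)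
  set a := (localEnergy n p μ u (Metric.ball x₀ r)).toReal
  set b := (localEnergy n p μ u (Metric.ball x₀ (2 * r))).toReal
  have hannulus : (localEnergy n p μ u (annulus x₀ r)).toReal = b - a := by
    rw [eq_sub_iff_add_eq', ← ENNReal.toReal_add (hfin _) (hfin _),
      localEnergy_ball_add_annulus u x₀ hr]
  have hab : 0 ≤ b - a := hannulus ▸ ENNReal.toReal_nonneg
  refine le_max_mul_add_of_le_mul_sub hK.le he.le hM hη ENNReal.toReal_nonneg (sub_nonneg.1 hab)
    (ENNReal.toReal_le_of_le_ofReal hM.le (hle _)) fun hsmall ↦ ?_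
  have := hfin (annulus x₀ r)
  rw [← hannulus, ENNReal.toReal_le_toReal this hε₀_top] at hsmall
  refine (ENNReal.toReal_mono (by finiteness)
    (hhole u R η hR1 hu (hfin _) hmin x₀ r hrR hsmall)).trans ?_
  rw [ENNReal.toReal_add (by finiteness) (by finiteness), ENNReal.toReal_mul,
    ENNReal.toReal_ofReal hη, hannulus]
  gcongr
  exact (lt_add_one _).le

theorem IsAhlforsRegular.exists_localEnergy_ball_le_pow (hμ : IsAhlforsRegular μ n c C)
    (hp : (n : ℝ) < p) (hp1 : 1 < p) (hfar : ∀ x : X, ∃ y, 1 ≤ dist y x) (hM : 0 < M)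
    (hR : 0 ≤ R) (hR1 : R ≤ 1) :
    ∃ θ : ℝ, 0 < θ ∧ θ < 1 ∧ ∀ (u : X → V) (η : ℝ), 0 ≤ η → IsSphereMap u →
      localEnergy n p μ u Set.univ ≤ ENNReal.ofReal M → IsAlmostMinimizing n p μ R η u →
      ∀ (x₀ : X) (j : ℕ), localEnergy n p μ u (Metric.ball x₀ ((1 / 2) ^ j * R))
        ≤ ENNReal.ofReal (θ ^ j * M + η / (1 - θ)) := by
  obtain ⟨θ, hθ, hθ1, hdecay⟩ := hμ.exists_localEnergy_ball_le_mul_add V hp hp1 hfar hM hR1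
  refine ⟨θ, hθ, hθ1, fun u η hη hu hbound hmin x₀ j ↦ ?_⟩
  have hle (S : Set X) : localEnergy n p μ u S ≤ ENNReal.ofReal M :=
    (localEnergy_mono u (Set.subset_univ S)).trans hbound
  have hstep (j : ℕ) : (localEnergy n p μ u (Metric.ball x₀ ((1 / 2) ^ (j + 1) * R))).toReal ≤
      θ * (localEnergy n p μ u (Metric.ball x₀ ((1 / 2) ^ j * R))).toReal + η := by
    have hdouble : 2 * ((1 / 2) ^ (j + 1) * R) = (1 / 2) ^ j * R := by ring
    have hradius : (1 / 2) ^ j * R ≤ R :=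
      mul_le_of_le_one_left hR (pow_le_one₀ (by norm_num) (by norm_num))
    have h := hdecay u η hη hu hbound hmin x₀ ((1 / 2) ^ (j + 1) * R) (by positivity)
      (hdouble.trans_le hradius)
    rwa [hdouble] at h
  rw [← ENNReal.ofReal_toReal (ne_top_of_le_ne_top ENNReal.ofReal_ne_top (hle _))]
  exact ENNReal.ofReal_le_ofReal <| le_pow_mul_add_of_le_mul_add
    (a := fun j ↦ (localEnergy n p μ u (Metric.ball x₀ ((1 / 2) ^ j * R))).toReal) hθ.le hθ1 hη
    (ENNReal.toReal_le_of_le_ofReal hM.le (hle _)) hstep j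

end Decay

/-! ### Mollification -/

theorem averagingKernel_half_le {X : Type*} [MetricSpace X] (n : ℕ) {r c₁ : ℝ} (hc₁ : 1 ≤ c₁)
    (x z : X) : averagingKernel n Set.univ (fun _ ↦ r / 2) c₁ x z
      ≤ 2 ^ n * averagingKernel n Set.univ (fun _ ↦ r) c₁ x z := by
  by_cases h : IsAdmissible Set.univ (fun _ : X ↦ r / 2) c₁ x z
  swap
  · simp [averagingKernel_eq_zero h]
  have hr : 0 < r := by linarith [h.scale_pos]
  have hdist : dist x z ≤ c₁ * r := h.dist_le.trans (by gcongr; exact half_le_self hr.le)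
  have h' : IsAdmissible Set.univ (fun _ : X ↦ r) c₁ x z :=
    ⟨hr, Set.mem_univ z, hdist, le_mul_of_one_le_left hr.le hc₁⟩
  rw [h.averagingKernel_eq, h'.averagingKernel_eq, ENNReal.ofReal_div_of_pos two_pos,
    ENNReal.ofReal_ofNat, ENNReal.inv_div (by simp) (by simp), div_eq_mul_inv, mul_pow,
    mul_left_comm]

section ConeBump

variable {X : Type*} [MetricSpace X] {r : ℝ}

/-- The cone of height `r` over the ball of radius `r` around `x`. -/
def coneBump (r : ℝ) (x z : X) : ℝ := max (r - dist x z) 0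

theorem coneBump_nonneg (r : ℝ) (x z : X) : 0 ≤ coneBump r x z := le_max_right _ _

theorem coneBump_le (hr : 0 ≤ r) (x z : X) : coneBump r x z ≤ r :=
  max_le (by linarith [dist_nonneg (x := x) (y := z)]) hr

theorem dist_lt_of_coneBump_ne_zero {x z : X} (h : coneBump r x z ≠ 0) : dist x z < r :=
  not_le.1 fun hle ↦ h (max_eq_right (by linarith))

theorem coneBump_mono {r' : ℝ} (h : r ≤ r') (x z : X) : coneBump r x z ≤ coneBump r' x z := by
  unfold coneBump
  gcongr

theorem abs_coneBump_sub_le (r : ℝ) (x y z : X) :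
    |coneBump r x z - coneBump r y z| ≤ dist x y := by
  refine (abs_max_sub_max_le_abs _ _ _).trans ?_
  rw [sub_sub_sub_cancel_left, abs_sub_comm]
  exact abs_dist_sub_le x y z

theorem continuous_coneBump : Continuous fun a : ℝ × X × X ↦ coneBump a.1 a.2.1 a.2.2 := by
  unfold coneBump
  fun_prop

variable [MeasurableSpace X] [BorelSpace X] {μ : Measure X} {n : ℕ} {c C : ℝ≥0∞}

theorem measurable_coneBump (r : ℝ) (x : X) : Measurable (coneBump r x) :=
  (continuous_coneBump.comp (by fun_prop : Continuous fun z : X ↦ (r, x, z))).measurable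

/-- The density of the average over the cone of height `r` around a point. -/
def coneWeight (μ : Measure X) (r : ℝ) : X → X → ℝ := normalizedWeight μ (coneBump r)

variable [IsFiniteMeasure μ]

theorem integrable_coneBump (hr : 0 ≤ r) (x : X) : Integrable (coneBump r x) μ :=
  .of_bound (measurable_coneBump r x).aestronglyMeasurable r <| .of_forall fun z ↦ by
    rw [Real.norm_of_nonneg (coneBump_nonneg r x z)]
    exact coneBump_le hr x z

theorem IsAhlforsRegular.isBump_coneBump (hμ : IsAhlforsRegular μ n c C) (hr1 : r ≤ 1) :
    IsBump n μ Set.univ (fun _ : X ↦ r) 2 1 (c.toReal / 2 ^ (n + 1)) 1 (coneBump r) where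
  measurable _ := measurable_coneBump r _
  integrable hr := integrable_coneBump hr.le _
  nonneg := coneBump_nonneg r
  le_mul_pow _ hr := by simpa using coneBump_le hr.le _ _
  abs_sub_le _ hr _ := by
    rw [one_mul, pow_one, mul_div_cancel₀ _ hr.ne']
    exact abs_coneBump_sub_le r _ _ _
  isAdmissible {x y z} hr hxy hz :=
    have hyz := dist_lt_of_coneBump_ne_zero hz
    ⟨hr, Set.mem_univ z, by linarith [dist_triangle x y z], by linarith⟩
  mul_pow_le_integral {x} hr := by
    have hle (z : X) (hz : z ∈ Metric.ball x (r / 2)) : r / 2 ≤ coneBump r x z := by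
      rw [Metric.mem_ball'] at hz
      exact le_max_of_le_left (by linarith)
    calc c.toReal / 2 ^ (n + 1) * r ^ (n + 1) = r / 2 * (c.toReal * (r / 2) ^ n) := by
          rw [div_pow, pow_succ, pow_succ]
          field_simp
      _ ≤ ∫ z, coneBump r x z ∂μ :=
          hμ.mul_pow_le_integral_of_le_on_ball (integrable_coneBump hr.le x) (coneBump_nonneg r x)
            x (half_pos hr).le (half_pos hr) (by linarith) hle

theorem IsAhlforsRegular.exists_isScaleWeight_coneWeight (hμ : IsAhlforsRegular μ n c C) :
    ∃ (c₁ : ℝ) (C₄ : ℝ≥0∞), 1 ≤ c₁ ∧ C₄ ≠ ⊤ ∧ ∀ r, r ≤ 1 →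
      IsScaleWeight n μ Set.univ (fun _ : X ↦ r) c₁ C₄ (coneWeight μ r) := by
  have hc : 0 < c.toReal := ENNReal.toReal_pos hμ.lower_ne_zero hμ.lower_ne_top
  obtain ⟨c₁, C₄, hc₁, hC₄, h⟩ := hμ.exists_isScaleWeight (c₀ := 2)
    (m := c.toReal / 2 ^ (n + 1)) two_pos (by positivity) 1 1
  exact ⟨c₁, C₄, hc₁, hC₄, fun r hr1 ↦
    h ((LipschitzWith.const r).weaken zero_le_one) (hμ.isBump_coneBump hr1)⟩

theorem IsAhlforsRegular.integral_coneBump_pos (hμ : IsAhlforsRegular μ n c C) (hr : 0 < r)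
    (x : X) : 0 < ∫ z, coneBump r x z ∂μ := by
  have hc : 0 < c.toReal := ENNReal.toReal_pos hμ.lower_ne_zero hμ.lower_ne_top
  have hr' : 0 < min r 1 := lt_min hr one_pos
  calc 0 < ∫ z, coneBump (min r 1) x z ∂μ :=
        (hμ.isBump_coneBump (min_le_right r 1)).integral_pos (by positivity) hr'
    _ ≤ ∫ z, coneBump r x z ∂μ :=
        integral_mono (integrable_coneBump hr'.le x) (integrable_coneBump hr.le x)
          (coneBump_mono (min_le_left r 1) x)

theorem IsAhlforsRegular.isProbabilityWeight_coneWeight (hμ : IsAhlforsRegular μ n c C)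
    (hr : 0 < r) (x : X) : IsProbabilityWeight μ (coneWeight μ r x) where
  measurable := (measurable_coneBump r x).div_const _
  nonneg z := div_nonneg (coneBump_nonneg r x z) (hμ.integral_coneBump_pos hr x).le
  integrable := (integrable_coneBump hr.le x).div_const _
  integral_eq_one := (integral_div _ _).trans (div_self (hμ.integral_coneBump_pos hr x).ne')

end ConeBump

section Mollify

variable {X : Type*} [MetricSpace X] [MeasurableSpace X] {V : Type*} [NormedAddCommGroup V]
  [NormedSpace ℝ V]

/-- The mollification of `u` by averages over cones of height `r`; it is `u` itself if `r ≤ 0`. -/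
def mollify (μ : Measure X) (r : ℝ) (u : X → V) : X → V :=
  averageAtScale μ (fun _ ↦ r) (coneWeight μ r) u

variable {μ : Measure X} {n : ℕ} {c C : ℝ≥0∞} {r : ℝ} {u : X → V} {M : ℝ}

theorem mollify_of_pos (hr : 0 < r) (x : X) :
    mollify μ r u x = weightedAverage μ (coneWeight μ r x) u :=
  averageAtScale_of_pos (δ := fun _ : X ↦ r) hr

theorem mollify_of_nonpos (hr : r ≤ 0) (x : X) : mollify μ r u x = u x :=
  averageAtScale_of_nonpos (δ := fun _ : X ↦ r) hr

variable [BorelSpace X]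

theorem IsAhlforsRegular.continuousAt_mollify_of_pos [CompactSpace X] [IsFiniteMeasure μ]
    (hμ : IsAhlforsRegular μ n c C) (hu : Continuous u) (hr : 0 < r) (x : X) :
    ContinuousAt (fun a : ℝ × X ↦ mollify μ a.1 u a.2) (r, x) := by
  have hmass : Continuous fun a : ℝ × X ↦ ∫ z, coneBump a.1 a.2 z ∂μ := by
    simpa using continuous_parametric_integral_of_continuous (μ := μ)
      (f := fun (a : ℝ × X) z ↦ coneBump a.1 a.2 z)
      (continuous_coneBump.comp (by fun_prop : Continuous fun b : (ℝ × X) × X ↦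
        (b.1.1, b.1.2, b.2))) isCompact_univ
  have hint : Continuous fun a : ℝ × X ↦ ∫ z, coneBump a.1 a.2 z • u z ∂μ := by
    simpa using continuous_parametric_integral_of_continuous (μ := μ)
      (f := fun (a : ℝ × X) z ↦ coneBump a.1 a.2 z • u z)
      ((continuous_coneBump.comp (by fun_prop : Continuous fun b : (ℝ × X) × X ↦
        (b.1.1, b.1.2, b.2))).smul (hu.comp continuous_snd)) isCompact_univ
  have hquot : ContinuousAt (fun a : ℝ × X ↦
      (∫ z, coneBump a.1 a.2 z ∂μ)⁻¹ • ∫ z, coneBump a.1 a.2 z • u z ∂μ) (r, x) :=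
    (hmass.continuousAt.inv₀ (hμ.integral_coneBump_pos hr x).ne').smul hint.continuousAt
  refine hquot.congr ?_
  filter_upwards [(isOpen_lt continuous_const continuous_fst).mem_nhds hr] with a ha
  rw [mollify_of_pos ha, weightedAverage, ← integral_smul]
  refine integral_congr_ae (.of_forall fun z ↦ ?_)
  simp only [smul_smul, coneWeight, normalizedWeight, div_eq_inv_mul]

variable [SecondCountableTopology X] [CompleteSpace V] {p c₁ : ℝ} {C₄ : ℝ≥0∞}

theorem IsScaleWeight.enorm_mollify_sub_rpow_le
    (hk : IsScaleWeight n μ Set.univ (fun _ : X ↦ r) c₁ C₄ (coneWeight μ r)) (hp : 1 < p)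
    (hc₁ : 1 ≤ c₁) (hr : 0 < r) (hu : Continuous u) (hM : ∀ z, ‖u z‖ ≤ M) (x : X) :
    ‖mollify μ r u x - u x‖ₑ ^ p
      ≤ ENNReal.ofReal c₁ * ENNReal.ofReal (2 * c₁) ^ (2 * n) * ENNReal.ofReal r ^ n *
          pointEnergy n p μ u x := by
  set b := averagingKernel n Set.univ (fun _ : X ↦ r) c₁ x
  have hxx : IsAdmissible Set.univ (fun _ : X ↦ r) c₁ x x :=
    ⟨hr, Set.mem_univ x, by rw [dist_self]; positivity, le_mul_of_one_le_left hr.le hc₁⟩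
  have hpoint := hxx.inv_pow_mul_lintegral_le (μ := μ) (n := n) (p := p) (u := u)
    (zero_lt_one.trans_le hc₁)
  have hcancel : ENNReal.ofReal r ^ n * (ENNReal.ofReal r)⁻¹ ^ n = 1 := by
    rw [← mul_pow, ENNReal.mul_inv_cancel (by simpa using hr) ENNReal.ofReal_ne_top, one_pow]
  rw [mollify_of_pos hr]
  calc ‖weightedAverage μ (coneWeight μ r x) u - u x‖ₑ ^ p
      ≤ ∫⁻ z, b z * ‖u z - u x‖ₑ ^ p ∂μ :=
        (hk.isProbabilityWeight hr).enorm_weightedAverage_sub_rpow_le hu.stronglyMeasurable hM hp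
          (u x) fun z ↦ hk.ofReal_le z hr
    _ = ENNReal.ofReal r ^ n *
          ((ENNReal.ofReal r)⁻¹ ^ n * ∫⁻ z, b z * ‖u z - u x‖ₑ ^ p ∂μ) := by
        rw [← mul_assoc, hcancel, one_mul]
    _ ≤ ENNReal.ofReal r ^ n * (ENNReal.ofReal c₁ * ENNReal.ofReal (2 * c₁) ^ (2 * n) *
          pointEnergy n p μ u x) := by
        gcongr
    _ = _ := by ring

theorem IsScaleWeight.enorm_mollify_sub_mollify_half_rpow_le
    (hk : IsScaleWeight n μ Set.univ (fun _ : X ↦ r) c₁ C₄ (coneWeight μ r))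
    (hk' : IsScaleWeight n μ Set.univ (fun _ : X ↦ r / 2) c₁ C₄ (coneWeight μ (r / 2)))
    (hp : 1 < p) (hc₁ : 1 ≤ c₁) (hr : 0 < r) (hu : Continuous u) (hM : ∀ z, ‖u z‖ ≤ M) (x : X) :
    ‖mollify μ r u x - mollify μ (r / 2) u x‖ₑ ^ p
      ≤ 2 ^ n * localOscillation n p μ Set.univ (fun _ : X ↦ r) c₁ u x := by
  set b := averagingKernel n Set.univ (fun _ : X ↦ r) c₁ x
  have hpoint (z : X) : ‖u z - mollify μ (r / 2) u x‖ₑ ^ p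
      ≤ 2 ^ n * ∫⁻ z', b z' * ‖u z' - u z‖ₑ ^ p ∂μ := by
    rw [enorm_sub_rev, mollify_of_pos (half_pos hr), ← lintegral_const_mul' _ _ (by finiteness)]
    simp only [← mul_assoc]
    exact (hk'.isProbabilityWeight (half_pos hr)).enorm_weightedAverage_sub_rpow_le
      hu.stronglyMeasurable hM hp (u z) fun z' ↦
        (hk'.ofReal_le z' (half_pos hr)).trans (averagingKernel_half_le n hc₁ x z')
  rw [localOscillation, ← lintegral_const_mul' _ _ (by finiteness), mollify_of_pos hr]
  refine ((hk.isProbabilityWeight hr).enorm_weightedAverage_sub_rpow_le hu.stronglyMeasurable hM hp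
    _ fun z ↦ hk.ofReal_le z hr).trans (lintegral_mono fun z ↦ ?_)
  rw [mul_left_comm]
  gcongr
  exact hpoint z

variable [IsFiniteMeasure μ]

theorem IsAhlforsRegular.norm_mollify_sub_le (hμ : IsAhlforsRegular μ n c C)
    (hu : Continuous u) (hM : ∀ z, ‖u z‖ ≤ M) (hr : 0 < r) {x : X} {a : V} {ε : ℝ} (hε : 0 ≤ ε)
    (h : ∀ z, dist x z < r → ‖u z - a‖ ≤ ε) : ‖mollify μ r u x - a‖ ≤ ε := by
  rw [mollify_of_pos hr]
  refine (hμ.isProbabilityWeight_coneWeight hr x).norm_weightedAverage_sub_le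
    hu.stronglyMeasurable hM hε fun z hz ↦ h z (dist_lt_of_coneBump_ne_zero ?_)
  exact (div_ne_zero_iff.1 hz).1

theorem IsAhlforsRegular.norm_mollify_le (hμ : IsAhlforsRegular μ n c C) (hu : Continuous u)
    (hM : ∀ z, ‖u z‖ ≤ M) (hr : 0 < r) (x : X) : ‖mollify μ r u x‖ ≤ M := by
  simpa using hμ.norm_mollify_sub_le hu hM hr (x := x) (a := 0) ((norm_nonneg _).trans (hM x))
    fun z _ ↦ by simpa using hM z

theorem IsScaleWeight.dist_mollify_le
    (hk : IsScaleWeight n μ Set.univ (fun _ : X ↦ r) c₁ C₄ (coneWeight μ r))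
    (hμ : IsAhlforsRegular μ n c C) (hC₄ : C₄ ≠ ⊤) (hc₁ : 1 ≤ c₁) (hr : 0 < r)
    (hu : Continuous u) (hM : ∀ z, ‖u z‖ ≤ M) (x y : X) :
    dist (mollify μ r u x) (mollify μ r u y)
      ≤ ((C₄ * (ENNReal.ofReal c₁ * C * ENNReal.ofReal (2 * c₁) ^ n)).toReal + 4) * M * r⁻¹ *
          dist x y := by
  have hM0 : 0 ≤ M := (norm_nonneg _).trans (hM x)
  have := hμ.upper_ne_top
  set B := ENNReal.ofReal c₁ * C * ENNReal.ofReal (2 * c₁) ^ n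
  have hnorm := hμ.norm_mollify_le hu hM hr
  rcases lt_or_ge (2 * dist x y) r with hxy | hxy
  · have h := hk.edist_averageAtScale_le ((LipschitzWith.const r).weaken zero_le_one) .univ
      (hμ.lintegral_averagingKernel_right_le hc₁) hu hM hr hxy
    calc dist (mollify μ r u x) (mollify μ r u y)
        ≤ (C₄ * (ENNReal.ofReal r)⁻¹ * B * ENNReal.ofReal M * edist x y).toReal := by
          have : (ENNReal.ofReal r)⁻¹ ≠ ⊤ := by simpa using hr
          rw [dist_edist]
          exact ENNReal.toReal_mono (by finiteness) h
      _ = (C₄ * B).toReal * M * r⁻¹ * dist x y := by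
          simp only [ENNReal.toReal_mul, ENNReal.toReal_inv, ENNReal.toReal_ofReal hr.le,
            ENNReal.toReal_ofReal hM0, dist_edist]
          ring
      _ ≤ ((C₄ * B).toReal + 4) * M * r⁻¹ * dist x y := by
          gcongr
          linarith
  · have hone : 1 ≤ 2 * (r⁻¹ * dist x y) := by
      rw [← div_eq_inv_mul, mul_div_assoc', le_div_iff₀ hr]
      linarith
    calc dist (mollify μ r u x) (mollify μ r u y) ≤ 2 * M * 1 := by
          rw [dist_eq_norm]
          linarith [norm_sub_le (mollify μ r u x) (mollify μ r u y), hnorm x, hnorm y]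
      _ ≤ 2 * M * (2 * (r⁻¹ * dist x y)) := by gcongr
      _ ≤ ((C₄ * B).toReal + 4) * M * r⁻¹ * dist x y := by
          have : 0 ≤ (C₄ * B).toReal * (M * (r⁻¹ * dist x y)) := by positivity
          linarith

theorem IsAhlforsRegular.continuousAt_mollify_of_nonpos
    (hμ : IsAhlforsRegular μ n c C) (hu : Continuous u) (hM : ∀ z, ‖u z‖ ≤ M) (hr : r ≤ 0)
    (x : X) : ContinuousAt (fun a : ℝ × X ↦ mollify μ a.1 u a.2) (r, x) := by
  rw [Metric.continuousAt_iff]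
  intro ε hε
  obtain ⟨η, hη, h⟩ := Metric.continuousAt_iff.1 (hu.continuousAt (x := x)) (ε / 2) (half_pos hε)
  refine ⟨η / 2, half_pos hη, ?_⟩
  rintro ⟨t, y⟩ hdist
  obtain ⟨ht, hy⟩ : |t - r| < η / 2 ∧ dist y x < η / 2 := by
    simpa [Prod.dist_eq, Real.dist_eq] using hdist
  rw [mollify_of_nonpos hr]
  rcases le_or_gt t 0 with ht0 | ht0
  · rw [mollify_of_nonpos ht0]
    exact (h (by linarith)).trans (half_lt_self hε)
  · rw [dist_eq_norm]
    refine (hμ.norm_mollify_sub_le hu hM ht0 (half_pos hε).le fun z hz ↦ ?_).trans_lt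
      (half_lt_self hε)
    rw [← dist_eq_norm]
    exact (h (by linarith [dist_triangle_left z x y, le_abs_self (t - r)])).le

theorem IsAhlforsRegular.continuous_uncurry_mollify [CompactSpace X] (hμ : IsAhlforsRegular μ n c C)
    (hu : Continuous u) (hM : ∀ z, ‖u z‖ ≤ M) :
    Continuous fun a : ℝ × X ↦ mollify μ a.1 u a.2 :=
  continuous_iff_continuousAt.2 fun a ↦ (le_or_gt a.1 0).elim
    (fun h ↦ hμ.continuousAt_mollify_of_nonpos hu hM h a.2)
    fun h ↦ hμ.continuousAt_mollify_of_pos hu h a.2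

theorem IsAhlforsRegular.continuous_mollify [CompactSpace X] (hμ : IsAhlforsRegular μ n c C)
    (hu : Continuous u) (hM : ∀ z, ‖u z‖ ≤ M) (r : ℝ) : Continuous (mollify μ r u) :=
  (hμ.continuous_uncurry_mollify hu hM).comp (.prodMk_right r)

end Mollify

/-! ### Existence of minimizers -/

open Filter in
theorem ae_tendsto_zero_of_tsum_lintegral_enorm_rpow_ne_top {α E : Type*} [MeasurableSpace α]
    [NormedAddCommGroup E] {μ : Measure α} {p : ℝ} (hp : 0 < p) {f : ℕ → α → E}
    (hf : ∀ k, AEStronglyMeasurable (f k) μ) (h : ∑' k, ∫⁻ x, ‖f k x‖ₑ ^ p ∂μ ≠ ⊤) :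
    ∀ᵐ x ∂μ, Tendsto (fun k ↦ f k x) atTop (nhds 0) := by
  have hmeas (k : ℕ) : AEMeasurable (fun x ↦ ‖f k x‖ₑ ^ p) μ := (hf k).enorm.pow_const p
  rw [← lintegral_tsum hmeas] at h
  filter_upwards [ae_lt_top' (AEMeasurable.tsum hmeas) h] with x hx
  have hpow := (ENNReal.tendsto_atTop_zero_of_tsum_ne_top hx.ne).ennrpow_const p⁻¹
  rw [ENNReal.zero_rpow_of_pos (inv_pos.2 hp)] at hpow
  simpa only [ENNReal.rpow_rpow_inv hp.ne', tendsto_zero_iff_enorm_tendsto_zero] using hpow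

theorem norm_le_mul_pow_of_enorm_rpow_le {E : Type*} [NormedAddCommGroup E] {p B θ : ℝ}
    {K : ℝ≥0∞} {v : E} {j : ℕ} (hp : 0 < p) (hK : K ≠ ⊤) (hB : 0 ≤ B) (hθ : 0 ≤ θ)
    (h : ‖v‖ₑ ^ p ≤ K * ENNReal.ofReal (B * θ ^ j)) :
    ‖v‖ ≤ (K.toReal * B) ^ p⁻¹ * (θ ^ p⁻¹) ^ j := by
  have hreal : ‖v‖ ^ p ≤ K.toReal * B * θ ^ j := by
    have := ENNReal.toReal_mono (by finiteness) h
    rwa [← ENNReal.toReal_rpow, toReal_enorm, ENNReal.toReal_mul,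
      ENNReal.toReal_ofReal (by positivity), ← mul_assoc] at this
  calc ‖v‖ = (‖v‖ ^ p) ^ p⁻¹ := (Real.rpow_rpow_inv (norm_nonneg v) hp.ne').symm
    _ ≤ (K.toReal * B * θ ^ j) ^ p⁻¹ := by gcongr
    _ = (K.toReal * B) ^ p⁻¹ * (θ ^ p⁻¹) ^ j := by
        rw [Real.mul_rpow (by positivity) (by positivity), Real.rpow_pow_comm hθ]

theorem dist_le_mul_pow_of_dist_succ_le {E : Type*} [PseudoMetricSpace E] {a : ℕ → E} {A κ : ℝ}
    (hA : 0 ≤ A) (hκ : 0 ≤ κ) (hκ1 : κ < 1) {i k : ℕ} (hik : i ≤ k)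
    (h : ∀ j < k, dist (a j) (a (j + 1)) ≤ A * κ ^ j) :
    dist (a i) (a k) ≤ A / (1 - κ) * κ ^ i :=
  calc dist (a i) (a k) ≤ ∑ j ∈ Finset.Ico i k, A * κ ^ j :=
        dist_le_Ico_sum_of_dist_le hik fun _ hj ↦ h _ hj
    _ = A * ∑ j ∈ Finset.Ico i k, κ ^ j := (Finset.mul_sum _ _ _).symm
    _ ≤ A * (κ ^ i / (1 - κ)) := by
        gcongr
        exact geom_sum_Ico_le_of_lt_one hκ hκ1
    _ = A / (1 - κ) * κ ^ i := mul_div_left_comm .. |>.trans (mul_comm _ _)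

open Filter in
theorem exists_tendstoUniformly_subseq {X V : Type*} [PseudoMetricSpace X] [CompactSpace X]
    [MetricSpace V] [ProperSpace V] {w : ℕ → X → V} (hw : ∀ k, Continuous (w k)) (a : V)
    {M : ℝ} (hM : ∀ k x, dist (w k x) a ≤ M)
    (hosc : ∀ ε > 0, ∃ L ≥ (0 : ℝ), ∀ k x y, dist (w k x) (w k y) ≤ ε + L * dist x y) :
    ∃ (W : X → V) (φ : ℕ → ℕ), Continuous W ∧ StrictMono φ ∧
      TendstoUniformly (fun k ↦ w (φ k)) W atTop := by
  set f : ℕ → BoundedContinuousFunction X V := fun k ↦ .mkOfCompact ⟨w k, hw k⟩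
  have hcompact : IsCompact (closure (Set.range f)) := by
    refine BoundedContinuousFunction.arzela_ascoli (Metric.closedBall a M)
      (isCompact_closedBall _ _) _ ?_ fun x₀ ↦ Metric.equicontinuousAt_iff.2 fun ε hε ↦ ?_
    · rintro _ x ⟨k, rfl⟩
      exact hM k x
    · obtain ⟨L, hL, h⟩ := hosc (ε / 2) (half_pos hε)
      refine ⟨ε / 2 / (L + 1), by positivity, ?_⟩
      rintro x hx ⟨_, k, rfl⟩
      rw [lt_div_iff₀ (by positivity), dist_comm] at hx
      calc dist (w k x₀) (w k x) ≤ ε / 2 + L * dist x₀ x := h k x₀ x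
        _ ≤ ε / 2 + dist x₀ x * (L + 1) := by linarith [dist_nonneg (x := x₀) (y := x)]
        _ < ε := by linarith
  obtain ⟨W, -, φ, hφ, hW⟩ :=
    hcompact.tendsto_subseq fun k ↦ subset_closure (Set.mem_range_self k)
  exact ⟨W, φ, W.continuous, hφ, BoundedContinuousFunction.tendsto_iff_tendstoUniformly.1 hW⟩

section LowerSemicontinuity

variable {X V : Type*} [MetricSpace X] [NormedAddCommGroup V] {n : ℕ} {p : ℝ}

open Filter

theorem energyDensity_le_liminf (hp : 0 < p) {w : ℕ → X → V} {W : X → V} {x y : X}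
    (hx : Tendsto (fun k ↦ w k x) atTop (nhds (W x)))
    (hy : Tendsto (fun k ↦ w k y) atTop (nhds (W y))) :
    energyDensity n p W x y ≤ liminf (fun k ↦ energyDensity n p (w k) x y) atTop := by
  rcases eq_or_ne x y with rfl | hxy
  · simp [energyDensity, hp]
  · have hfinite : rieszKernel n x y ≠ ⊤ := by
      simp [rieszKernel, hxy]
    refine (Tendsto.liminf_eq ?_).ge
    exact ENNReal.Tendsto.mul_const
      ((ENNReal.continuous_rpow_const.tendsto _).comp (hx.sub hy).enorm) (.inr hfinite)

variable [MeasurableSpace X] [BorelSpace X] {μ : Measure X}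

theorem localEnergy_univ_le_liminf [SecondCountableTopology X] [SFinite μ] (hp : 0 < p)
    {w : ℕ → X → V} (hw : ∀ k, Continuous (w k)) {W : X → V}
    (hW : ∀ᵐ x ∂μ, Tendsto (fun k ↦ w k x) atTop (nhds (W x))) :
    localEnergy n p μ W Set.univ ≤ liminf (fun k ↦ localEnergy n p μ (w k) Set.univ) atTop := by
  simp only [localEnergy, Measure.restrict_univ]
  calc ∫⁻ x, pointEnergy n p μ W x ∂μ
      ≤ ∫⁻ x, liminf (fun k ↦ pointEnergy n p μ (w k) x) atTop ∂μ := by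
        refine lintegral_mono_ae ?_
        filter_upwards [hW] with x hx
        refine (lintegral_mono_ae ?_).trans (lintegral_liminf_le fun k ↦
          (measurable_energyDensity n p (hw k)).of_uncurry_left)
        filter_upwards [hW] with y hy
        exact energyDensity_le_liminf hp hx hy
    _ ≤ liminf (fun k ↦ ∫⁻ x, pointEnergy n p μ (w k) x ∂μ) atTop :=
        lintegral_liminf_le fun k ↦ measurable_pointEnergy n p μ (hw k)

theorem IsAhlforsRegular.localEnergy_lt_top_of_lipschitzWith [CompactSpace X] [IsFiniteMeasure μ]
    {c C : ℝ≥0∞} (hμ : IsAhlforsRegular μ n c C) (hp : (n : ℝ) < p) {L : NNReal} {w : X → V}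
    (hw : LipschitzWith L w) : localEnergy n p μ w Set.univ < ⊤ := by
  have hp0 : 0 < p := (Nat.cast_nonneg n).trans_lt hp
  obtain ⟨C₁, hC₁, hball⟩ := hμ.exists_setLIntegral_ball_le hp
  set r := Metric.diam (Set.univ : Set X) + 1
  have hr : 0 < r := add_pos_of_nonneg_of_pos Metric.diam_nonneg one_pos
  have hball_univ (x : X) : Metric.ball x r = Set.univ := Set.eq_univ_of_forall fun y ↦
    (Metric.dist_le_diam_of_mem isCompact_univ.isBounded (Set.mem_univ y)
      (Set.mem_univ x)).trans_lt (lt_add_one _)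
  have hdensity (x y : X) :
      energyDensity n p w x y ≤ (L : ℝ≥0∞) ^ p * (edist x y ^ p * rieszKernel n x y) := by
    rw [energyDensity, ← mul_assoc, ← ENNReal.mul_rpow_of_nonneg _ _ hp0.le, ← edist_eq_enorm_sub]
    gcongr
    exact hw x y
  have hpoint (x : X) :
      pointEnergy n p μ w x ≤ (L : ℝ≥0∞) ^ p * (C₁ * ENNReal.ofReal r ^ (p - n)) := by
    refine (lintegral_mono (hdensity x)).trans ?_
    rw [lintegral_const_mul' _ _ (ENNReal.rpow_ne_top_of_nonneg hp0.le ENNReal.coe_ne_top)]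
    gcongr
    simpa only [hball_univ, Measure.restrict_univ] using hball x r hr
  have : ENNReal.ofReal r ^ (p - n) ≠ ⊤ :=
    ENNReal.rpow_ne_top_of_nonneg (sub_pos.2 hp).le ENNReal.ofReal_ne_top
  have : (L : ℝ≥0∞) ^ p ≠ ⊤ := ENNReal.rpow_ne_top_of_nonneg hp0.le ENNReal.coe_ne_top
  refine (lintegral_mono hpoint).trans_lt ?_
  rw [lintegral_const]
  finiteness

end LowerSemicontinuity

theorem IsAdmissible.mem_ball {X : Type*} [MetricSpace X] {r c₁ s : ℝ} {x z : X} (hc₁ : 0 < c₁)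
    (hz : IsAdmissible Set.univ (fun _ ↦ r) c₁ x z) (hs : 2 * c₁ * r ≤ s) :
    z ∈ Metric.ball x s := by
  have : 0 < c₁ * r := mul_pos hc₁ hz.scale_pos
  rw [Metric.mem_ball']
  linarith [hz.dist_le]

section MollifyDecay

variable {X : Type*} [MetricSpace X] [MeasurableSpace X] {V : Type*} [NormedAddCommGroup V]
  {μ : Measure X} {n k : ℕ} {c C : ℝ≥0∞} {p R B θ ρ A κ D : ℝ} {u : X → V}

/-- Geometric decay of the energy of `u` in the balls of radius `2⁻ʲ R`, down to `j = k`. -/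
def HasEnergyDecay (n : ℕ) (p : ℝ) (μ : Measure X) (R B θ : ℝ) (k : ℕ) (u : X → V) : Prop :=
  ∀ j ≤ k, ∀ x, localEnergy n p μ u (Metric.ball x ((1 / 2) ^ j * R)) ≤ ENNReal.ofReal (B * θ ^ j)

theorem HasEnergyDecay.norm_le {E : Type*} [NormedAddCommGroup E] {K : ℝ≥0∞} {v : E} {j : ℕ}
    {x : X} (hu : HasEnergyDecay n p μ R B θ k u) (hp : 0 < p) (hK : K ≠ ⊤) (hB : 0 ≤ B)
    (hθ : 0 ≤ θ) (hj : j ≤ k)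
    (hv : ‖v‖ₑ ^ p ≤ K * localEnergy n p μ u (Metric.ball x ((1 / 2) ^ j * R))) :
    ‖v‖ ≤ (K.toReal * B) ^ p⁻¹ * (θ ^ p⁻¹) ^ j :=
  norm_le_mul_pow_of_enorm_rpow_le hp hK hB hθ <| hv.trans <| by
    gcongr
    exact hu j hj x

variable [NormedSpace ℝ V]

/-- Control of the mollifications of `u` at the scales `2⁻ʲ ρ`: they change by at most `A κʲ` from
one scale to the next as long as `j < k`, they are `D 2ʲ`-Lipschitz, and from the scale `2⁻ᵏ ρ` on
they stay `A κᵏ`-close to the unit sphere. -/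
structure HasMollifyDecay (μ : Measure X) (ρ A κ D : ℝ) (k : ℕ) (u : X → V) : Prop where
  dist_succ_le (x : X) (j : ℕ) (hj : j < k) :
    dist (mollify μ ((1 / 2) ^ j * ρ) u x) (mollify μ ((1 / 2) ^ (j + 1) * ρ) u x) ≤ A * κ ^ j
  abs_one_sub_norm_le (x : X) (r : ℝ) (hr : 0 < r) (hrk : r ≤ (1 / 2) ^ k * ρ) :
    |1 - ‖mollify μ r u x‖| ≤ A * κ ^ k
  dist_le (j : ℕ) (x y : X) :
    dist (mollify μ ((1 / 2) ^ j * ρ) u x) (mollify μ ((1 / 2) ^ j * ρ) u y) ≤ D * 2 ^ j * dist x y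

theorem HasMollifyDecay.dist_le_mul_pow (h : HasMollifyDecay μ ρ A κ D k u) (hA : 0 ≤ A)
    (hκ : 0 ≤ κ) (hκ1 : κ < 1) {j : ℕ} (hjk : j ≤ k) (x : X) :
    dist (mollify μ ((1 / 2) ^ j * ρ) u x) (mollify μ ((1 / 2) ^ k * ρ) u x)
      ≤ A / (1 - κ) * κ ^ j :=
  dist_le_mul_pow_of_dist_succ_le (a := fun j ↦ mollify μ ((1 / 2) ^ j * ρ) u x) hA hκ hκ1 hjk
    (h.dist_succ_le x)

theorem HasMollifyDecay.dist_finest_le (h : HasMollifyDecay μ ρ A κ D k u) (hA : 0 ≤ A)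
    (hκ : 0 ≤ κ) (hκ1 : κ < 1) (hD : 0 ≤ D) (j : ℕ) (x y : X) :
    dist (mollify μ ((1 / 2) ^ k * ρ) u x) (mollify μ ((1 / 2) ^ k * ρ) u y)
      ≤ 2 * (A / (1 - κ)) * κ ^ j + D * 2 ^ j * dist x y := by
  rcases le_total j k with hjk | hkj
  · have hx := h.dist_le_mul_pow hA hκ hκ1 hjk x
    have hy := h.dist_le_mul_pow hA hκ hκ1 hjk y
    have hxy := dist_triangle4_left (mollify μ ((1 / 2) ^ j * ρ) u x)
      (mollify μ ((1 / 2) ^ j * ρ) u y) (mollify μ ((1 / 2) ^ k * ρ) u x)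
      (mollify μ ((1 / 2) ^ k * ρ) u y)
    linarith [h.dist_le j x y]
  · calc dist (mollify μ ((1 / 2) ^ k * ρ) u x) (mollify μ ((1 / 2) ^ k * ρ) u y)
        ≤ D * 2 ^ k * dist x y := h.dist_le k x y
      _ ≤ D * 2 ^ j * dist x y := by gcongr; exact one_le_two
      _ ≤ 2 * (A / (1 - κ)) * κ ^ j + D * 2 ^ j * dist x y :=
        le_add_of_nonneg_left (by have := sub_pos.2 hκ1; positivity)

variable [BorelSpace X] [SecondCountableTopology X] [CompleteSpace V] {c₁ r : ℝ} {C₄ : ℝ≥0∞}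

theorem HasEnergyDecay.dist_mollify_half_le (hu : HasEnergyDecay n p μ R B θ k u)
    (husphere : IsSphereMap u) (hp : 1 < p) (hc₁ : 1 ≤ c₁) (hB : 0 ≤ B) (hθ : 0 ≤ θ)
    (hweight : ∀ r ≤ 1, IsScaleWeight n μ Set.univ (fun _ : X ↦ r) c₁ C₄ (coneWeight μ r))
    (hr : 0 < r) (hr1 : r ≤ 1) {j : ℕ} (hj : j ≤ k) (hrj : 2 * c₁ * r ≤ (1 / 2) ^ j * R) (x : X) :
    dist (mollify μ r u x) (mollify μ (r / 2) u x)
      ≤ ((2 ^ n * (ENNReal.ofReal c₁ ^ 2 * ENNReal.ofReal (2 * c₁) ^ (2 * n))).toReal * B) ^ p⁻¹ *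
        (θ ^ p⁻¹) ^ j := by
  have hc₁0 : 0 < c₁ := zero_lt_one.trans_le hc₁
  rw [dist_eq_norm]
  refine hu.norm_le (zero_lt_one.trans hp) (by finiteness) hB hθ hj (x := x) ?_
  refine ((hweight r hr1).enorm_mollify_sub_mollify_half_rpow_le
    (hweight (r / 2) (by linarith)) hp hc₁ hr husphere.continuous
    (fun z ↦ (husphere.norm_eq_one z).le) x).trans ?_
  rw [mul_assoc (2 ^ n)]
  gcongr
  exact localOscillation_le_localEnergy hc₁0 Metric.isOpen_ball.measurableSet
    fun z hz ↦ hz.mem_ball hc₁0 hrj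

theorem HasEnergyDecay.abs_one_sub_norm_mollify_le
    (hu : HasEnergyDecay n p μ R B θ k u) (husphere : IsSphereMap u) (hp : 1 < p) (hc₁ : 0 < c₁)
    (hB : 0 ≤ B) (hθ : 0 ≤ θ)
    (hweight : IsScaleWeight n μ Set.univ (fun _ : X ↦ r) c₁ C₄ (coneWeight μ r))
    (hr : 0 < r) {j : ℕ} (hj : j ≤ k) (hrj : 2 * c₁ * r ≤ (1 / 2) ^ j * R) (x : X) :
    |1 - ‖mollify μ r u x‖|
      ≤ ((ENNReal.ofReal c₁ ^ 2 * ENNReal.ofReal (2 * c₁) ^ (2 * n)).toReal * B) ^ p⁻¹ *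
        (θ ^ p⁻¹) ^ j :=
  hu.norm_le (zero_lt_one.trans hp) (by finiteness) hB hθ hj (x := x)
    (hweight.enorm_one_sub_norm_averageAtScale_rpow_le hp hc₁ Metric.isOpen_ball.measurableSet
      (fun z hz ↦ hz.mem_ball hc₁ hrj) husphere.continuous husphere.norm_eq_one hr)

theorem IsAhlforsRegular.exists_hasMollifyDecay [IsFiniteMeasure μ]
    (hμ : IsAhlforsRegular μ n c C)
    (V : Type*) [NormedAddCommGroup V] [NormedSpace ℝ V] [CompleteSpace V]
    (hp : 1 < p) (hR : 0 < R) (hR1 : R ≤ 1) (hB : 0 ≤ B) (hθ : 0 ≤ θ) :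
    ∃ ρ A D : ℝ, 0 < ρ ∧ ρ ≤ 1 ∧ 0 ≤ A ∧ 0 ≤ D ∧ ∀ (k : ℕ) (u : X → V), IsSphereMap u →
      HasEnergyDecay n p μ R B θ k u → HasMollifyDecay μ ρ A (θ ^ p⁻¹) D k u := by
  obtain ⟨c₁, C₄, hc₁, hC₄, hweight⟩ := hμ.exists_isScaleWeight_coneWeight
  have hc₁0 : 0 < c₁ := zero_lt_one.trans_le hc₁
  set K := ENNReal.ofReal c₁ ^ 2 * ENNReal.ofReal (2 * c₁) ^ (2 * n)
  have hK : K.toReal ≤ (2 ^ n * K).toReal :=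
    ENNReal.toReal_mono (by finiteness) (le_mul_of_one_le_left' (one_le_pow₀ one_le_two))
  set D := (C₄ * (ENNReal.ofReal c₁ * C * ENNReal.ofReal (2 * c₁) ^ n)).toReal + 4
  set ρ := R / (2 * c₁)
  have hρ : 0 < ρ := by positivity
  have hρ1 : ρ ≤ 1 := div_le_one_of_le₀ (by linarith) (by positivity)
  have hscale (j : ℕ) : (1 / 2) ^ j * ρ ≤ 1 :=
    mul_le_one₀ (pow_le_one₀ (by norm_num) (by norm_num)) hρ.le hρ1
  have hball (j : ℕ) : 2 * c₁ * ((1 / 2) ^ j * ρ) = (1 / 2) ^ j * R := by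
    simp only [ρ]
    field_simp
  refine ⟨ρ, ((2 ^ n * K).toReal * B) ^ p⁻¹, D * ρ⁻¹, hρ, hρ1, by positivity, by positivity,
    fun k u hu hdecay ↦ ⟨fun x j hj ↦ ?_, fun x r hr hrk ↦ ?_, fun j x y ↦ ?_⟩⟩
  · have hhalf : (1 / 2 : ℝ) ^ (j + 1) * ρ = (1 / 2) ^ j * ρ / 2 := by ring
    rw [hhalf]
    exact hdecay.dist_mollify_half_le hu hp hc₁ hB hθ hweight (by positivity) (hscale j) hj.le
      (hball j).le x
  · refine (hdecay.abs_one_sub_norm_mollify_le hu hp hc₁0 hB hθ (hweight r (hrk.trans (hscale k)))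
      hr le_rfl ((hball k).le.trans' (by gcongr)) x).trans ?_
    gcongr
  · refine ((hweight _ (hscale j)).dist_mollify_le hμ hC₄ hc₁ (by positivity) hu.continuous
      (fun z ↦ (hu.norm_eq_one z).le) x y).trans_eq ?_
    rw [mul_inv, one_div, inv_pow, inv_inv]
    ring

end MollifyDecay

section StableClass

variable {X : Type*} [MetricSpace X] {V : Type*} [NormedAddCommGroup V] {R : ℝ} {𝒞 : Set (X → V)}

/-- A class of sphere-valued maps that is closed under modifications in balls of radius `R` and
under homotopies through sphere-valued maps, as a homotopy class is when modifications in balls do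
not change the homotopy type. -/
structure IsStableClass (R : ℝ) (𝒞 : Set (X → V)) : Prop where
  isSphereMap {u : X → V} (hu : u ∈ 𝒞) : IsSphereMap u
  mem_of_eqOn_compl_ball {u u' : X → V} {x₀ : X} (hu : u ∈ 𝒞) (hu' : IsSphereMap u')
    (h : Set.EqOn u' u (Metric.ball x₀ R)ᶜ) : u' ∈ 𝒞
  mem_of_homotopy {u : X → V} {H : unitInterval × X → V} (hu : u ∈ 𝒞) (hH : IsSphereMap H)
    (h0 : ∀ x, H (0, x) = u x) : (fun x ↦ H (1, x)) ∈ 𝒞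

variable [NormedSpace ℝ V]

open NormedSpace in
theorem IsStableClass.mem_of_norm_sub_lt_one (h𝒞 : IsStableClass R 𝒞) {w W : X → V}
    (hw : Continuous w) (hW : IsSphereMap W) (hmem : (fun x ↦ normalize (w x)) ∈ 𝒞)
    (h : ∀ x, ‖w x - W x‖ < 1) : W ∈ 𝒞 := by
  have := hW.continuous
  have hne (z : unitInterval × X) : (1 - (z.1 : ℝ)) • w z.2 + (z.1 : ℝ) • W z.2 ≠ 0 := fun h0 ↦ by
    have hcontr : ‖(1 - (z.1 : ℝ)) • (w z.2 - W z.2)‖ = 1 := by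
      nth_rw 2 [← hW.norm_eq_one z.2]
      rw [← norm_neg (W z.2)]
      congr 1
      rw [← sub_eq_zero, ← h0]
      module
    rw [norm_smul, Real.norm_of_nonneg (by linarith [z.1.2.2])] at hcontr
    exact hcontr.not_lt <|
      mul_lt_one_of_nonneg_of_lt_one_right (by linarith [z.1.2.1]) (norm_nonneg _) (h z.2)
  simpa [normalize_eq_self_of_norm_eq_one (hW.norm_eq_one _)] using
    h𝒞.mem_of_homotopy hmem (isSphereMap_normalize (by fun_prop) hne) fun x ↦ by simp

variable [MeasurableSpace X] [BorelSpace X] [CompactSpace X] {μ : Measure X} [IsFiniteMeasure μ]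
  [CompleteSpace V] {n : ℕ} {c C : ℝ≥0∞} {u : X → V}

open NormedSpace in
theorem IsStableClass.normalize_mollify_mem (h𝒞 : IsStableClass R 𝒞)
    (hμ : IsAhlforsRegular μ n c C) (hu : u ∈ 𝒞) {ρ : ℝ} (hρ : 0 ≤ ρ)
    (h : ∀ r, 0 < r → r ≤ ρ → ∀ x, mollify μ r u x ≠ 0) :
    (fun x ↦ normalize (mollify μ ρ u x)) ∈ 𝒞 := by
  have husphere := h𝒞.isSphereMap hu
  have hcont := hμ.continuous_uncurry_mollify husphere.continuous fun z ↦
    (husphere.norm_eq_one z).le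
  have hne (z : unitInterval × X) : mollify μ (z.1 * ρ) u z.2 ≠ 0 := by
    rcases le_or_gt (z.1 * ρ) 0 with h0 | h0
    · rw [mollify_of_nonpos h0, ← norm_ne_zero_iff, husphere.norm_eq_one]
      exact one_ne_zero
    · exact h _ h0 (mul_le_of_le_one_left hρ z.1.2.2) _
  have hH : IsSphereMap fun z : unitInterval × X ↦ normalize (mollify μ (z.1 * ρ) u z.2) :=
    isSphereMap_normalize (hcont.comp (by fun_prop : Continuous fun z : unitInterval × X ↦
      ((z.1 : ℝ) * ρ, z.2))) hne
  simpa using h𝒞.mem_of_homotopy hu hH fun x ↦ by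
    simp [mollify_of_nonpos, normalize_eq_self_of_norm_eq_one (husphere.norm_eq_one x)]

theorem IsAhlforsRegular.exists_half_le_norm_mollify (hμ : IsAhlforsRegular μ n c C)
    (hu : IsSphereMap u) :
    ∃ δ > 0, ∀ r, 0 < r → r ≤ δ → ∀ x, 1 / 2 ≤ ‖mollify μ r u x‖ := by
  obtain ⟨δ, hδ, h⟩ := Metric.uniformContinuous_iff.1
    (CompactSpace.uniformContinuous_of_continuous hu.continuous) (1 / 2) one_half_pos
  refine ⟨δ, hδ, fun r hr hrδ x ↦ ?_⟩
  have hclose : ‖mollify μ r u x - u x‖ ≤ 1 / 2 :=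
    hμ.norm_mollify_sub_le hu.continuous (fun z ↦ (hu.norm_eq_one z).le) hr one_half_pos.le
      fun z hz ↦ by
        rw [← dist_eq_norm, dist_comm]
        exact (h (hz.trans_le hrδ)).le
  have := norm_sub_norm_le (u x) (mollify μ r u x)
  rw [norm_sub_rev, hu.norm_eq_one] at this
  linarith

theorem IsStableClass.exists_localEnergy_lt_top (h𝒞 : IsStableClass R 𝒞)
    (hμ : IsAhlforsRegular μ n c C) {p : ℝ} (hp : (n : ℝ) < p) (hne : 𝒞.Nonempty) :
    ∃ v ∈ 𝒞, localEnergy n p μ v Set.univ < ⊤ := by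
  obtain ⟨u, hu⟩ := hne
  have husphere := h𝒞.isSphereMap hu
  obtain ⟨δ, hδ, hhalf⟩ := hμ.exists_half_le_norm_mollify husphere
  obtain ⟨c₁, C₄, hc₁, hC₄, hweight⟩ := hμ.exists_isScaleWeight_coneWeight
  have hr : 0 < min δ 1 := lt_min hδ one_pos
  obtain ⟨L, hL⟩ : ∃ L, LipschitzWith L (mollify μ (min δ 1) u) :=
    ⟨_, LipschitzWith.of_dist_le' <| (hweight _ (min_le_right δ 1)).dist_mollify_le hμ hC₄ hc₁ hr
      husphere.continuous fun z ↦ (husphere.norm_eq_one z).le⟩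
  refine ⟨_, h𝒞.normalize_mollify_mem hμ hu hr.le fun r hr hrδ x ↦ ?_,
    hμ.localEnergy_lt_top_of_lipschitzWith hp (LipschitzWith.of_dist_le_mul (K := 4 * L)
      fun x y ↦ ?_)⟩
  · exact norm_pos_iff.1 (one_half_pos.trans_le (hhalf r hr (hrδ.trans (min_le_left _ _)) x))
  · calc dist _ _ ≤ 4 * dist (mollify μ (min δ 1) u x) (mollify μ (min δ 1) u y) := by
          simpa only [dist_eq_norm] using
            norm_normalize_sub_le (hhalf _ hr (min_le_left _ _) x) (mollify μ (min δ 1) u y)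
      _ ≤ 4 * (L * dist x y) := by
          gcongr
          exact hL.dist_le_mul x y
      _ = _ := (mul_assoc _ _ _).symm

end StableClass

theorem exists_mem_forall_le_add {α : Type*} {s : Set α} (hs : s.Nonempty) (f : α → ℝ≥0∞)
    {ε : ℝ≥0∞} (hε : ε ≠ 0) : ∃ u ∈ s, ∀ v ∈ s, f u ≤ f v + ε := by
  have hinf (v : α) (hv : v ∈ s) : ⨅ w ∈ s, f w ≤ f v := iInf₂_le v hv
  rcases eq_or_ne (⨅ w ∈ s, f w) ⊤ with htop | htop
  · obtain ⟨u, hu⟩ := hs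
    refine ⟨u, hu, fun v hv ↦ ?_⟩
    simp [top_le_iff.1 (htop.symm.trans_le (hinf v hv))]
  · obtain ⟨u, hu, hlt⟩ : ∃ u ∈ s, f u < (⨅ w ∈ s, f w) + ε := by
      simpa only [iInf_lt_iff, exists_prop] using ENNReal.lt_add_right htop hε
    exact ⟨u, hu, fun v hv ↦ hlt.le.trans (by gcongr; exact hinf v hv)⟩

section Minimizer

open Filter

variable {X : Type*} [MetricSpace X] [MeasurableSpace X] [BorelSpace X] {V : Type*}
  [NormedAddCommGroup V] [NormedSpace ℝ V] {μ : Measure X} [IsFiniteMeasure μ] {n : ℕ}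
  {c C : ℝ≥0∞} {p R ρ A κ D : ℝ} {𝒞 : Set (X → V)} {u : ℕ → X → V}

theorem ofReal_one_half_pow_mul_pow_le (hn : n ≠ 0) (hρ : 0 ≤ ρ) (hρ1 : ρ ≤ 1) (k : ℕ) :
    ENNReal.ofReal ((1 / 2) ^ k * ρ) ^ n ≤ 2⁻¹ ^ k := by
  have hpow : (1 / 2 : ℝ) ^ k ≤ 1 := pow_le_one₀ (by norm_num) (by norm_num)
  calc ENNReal.ofReal ((1 / 2) ^ k * ρ) ^ n ≤ ENNReal.ofReal ((1 / 2) ^ k * ρ) :=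
        pow_le_of_le_one zero_le (ENNReal.ofReal_le_one.2 (mul_le_one₀ hpow hρ hρ1)) hn
    _ ≤ ENNReal.ofReal ((1 / 2) ^ k) :=
        ENNReal.ofReal_le_ofReal (mul_le_of_le_one_right (by positivity) hρ1)
    _ = 2⁻¹ ^ k := by
        rw [ENNReal.ofReal_pow (by norm_num), one_div, ENNReal.ofReal_inv_of_pos two_pos,
          ENNReal.ofReal_ofNat]

theorem IsAhlforsRegular.ae_tendsto_mollify_sub [CompactSpace X] [CompleteSpace V]
    (hμ : IsAhlforsRegular μ n c C) (hn : n ≠ 0) (hp : 1 < p) (hρ : 0 < ρ) (hρ1 : ρ ≤ 1)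
    (hu : ∀ k, IsSphereMap (u k)) {M : ℝ≥0∞} (hM : M ≠ ⊤)
    (hE : ∀ k, localEnergy n p μ (u k) Set.univ ≤ M) :
    ∀ᵐ x ∂μ, Tendsto (fun k ↦ mollify μ ((1 / 2) ^ k * ρ) (u k) x - u k x) atTop (nhds 0) := by
  obtain ⟨c₁, C₄, hc₁, -, hweight⟩ := hμ.exists_isScaleWeight_coneWeight
  set K := ENNReal.ofReal c₁ * ENNReal.ofReal (2 * c₁) ^ (2 * n)
  have hu1 (k : ℕ) (z : X) : ‖u k z‖ ≤ 1 := ((hu k).norm_eq_one z).le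
  have hint (k : ℕ) : ∫⁻ x, ‖mollify μ ((1 / 2) ^ k * ρ) (u k) x - u k x‖ₑ ^ p ∂μ
      ≤ K * M * 2⁻¹ ^ k := by
    have hr : 0 < (1 / 2) ^ k * ρ := by positivity
    have hr1 : (1 / 2) ^ k * ρ ≤ 1 :=
      mul_le_one₀ (pow_le_one₀ (by norm_num) (by norm_num)) hρ.le hρ1
    have hscale := ofReal_one_half_pow_mul_pow_le hn hρ.le hρ1 k
    calc ∫⁻ x, ‖mollify μ ((1 / 2) ^ k * ρ) (u k) x - u k x‖ₑ ^ p ∂μ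
        ≤ ∫⁻ x, K * ENNReal.ofReal ((1 / 2) ^ k * ρ) ^ n * pointEnergy n p μ (u k) x ∂μ :=
          lintegral_mono <| (hweight _ hr1).enorm_mollify_sub_rpow_le hp hc₁ hr (hu k).continuous
            (hu1 k)
      _ = K * ENNReal.ofReal ((1 / 2) ^ k * ρ) ^ n * localEnergy n p μ (u k) Set.univ := by
          rw [lintegral_const_mul' _ _ (by finiteness), localEnergy, Measure.restrict_univ]
      _ ≤ K * 2⁻¹ ^ k * M := mul_le_mul' (mul_le_mul_right hscale K) (hE k)
      _ = K * M * 2⁻¹ ^ k := mul_right_comm _ _ _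
  refine ae_tendsto_zero_of_tsum_lintegral_enorm_rpow_ne_top (zero_lt_one.trans hp)
    (fun k ↦ ((hμ.continuous_mollify (hu k).continuous (hu1 k) _).sub
      (hu k).continuous).aestronglyMeasurable) ((ENNReal.tsum_le_tsum hint).trans_lt ?_).ne
  rw [ENNReal.tsum_mul_left, ENNReal.tsum_geometric, ENNReal.one_sub_inv_two, inv_inv]
  finiteness

theorem exists_tendstoUniformly_mollify [CompactSpace X] [ProperSpace V]
    (hμ : IsAhlforsRegular μ n c C) (hρ : 0 < ρ) (hA : 0 ≤ A) (hκ : 0 ≤ κ) (hκ1 : κ < 1)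
    (hD : 0 ≤ D) (hu : ∀ k, IsSphereMap (u k)) (h : ∀ k, HasMollifyDecay μ ρ A κ D k (u k)) :
    ∃ (W : X → V) (φ : ℕ → ℕ), IsSphereMap W ∧ StrictMono φ ∧
      TendstoUniformly (fun k ↦ mollify μ ((1 / 2) ^ φ k * ρ) (u (φ k))) W atTop := by
  have hu1 (k : ℕ) (z : X) : ‖u k z‖ ≤ 1 := ((hu k).norm_eq_one z).le
  have hr (k : ℕ) : 0 < (1 / 2) ^ k * ρ := by positivity
  have hpow : Tendsto (fun j : ℕ ↦ κ ^ j) atTop (nhds 0) :=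
    tendsto_pow_atTop_nhds_zero_of_lt_one hκ hκ1
  obtain ⟨W, φ, hWcont, hφ, hW⟩ := exists_tendstoUniformly_subseq
    (w := fun k ↦ mollify μ ((1 / 2) ^ k * ρ) (u k)) (a := 0) (M := 1)
    (fun k ↦ hμ.continuous_mollify (hu k).continuous (hu1 k) _)
    (fun k x ↦ by simpa using hμ.norm_mollify_le (hu k).continuous (hu1 k) (hr k) x)
    fun ε hε ↦ by
      have hosc : Tendsto (fun j : ℕ ↦ 2 * (A / (1 - κ)) * κ ^ j) atTop (nhds 0) := by
        simpa using hpow.const_mul (2 * (A / (1 - κ)))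
      obtain ⟨j, hj⟩ := (hosc.eventually_lt_const hε).exists
      refine ⟨D * 2 ^ j, by positivity, fun k x y ↦ ?_⟩
      exact ((h k).dist_finest_le hA hκ hκ1 hD j x y).trans (by gcongr)
  refine ⟨W, φ, ⟨hWcont, fun x ↦ ?_⟩, hφ, hW⟩
  have hnorm : Tendsto (fun k ↦ |1 - ‖mollify μ ((1 / 2) ^ φ k * ρ) (u (φ k)) x‖|) atTop
      (nhds 0) :=
    squeeze_zero (fun _ ↦ abs_nonneg _) (fun k ↦ (h (φ k)).abs_one_sub_norm_le x _ (hr _) le_rfl)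
      (by simpa using (hpow.comp hφ.tendsto_atTop).const_mul A)
  have := tendsto_nhds_unique ((hW.tendsto_at x).norm.const_sub 1).abs hnorm
  linarith [abs_eq_zero.1 this]

theorem IsStableClass.mem_of_tendstoUniformly_mollify [CompactSpace X] [CompleteSpace V]
    (h𝒞 : IsStableClass R 𝒞) (hμ : IsAhlforsRegular μ n c C) (hρ : 0 ≤ ρ) (hκ : 0 ≤ κ)
    (hκ1 : κ < 1) (hu : ∀ k, u k ∈ 𝒞) (h : ∀ k, HasMollifyDecay μ ρ A κ D k (u k))
    {W : X → V} (hWsphere : IsSphereMap W) {φ : ℕ → ℕ} (hφ : StrictMono φ)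
    (hW : TendstoUniformly (fun k ↦ mollify μ ((1 / 2) ^ φ k * ρ) (u (φ k))) W atTop) :
    W ∈ 𝒞 := by
  have hpow : Tendsto (fun k ↦ A * κ ^ φ k) atTop (nhds 0) := by
    simpa using ((tendsto_pow_atTop_nhds_zero_of_lt_one hκ hκ1).comp
      hφ.tendsto_atTop).const_mul A
  obtain ⟨k, hclose, hsphere⟩ :=
    ((Metric.tendstoUniformly_iff.1 hW 1 one_pos).and (hpow.eventually_lt_const one_pos)).exists
  have huk := h𝒞.isSphereMap (hu (φ k))
  refine h𝒞.mem_of_norm_sub_lt_one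
    (hμ.continuous_mollify huk.continuous (fun z ↦ (huk.norm_eq_one z).le) ((1 / 2) ^ φ k * ρ))
    hWsphere (h𝒞.normalize_mollify_mem hμ (hu (φ k)) (mul_nonneg (by positivity) hρ)
      fun r hr hrk x h0 ↦ ?_) fun x ↦ ?_
  · have := (h (φ k)).abs_one_sub_norm_le x r hr hrk
    rw [h0, norm_zero, sub_zero, abs_one] at this
    linarith
  · simpa only [dist_eq_norm, norm_sub_rev] using hclose x

theorem IsStableClass.exists_minimizing_seq [PreconnectedSpace X] [CompactSpace X]
    [CompleteSpace V] (h𝒞 : IsStableClass R 𝒞) (hμ : IsAhlforsRegular μ n c C)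
    (hp : (n : ℝ) < p) (hp1 : 1 < p) (hfar : ∀ x : X, ∃ y, 1 ≤ dist y x) (hR : 0 ≤ R) (hR1 : R ≤ 1)
    (hne : 𝒞.Nonempty) :
    ∃ (u : ℕ → X → V) (θ B : ℝ), 0 < θ ∧ θ < 1 ∧ 0 ≤ B ∧ (∀ k, u k ∈ 𝒞) ∧
      (∀ k, ∀ v ∈ 𝒞, localEnergy n p μ (u k) Set.univ
        ≤ localEnergy n p μ v Set.univ + ENNReal.ofReal (θ ^ k)) ∧
      ∀ k, HasEnergyDecay n p μ R B θ k (u k) := by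
  obtain ⟨v₀, hv₀, hfinite⟩ := h𝒞.exists_localEnergy_lt_top hμ hp hne
  set M := (localEnergy n p μ v₀ Set.univ).toReal + 1
  have hM : 0 < M := by positivity
  obtain ⟨θ, hθ, hθ1, hdecay⟩ := hμ.exists_localEnergy_ball_le_pow V hp hp1 hfar hM hR hR1
  have : 0 < 1 - θ := sub_pos.2 hθ1
  choose u hu hmin using fun k : ℕ ↦ exists_mem_forall_le_add hne
    (fun v ↦ localEnergy n p μ v Set.univ) (ε := ENNReal.ofReal (θ ^ k))
    (ENNReal.ofReal_pos.2 (pow_pos hθ k)).ne'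
  refine ⟨u, θ, M + 1 / (1 - θ), hθ, hθ1, by positivity, hu, hmin, fun k j hjk x ↦ ?_⟩
  have hbound : localEnergy n p μ (u k) Set.univ ≤ ENNReal.ofReal M := by
    refine (hmin k v₀ hv₀).trans ?_
    rw [ENNReal.ofReal_add ENNReal.toReal_nonneg zero_le_one, ENNReal.ofReal_toReal hfinite.ne]
    gcongr
    exact pow_le_one₀ hθ.le hθ1.le
  refine (hdecay (u k) (θ ^ k) (by positivity) (h𝒞.isSphereMap (hu k)) hbound
    (fun u' x₀ hu' hu'eq ↦ hmin k u' (h𝒞.mem_of_eqOn_compl_ball (hu k) hu' hu'eq)) x j).trans ?_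
  refine ENNReal.ofReal_le_ofReal ?_
  calc θ ^ j * M + θ ^ k / (1 - θ) ≤ θ ^ j * M + θ ^ j / (1 - θ) := by
        gcongr _ + ?_ / _
        exact pow_le_pow_of_le_one hθ.le hθ1.le hjk
    _ = (M + 1 / (1 - θ)) * θ ^ j := by ring

theorem IsStableClass.exists_minimizer [PreconnectedSpace X] [CompactSpace X] [ProperSpace V]
    (h𝒞 : IsStableClass R 𝒞) (hμ : IsAhlforsRegular μ n c C) (hn : n ≠ 0)
    (hp : (n : ℝ) < p) (hfar : ∀ x : X, ∃ y, 1 ≤ dist y x) (hR : 0 < R)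
    (hR1 : R ≤ 1) (hne : 𝒞.Nonempty) :
    ∃ W ∈ 𝒞, localEnergy n p μ W Set.univ < ⊤ ∧
      ∀ v ∈ 𝒞, localEnergy n p μ W Set.univ ≤ localEnergy n p μ v Set.univ := by
  have hp1 : 1 < p := hp.trans_le' (by exact_mod_cast Nat.one_le_iff_ne_zero.2 hn)
  obtain ⟨v₀, hv₀, hfinite⟩ := h𝒞.exists_localEnergy_lt_top hμ hp hne
  obtain ⟨u, θ, B, hθ, hθ1, hB, hu, hmin, hdecay⟩ :=
    h𝒞.exists_minimizing_seq hμ hp hp1 hfar hR.le hR1 hne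
  have husphere (k : ℕ) := h𝒞.isSphereMap (hu k)
  obtain ⟨ρ, A, D, hρ, hρ1, hA, hD, hmollify⟩ :=
    hμ.exists_hasMollifyDecay V hp1 hR hR1 hB hθ.le
  have hκ : 0 ≤ θ ^ p⁻¹ := by positivity
  have hκ1 : θ ^ p⁻¹ < 1 := Real.rpow_lt_one hθ.le hθ1 (by positivity)
  have hmollify (k : ℕ) := hmollify k (u k) (husphere k) (hdecay k)
  obtain ⟨W, φ, hWsphere, hφ, hW⟩ :=
    exists_tendstoUniformly_mollify hμ hρ hA hκ hκ1 hD husphere hmollify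
  have hpow : Tendsto (fun k ↦ ENNReal.ofReal (θ ^ φ k)) atTop (nhds 0) := by
    simpa using ENNReal.tendsto_ofReal
      ((tendsto_pow_atTop_nhds_zero_of_lt_one hθ.le hθ1).comp hφ.tendsto_atTop)
  have hbound (k : ℕ) : localEnergy n p μ (u k) Set.univ ≤ localEnergy n p μ v₀ Set.univ + 1 :=
    (hmin k v₀ hv₀).trans (by gcongr; exact ENNReal.ofReal_le_one.2 (pow_le_one₀ hθ.le hθ1.le))
  have hae : ∀ᵐ x ∂μ, Tendsto (fun k ↦ u (φ k) x) atTop (nhds (W x)) := by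
    filter_upwards [hμ.ae_tendsto_mollify_sub hn hp1 hρ hρ1 husphere (by finiteness) hbound]
      with x hx
    simpa using (hW.tendsto_at x).sub (hx.comp hφ.tendsto_atTop)
  have hWmin (v : X → V) (hv : v ∈ 𝒞) :
      localEnergy n p μ W Set.univ ≤ localEnergy n p μ v Set.univ :=
    calc localEnergy n p μ W Set.univ
        ≤ liminf (fun k ↦ localEnergy n p μ (u (φ k)) Set.univ) atTop :=
          localEnergy_univ_le_liminf (by positivity) (fun k ↦ (husphere (φ k)).continuous) hae
      _ ≤ liminf (fun k ↦ localEnergy n p μ v Set.univ + ENNReal.ofReal (θ ^ φ k)) atTop :=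
          liminf_le_liminf (.of_forall fun k ↦ hmin (φ k) v hv)
      _ = localEnergy n p μ v Set.univ := by
          simpa using (hpow.const_add (localEnergy n p μ v Set.univ)).liminf_eq
  exact ⟨W, h𝒞.mem_of_tendstoUniformly_mollify hμ hρ.le hκ hκ1 hu hmollify hWsphere hφ hW,
    (hWmin v₀ hv₀).trans_lt hfinite, hWmin⟩

end Minimizer

/-! ### The torus -/

section Torus

variable {n : ℕ}

/-- The parametrization `t ↦ (cos tᵢ, sin tᵢ)ᵢ` of the torus by angles. -/
def torusExp (t : Fin n → ℝ) : Torus n :=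
  ⟨WithLp.toLp 2 fun q ↦ if q.2 = 0 then Real.cos (t q.1) else Real.sin (t q.1), fun i ↦ by simp⟩

theorem continuous_torusExp : Continuous (torusExp (n := n)) := by
  refine Continuous.subtype_mk ((PiLp.continuous_toLp 2 _).comp (continuous_pi fun q ↦ ?_)) _
  split_ifs <;> fun_prop

theorem torusExp_eq_iff {t : Fin n → ℝ} {x : Torus n} :
    torusExp t = x ↔ ∀ i, Real.cos (t i) = x.1 (i, 0) ∧ Real.sin (t i) = x.1 (i, 1) := by
  refine Subtype.ext_iff.trans <| PiLp.ext_iff.trans <| Prod.forall.trans <|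
    forall_congr' fun i ↦ ?_
  simp [Fin.forall_fin_two, torusExp]

theorem torusExp_eq_torusExp_iff {t s : Fin n → ℝ} :
    torusExp t = torusExp s ↔ ∀ i, (t i : Real.Angle) = s i := by
  refine torusExp_eq_iff.trans <| forall_congr' fun i ↦ ?_
  simp only [torusExp, if_true, one_ne_zero, if_false]
  exact ⟨fun h ↦ Real.Angle.cos_sin_inj h.1 h.2,
    fun h ↦ ⟨congrArg Real.Angle.cos h, congrArg Real.Angle.sin h⟩⟩

theorem exists_cos_sin_eq {a b : ℝ} (h : a ^ 2 + b ^ 2 = 1) :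
    ∃ t, Real.cos t = a ∧ Real.sin t = b := by
  have hnorm : ‖(⟨a, b⟩ : ℂ)‖ = 1 := by
    rw [← sq_eq_sq₀ (norm_nonneg _) zero_le_one, Complex.sq_norm, Complex.normSq_mk]
    linear_combination h
  have hne : (⟨a, b⟩ : ℂ) ≠ 0 := norm_ne_zero_iff.1 (hnorm ▸ one_ne_zero)
  exact ⟨Complex.arg ⟨a, b⟩, by rw [Complex.cos_arg hne, hnorm, div_one],
    by rw [Complex.sin_arg, hnorm, div_one]⟩

theorem torusExp_surjective : Function.Surjective (torusExp (n := n)) := fun x ↦ by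
  choose t hcos hsin using fun i ↦ exists_cos_sin_eq (x.2 i)
  exact ⟨t, torusExp_eq_iff.2 fun i ↦ ⟨hcos i, hsin i⟩⟩

theorem exists_torusExp_eq (a : Fin n → ℝ) (x : Torus n) :
    ∃ t ∈ Metric.closedBall a Real.pi, torusExp t = x := by
  obtain ⟨t, rfl⟩ := torusExp_surjective x
  refine ⟨fun i ↦ toIocMod Real.two_pi_pos (a i - Real.pi) (t i),
    (dist_pi_le_iff Real.pi_pos.le).2 fun i ↦ ?_,
    torusExp_eq_torusExp_iff.2 fun i ↦ Real.Angle.coe_toIocMod _ _⟩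
  obtain ⟨hl, hu⟩ := toIocMod_mem_Ioc Real.two_pi_pos (a i - Real.pi) (t i)
  rw [Real.dist_eq, abs_le]
  constructor <;> linarith

theorem image_torusExp_closedBall :
    torusExp '' Metric.closedBall (0 : Fin n → ℝ) Real.pi = Set.univ :=
  Set.eq_univ_of_forall (exists_torusExp_eq 0)

instance : CompactSpace (Torus n) :=
  ⟨image_torusExp_closedBall ▸ (isCompact_closedBall _ _).image continuous_torusExp⟩

instance : PreconnectedSpace (Torus n) :=
  (torusExp_surjective.connectedSpace continuous_torusExp).toPreconnectedSpace

theorem isQuotientMap_torusExp : Topology.IsQuotientMap (torusExp (n := n)) := by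
  have : CompactSpace (Metric.closedBall (0 : Fin n → ℝ) Real.pi) :=
    isCompact_iff_compactSpace.1 (isCompact_closedBall _ _)
  have hsurj : Function.Surjective
      (torusExp ∘ Subtype.val : Metric.closedBall (0 : Fin n → ℝ) Real.pi → Torus n) := fun x ↦
    let ⟨t, ht, hx⟩ := exists_torusExp_eq 0 x
    ⟨⟨t, ht⟩, hx⟩
  exact .of_comp continuous_subtype_val continuous_torusExp <|
    .of_surjective_continuous hsurj (continuous_torusExp.comp continuous_subtype_val)

theorem dist_torusExp_sq (t s : Fin n → ℝ) :
    dist (torusExp t) (torusExp s) ^ 2 = ∑ i, 2 * (1 - Real.cos (t i - s i)) := by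
  rw [Subtype.dist_eq, EuclideanSpace.dist_eq, Real.sq_sqrt (by positivity), Fintype.sum_prod_type]
  refine Finset.sum_congr rfl fun i _ ↦ ?_
  simp only [torusExp, Fin.sum_univ_two, Real.dist_eq, sq_abs, if_true, one_ne_zero, if_false,
    Real.cos_sub]
  linear_combination Real.cos_sq_add_sin_sq (t i) + Real.cos_sq_add_sin_sq (s i)

theorem two_mul_one_sub_cos_le_dist_torusExp_sq (t s : Fin n → ℝ) (i : Fin n) :
    2 * (1 - Real.cos (t i - s i)) ≤ dist (torusExp t) (torusExp s) ^ 2 := by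
  rw [dist_torusExp_sq]
  exact Finset.single_le_sum (f := fun i ↦ 2 * (1 - Real.cos (t i - s i)))
    (fun i _ ↦ by linarith [Real.cos_le_one (t i - s i)]) (Finset.mem_univ i)

theorem lipschitzWith_torusExp : LipschitzWith n (torusExp (n := n)) := by
  refine LipschitzWith.of_dist_le_mul fun t s ↦ ?_
  rw [NNReal.coe_natCast, ← sq_le_sq₀ dist_nonneg (by positivity), dist_torusExp_sq]
  have hcos (i : Fin n) : 2 * (1 - Real.cos (t i - s i)) ≤ dist t s ^ 2 := by
    have hle : (t i - s i) ^ 2 ≤ dist t s ^ 2 := by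
      rw [← sq_abs, ← Real.dist_eq]
      gcongr
      exact dist_le_pi_dist t s i
    linarith [Real.one_sub_sq_div_two_le_cos (x := t i - s i)]
  calc ∑ i, 2 * (1 - Real.cos (t i - s i)) ≤ n * dist t s ^ 2 := by
        simpa using Finset.sum_le_sum fun i (_ : i ∈ Finset.univ) ↦ hcos i
    _ ≤ n ^ 2 * dist t s ^ 2 := by
        gcongr
        exact_mod_cast Nat.le_self_pow two_ne_zero n
    _ = (n * dist t s) ^ 2 := (mul_pow _ _ 2).symm

theorem dist_le_two_mul_dist_torusExp {t s : Fin n → ℝ} (h : dist t s ≤ Real.pi) :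
    dist t s ≤ 2 * dist (torusExp t) (torusExp s) := by
  refine (dist_pi_le_iff (by positivity)).2 fun i ↦ ?_
  have hpi : 1 / 4 ≤ 4 / Real.pi ^ 2 := by
    rw [div_le_div_iff₀ (by norm_num) (by positivity)]
    nlinarith [Real.pi_pos, Real.pi_le_four]
  have hcos := Real.cos_le_one_sub_mul_cos_sq
    (Real.dist_eq (t i) (s i) ▸ (dist_le_pi_dist t s i).trans h)
  rw [Real.dist_eq]
  refine abs_le_of_sq_le_sq ?_ (by positivity)
  calc (t i - s i) ^ 2 = 4 * (1 / 4 * (t i - s i) ^ 2) := by ring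
    _ ≤ 4 * (4 / Real.pi ^ 2 * (t i - s i) ^ 2) := by gcongr
    _ ≤ 4 * (2 * (1 - Real.cos (t i - s i))) := by linear_combination 8 * hcos
    _ ≤ 4 * dist (torusExp t) (torusExp s) ^ 2 := by
        gcongr
        exact two_mul_one_sub_cos_le_dist_torusExp_sq t s i
    _ = (2 * dist (torusExp t) (torusExp s)) ^ 2 := by ring

theorem exists_one_le_dist_torus (hn : n ≠ 0) (x : Torus n) : ∃ y, 1 ≤ dist y x := by
  obtain ⟨t, rfl⟩ := torusExp_surjective x
  refine ⟨torusExp fun i ↦ t i + Real.pi, ?_⟩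
  rw [← one_le_sq_iff₀ dist_nonneg, dist_torusExp_sq]
  have : (1 : ℝ) ≤ n := Nat.one_le_cast.2 (Nat.one_le_iff_ne_zero.2 hn)
  simp only [add_sub_cancel_left, Real.cos_pi, Finset.sum_const, Finset.card_univ,
    Fintype.card_fin, nsmul_eq_mul]
  linarith

theorem hausdorffMeasure_closedBall (a : Fin n → ℝ) {r : ℝ} (hr : 0 ≤ r) :
    μH[(n : ℝ)] (Metric.closedBall a r) = ENNReal.ofReal (2 * r) ^ n := by
  have h := hausdorffMeasure_pi_real (ι := Fin n)
  rw [Fintype.card_fin] at h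
  rw [h, Real.volume_pi_closedBall a hr, Fintype.card_fin, ENNReal.ofReal_pow (by positivity)]

theorem hausdorffMeasure_image_torusExp_closedBall_le (a : Fin n → ℝ) {r : ℝ} (hr : 0 ≤ r) :
    μH[(n : ℝ)] (torusExp '' Metric.closedBall a r) ≤ n ^ n * ENNReal.ofReal (2 * r) ^ n := by
  simpa [hausdorffMeasure_closedBall a hr] using
    lipschitzWith_torusExp.hausdorffMeasure_image_le n.cast_nonneg (Metric.closedBall a r)

theorem ofReal_pow_le_hausdorffMeasure_image_torusExp_closedBall (a : Fin n → ℝ) {r : ℝ}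
    (hr : 0 ≤ r) (hr1 : r ≤ 1) :
    ENNReal.ofReal r ^ n ≤ μH[(n : ℝ)] (torusExp '' Metric.closedBall a r) := by
  set B := Metric.closedBall a r
  have hanti : AntilipschitzWith 2 fun t : B ↦ torusExp t.1 :=
    AntilipschitzWith.of_le_mul_dist fun t s ↦ dist_le_two_mul_dist_torusExp <| by
      linarith [dist_triangle_right t.1 s.1 a, Metric.mem_closedBall.1 t.2,
        Metric.mem_closedBall.1 s.2, Real.pi_gt_three]
  have hle := hanti.le_hausdorffMeasure_image n.cast_nonneg Set.univ
  rw [← isometry_subtype_coe.hausdorffMeasure_image (.inl n.cast_nonneg), Set.image_univ,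
    Subtype.range_coe, hausdorffMeasure_closedBall a hr, Set.image_univ, ← Set.image_eq_range,
    ENNReal.ofReal_mul zero_le_two, mul_pow, ENNReal.ofReal_ofNat, ENNReal.rpow_natCast] at hle
  exact (ENNReal.mul_le_mul_iff_right (by simp) (by simp)).1 hle

instance : IsFiniteMeasure (μH[(n : ℝ)] : Measure (Torus n)) := ⟨by
  rw [← image_torusExp_closedBall]
  exact (hausdorffMeasure_image_torusExp_closedBall_le 0 Real.pi_pos.le).trans_lt <|
    ENNReal.mul_lt_top (by simp) (ENNReal.pow_lt_top ENNReal.ofReal_lt_top)⟩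

theorem isAhlforsRegular_torus : IsAhlforsRegular (μH[(n : ℝ)] : Measure (Torus n)) n
    (ENNReal.ofReal (1 / (n + 1)) ^ n) (n ^ n * 4 ^ n) where
  lower_ne_zero := pow_ne_zero _ (ENNReal.ofReal_ne_zero_iff.2 (by positivity))
  lower_ne_top := by simp
  upper_ne_top := ENNReal.mul_ne_top (by simp) (by simp)
  measure_ball_le x r hr := by
    obtain ⟨a, rfl⟩ := torusExp_surjective x
    have hsub : Metric.ball (torusExp a) r ⊆ torusExp '' Metric.closedBall a (2 * r) := by
      intro y hy
      obtain ⟨t, ht, rfl⟩ := exists_torusExp_eq a y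
      refine ⟨t, (dist_le_two_mul_dist_torusExp ht).trans ?_, rfl⟩
      gcongr
      exact (Metric.mem_ball.1 hy).le
    refine (measure_mono hsub).trans <|
      (hausdorffMeasure_image_torusExp_closedBall_le a (by positivity)).trans_eq ?_
    rw [mul_assoc, ← mul_pow 4, ← mul_assoc 2, ENNReal.ofReal_mul (by norm_num)]
    norm_num
  le_measure_ball x r hr hr1 := by
    obtain ⟨a, rfl⟩ := torusExp_surjective x
    have hsub : torusExp '' Metric.closedBall a (1 / (n + 1) * r) ⊆ Metric.ball (torusExp a) r := by
      rintro _ ⟨t, ht, rfl⟩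
      calc dist (torusExp t) (torusExp a) ≤ n * dist t a := by
            simpa using lipschitzWith_torusExp.dist_le_mul t a
        _ ≤ n * (1 / (n + 1) * r) := by
            gcongr
            exact ht
        _ < r := by
            rw [← mul_assoc, mul_one_div]
            exact mul_lt_of_lt_one_left hr ((div_lt_one (by positivity)).2 (by linarith))
    refine le_trans ?_ (measure_mono hsub)
    rw [← mul_pow, ← ENNReal.ofReal_mul (by positivity)]
    refine ofReal_pow_le_hausdorffMeasure_image_torusExp_closedBall a (by positivity) ?_
    exact mul_le_one₀ ((div_le_one (by positivity)).2 (by simp)) hr.le hr1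

theorem torusEnergy_eq_localEnergy (hn : n ≠ 0) {s : ℝ} (hs : 0 < s) (u : Torus n → Circ) :
    torusEnergy n s u = localEnergy n (n / s) μH[(n : ℝ)]
      (fun x ↦ (u x : EuclideanSpace ℝ (Fin 2))) Set.univ := by
  have hp : 0 < (n : ℝ) / s := div_pos (Nat.cast_pos.2 (Nat.pos_of_ne_zero hn)) hs
  rw [torusEnergy, localEnergy, Measure.restrict_univ]
  refine lintegral_congr fun x ↦ lintegral_congr fun y ↦ ?_
  rw [energyDensity, rieszKernel]
  rcases eq_or_ne x y with rfl | hxy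
  · simp [hp.ne', hp]
  · have hd : 0 < dist x y := dist_pos.2 hxy
    rw [ENNReal.ofReal_div_of_pos (by positivity),
      ← ENNReal.ofReal_rpow_of_nonneg (norm_nonneg _) hp.le, ofReal_norm, div_eq_mul_inv,
      ← ENNReal.inv_pow, edist_dist, ← ENNReal.ofReal_pow hd.le, ← Real.rpow_natCast, Nat.cast_mul,
      Nat.cast_ofNat]

end Torus

/-! ### Homotopy classes of maps into the circle -/

section Homotopy

theorem homotopic_iff {X Y : Type*} [TopologicalSpace X] [TopologicalSpace Y] {f g : X → Y}
    (hf : Continuous f) (hg : Continuous g) :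
    Homotopic f g ↔ ContinuousMap.Homotopic (⟨f, hf⟩ : C(X, Y)) ⟨g, hg⟩ :=
  ⟨fun ⟨H, hH, h0, h1⟩ ↦ ⟨⟨⟨H, hH⟩, h0, h1⟩⟩,
    fun ⟨H⟩ ↦ ⟨H, H.continuous, H.apply_zero, H.apply_one⟩⟩

theorem homotopic_symm {X Y : Type*} [TopologicalSpace X] [TopologicalSpace Y] {f g : X → Y}
    (hf : Continuous f) (hg : Continuous g) (h : Homotopic f g) : Homotopic g f :=
  (homotopic_iff hg hf).2 ((homotopic_iff hf hg).1 h).symm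

theorem homotopic_trans {X Y : Type*} [TopologicalSpace X] [TopologicalSpace Y] {f g k : X → Y}
    (hf : Continuous f) (hg : Continuous g) (hk : Continuous k) (hfg : Homotopic f g)
    (hgk : Homotopic g k) : Homotopic f k :=
  (homotopic_iff hf hk).2 (((homotopic_iff hf hg).1 hfg).trans ((homotopic_iff hg hk).1 hgk))

/-- The identification of `𝕊¹ ⊆ ℝ²` with the group of complex numbers of modulus one. -/
def circHomeomorph : Circ ≃ₜ Circle :=
  Complex.orthonormalBasisOneI.repr.symm.toHomeomorph.subtype fun z ↦ by
    rw [mem_sphere_zero_iff_norm, ← Complex.orthonormalBasisOneI.repr.symm.norm_map]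
    exact (mem_sphere_zero_iff_norm).symm

theorem homotopic_of_circleExp_mul {Y : Type*} [TopologicalSpace Y] {f g : Y → Circ}
    (hf : Continuous f) (φ : C(Y, ℝ))
    (h : ∀ y, Circle.exp (φ y) * circHomeomorph (f y) = circHomeomorph (g y)) :
    Homotopic f g :=
  ⟨fun q ↦ circHomeomorph.symm (Circle.exp (q.1 * φ q.2) * circHomeomorph (f q.2)), by fun_prop,
    by simp, by simp [h]⟩

variable {n : ℕ}

theorem exists_torusExp_lift (w : C(Torus n, Circle)) :
    ∃ ψ : C(Fin n → ℝ, ℝ), ∀ t, Circle.exp (ψ t) = w (torusExp t) := by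
  obtain ⟨e, he⟩ := Circle.exp_surjective (w (torusExp 0))
  obtain ⟨ψ, ⟨-, hψ⟩, -⟩ := Circle.isCoveringMap_exp.existsUnique_continuousMap_lifts
    (w.comp ⟨torusExp, continuous_torusExp⟩) 0 e he
  exact ⟨ψ, congrFun hψ⟩

theorem periodic_torusExp (j : Fin n) :
    Function.Periodic torusExp (Pi.single j (2 * Real.pi) : Fin n → ℝ) := fun t ↦ by
  refine torusExp_eq_torusExp_iff.2 fun i ↦ ?_
  rcases eq_or_ne i j with rfl | hij <;> simp [*]

theorem factorsThrough_torusExp {β : Type*} {ψ : (Fin n → ℝ) → β}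
    (h : ∀ j, Function.Periodic ψ (Pi.single j (2 * Real.pi))) :
    Function.FactorsThrough ψ torusExp := fun t s hts ↦ by
  choose m hm using fun i ↦ Real.Angle.angle_eq_iff_two_pi_dvd_sub.1
    (torusExp_eq_torusExp_iff.1 hts i)
  have hperiod : Function.Periodic ψ (∑ i, m i • Pi.single i (2 * Real.pi)) :=
    Finset.sum_induction _ (Function.Periodic ψ) (fun _ _ ↦ .add_period) (fun t ↦ by simp)
      fun i _ ↦ (h i).zsmul (m i)
  have ht : t = s + ∑ i, m i • Pi.single i (2 * Real.pi) := funext fun i ↦ by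
    simp [Finset.sum_apply, Pi.single_apply]
    linarith [hm i]
  rw [ht, hperiod]

theorem exists_circleExp_comp_eq (w : C(Torus n, Circle))
    (h : ∀ j, ∃ b : Fin n → ℝ, ∀ r, w (torusExp (b + Pi.single j r)) = 1) :
    ∃ φ : C(Torus n, ℝ), ∀ x, Circle.exp (φ x) = w x := by
  obtain ⟨ψ, hψ⟩ := exists_torusExp_lift w
  have hper (j : Fin n) : Function.Periodic ψ (Pi.single j (2 * Real.pi)) := fun t ↦ by
    obtain ⟨b, hb⟩ := h j
    have hcont : Continuous fun r : ℝ ↦ ψ (b + Pi.single j r) :=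
      ψ.continuous.comp (continuous_const.add (continuous_single (A := fun _ : Fin n ↦ ℝ) j))
    have hline := Circle.isCoveringMap_exp.const_of_comp hcont
      (fun r r' ↦ by simp only [hψ, hb]) (2 * Real.pi) 0
    have hdiff := Circle.isCoveringMap_exp.const_of_comp
      (g := fun t ↦ ψ (t + Pi.single j (2 * Real.pi)) - ψ t) (by fun_prop)
      (fun t t' ↦ by simp only [Circle.exp_sub, hψ, periodic_torusExp j _, div_self']) t b
    simp only [Pi.single_zero, add_zero] at hline
    rwa [hline, sub_self, sub_eq_zero] at hdiff
  have hquot : Topology.IsQuotientMap (⟨torusExp, continuous_torusExp⟩ : C(_, Torus n)) :=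
    isQuotientMap_torusExp
  have hfactors : Function.FactorsThrough ψ torusExp := factorsThrough_torusExp hper
  refine ⟨hquot.lift ψ hfactors, fun x ↦ ?_⟩
  obtain ⟨t, rfl⟩ := torusExp_surjective x
  rw [← hψ t]
  exact congrArg Circle.exp (DFunLike.congr_fun (hquot.lift_comp ψ hfactors) t)

theorem exists_forall_one_le_dist_torusExp_add_single (hn : 2 ≤ n) (x : Torus n) (j : Fin n) :
    ∃ b : Fin n → ℝ, ∀ r, 1 ≤ dist (torusExp (b + Pi.single j r)) x := by
  obtain ⟨a, rfl⟩ := torusExp_surjective x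
  have : Nontrivial (Fin n) := Fin.nontrivial_iff_two_le.2 hn
  obtain ⟨k, hkj⟩ := exists_ne j
  refine ⟨a + Pi.single k Real.pi, fun r ↦ ?_⟩
  have h := two_mul_one_sub_cos_le_dist_torusExp_sq (a + Pi.single k Real.pi + Pi.single j r) a k
  simp only [Pi.add_apply, Pi.single_eq_same, Pi.single_eq_of_ne hkj, add_zero,
    add_sub_cancel_left, Real.cos_pi] at h
  exact (one_le_sq_iff₀ dist_nonneg).1 (by linarith)

theorem homotopic_of_eqOn_compl_ball (hn : 2 ≤ n) {f g : Torus n → Circ} (hf : Continuous f)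
    (hg : Continuous g) {x₀ : Torus n} (h : Set.EqOn g f (Metric.ball x₀ 1)ᶜ) :
    Homotopic f g := by
  obtain ⟨φ, hφ⟩ := exists_circleExp_comp_eq
    ⟨fun x ↦ circHomeomorph (g x) / circHomeomorph (f x), by fun_prop⟩ fun j ↦ by
      obtain ⟨b, hb⟩ := exists_forall_one_le_dist_torusExp_add_single hn x₀ j
      refine ⟨b, fun r ↦ ?_⟩
      simp [h (x := torusExp (b + Pi.single j r)) (by simpa using hb r)]
  exact homotopic_of_circleExp_mul hf φ fun y ↦ by simp [hφ]

/-- The homotopy class of `u₀`, as a set of maps into the plane. -/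
def homotopyClass {Y : Type*} [TopologicalSpace Y] (u₀ : Y → Circ) :
    Set (Y → EuclideanSpace ℝ (Fin 2)) :=
  {u | ∃ v : Y → Circ, Continuous v ∧ Homotopic v u₀ ∧ u = fun x ↦ (v x : EuclideanSpace ℝ (Fin 2))}

theorem IsSphereMap.exists_circ_eq {Y : Type*} [TopologicalSpace Y]
    {u : Y → EuclideanSpace ℝ (Fin 2)} (hu : IsSphereMap u) :
    ∃ v : Y → Circ, Continuous v ∧ u = fun x ↦ (v x : EuclideanSpace ℝ (Fin 2)) :=
  ⟨_, hu.continuous.subtype_mk fun x ↦ mem_sphere_zero_iff_norm.2 (hu.norm_eq_one x), rfl⟩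

theorem isStableClass_homotopyClass (hn : 2 ≤ n) {u₀ : Torus n → Circ} (hu₀ : Continuous u₀) :
    IsStableClass 1 (homotopyClass u₀) where
  isSphereMap := fun ⟨v, hv, _, hu⟩ ↦
    ⟨hu ▸ continuous_subtype_val.comp hv, fun x ↦ hu ▸ norm_eq_of_mem_sphere (v x)⟩
  mem_of_eqOn_compl_ball := by
    rintro _ _ x₀ ⟨v, hv, hvu₀, rfl⟩ hu' h
    obtain ⟨v', hv', rfl⟩ := hu'.exists_circ_eq
    have hv'v : Homotopic v' v :=
      homotopic_of_eqOn_compl_ball hn hv' hv fun z hz ↦ Subtype.ext (h hz).symm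
    exact ⟨v', hv', homotopic_trans hv' hv hu₀ hv'v hvu₀, rfl⟩
  mem_of_homotopy := by
    rintro _ _ ⟨v, hv, hvu₀, rfl⟩ hH h0
    obtain ⟨K, hK, rfl⟩ := hH.exists_circ_eq
    have hK1 : Continuous fun x ↦ K (1, x) := by fun_prop
    have hvK : Homotopic v fun x ↦ K (1, x) :=
      ⟨K, hK, fun x ↦ Subtype.ext (h0 x), fun _ ↦ rfl⟩
    exact ⟨_, hK1, homotopic_trans hK1 hv hu₀ (homotopic_symm hv hK1 hvK) hvu₀, rfl⟩

end Homotopy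

end FractionalEnergy

/-- every homotopy class of continuous maps `𝕋ⁿ → 𝕊¹` contains a continuous
map of finite `E_{s,n/s}`-energy minimizing the energy in the class. -/
theorem stmt14 (n : ℕ) (hn : 2 ≤ n) (s : ℝ) (hs : 0 < s) (hs1 : s < 1)
    (u₀ : Torus n → Circ) (hu₀ : Continuous u₀) :
    ∃ u : Torus n → Circ, Continuous u ∧ Homotopic u u₀ ∧
      torusEnergy n s u < ⊤ ∧
      (∀ v : Torus n → Circ, Continuous v → Homotopic v u₀ →
        torusEnergy n s u ≤ torusEnergy n s v) := by
  open FractionalEnergy in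
  have hn0 : n ≠ 0 := by lia
  have hp : (n : ℝ) < n / s := by
    rw [lt_div_iff₀ hs]
    exact mul_lt_of_lt_one_right (by positivity) hs1
  have hne : (homotopyClass u₀).Nonempty :=
    ⟨_, u₀, hu₀, (homotopic_iff hu₀ hu₀).2 (ContinuousMap.Homotopic.refl _), rfl⟩
  obtain ⟨_, ⟨u, hu, huu₀, rfl⟩, hfin, hmin⟩ :=
    (isStableClass_homotopyClass hn hu₀).exists_minimizer isAhlforsRegular_torus hn0 hp
      (exists_one_le_dist_torus hn0) one_pos le_rfl hne
  refine ⟨u, hu, huu₀, ?_, fun v hv hvu₀ ↦ ?_⟩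
  · rwa [torusEnergy_eq_localEnergy hn0 hs]
  · rw [torusEnergy_eq_localEnergy hn0 hs, torusEnergy_eq_localEnergy hn0 hs]
    exact hmin _ ⟨v, hv, hvu₀, rfl⟩
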